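/- arXiv:1208.1963 — 12 statements merged into one kernel-verified Lean document; each statement's English description precedes it below -/
import Mathlib

section
/- Let n ≥ 3 and let 𝒢 be a degree-doubling family of Hamiltonian cycles on Fin n. Then the cardinality of 𝒢 satisfies |𝒢| · ⌊n/2⌋! · 2^⌊n/2⌋ ≤ n!. -/
/-!
Put `m = n / 2`. Going round a Hamiltonian cycle from a root `r` lists the vertices; cutting this
list into `m` consecutive pairs gives `m` disjoint edges of the cycle, and if `n` is odd the one
vertex left over is the last of the list, hence adjacent to `r`. Reordering the pairs and flipping
each of them yields `m! * 2 ^ m` enumerations of the vertex set which all still have these two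
properties (`Compatible`).

If one enumeration is compatible with both `F` and `G`, every vertex has a neighbour common to `F`
and `G`: its partner, or `r` for the leftover vertex. So every degree in `F ⊔ G` is at most `3`
(`deg_sup_ne_four`), which forces `F = G` in a degree-doubling family. The `m! * 2 ^ m`
enumerations attached to the members of the family are therefore pairwise distinct, and there are
only `n!` enumerations in total.
-/

open SimpleGraph

/-- The degree of a vertex `v` in a simple graph `G` on `Fin n`. -/
noncomputable def deg {n : ℕ} (G : SimpleGraph (Fin n)) (v : Fin n) : ℕ :=
  Nat.card (G.neighborSet v)

/-- A Hamiltonian cycle on `Fin n`: a connected, 2-regular simple graph. -/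
def IsHamCycle {n : ℕ} (G : SimpleGraph (Fin n)) : Prop :=
  G.Connected ∧ ∀ v, deg G v = 2

/-- A family of graphs is degree-doubling if the union of any two distinct
members has a vertex of degree 4. -/
def DegreeDoubling {n : ℕ} (𝒢 : Finset (SimpleGraph (Fin n))) : Prop :=
  ∀ F ∈ 𝒢, ∀ G ∈ 𝒢, F ≠ G → ∃ v, deg (F ⊔ G) v = 4

/-- Positions in an enumeration of `Fin n`: `n / 2` pairs, followed by one leftover position
exactly when `n` is odd. -/
abbrev Slot (n : ℕ) : Type := (Fin (n / 2) × Fin 2) ⊕ Fin (n % 2)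

/-- The place of a slot in the list `0, 1, …, n - 1`: the `i`-th pair occupies `2 * i` and
`2 * i + 1`, and the leftover slot, if any, is `n - 1`. -/
def Slot.pos {n : ℕ} : Slot n → Fin n
  | .inl (i, b) => ⟨2 * i + b, by omega⟩
  | .inr j => ⟨n - 1, by have := j.isLt; omega⟩

lemma Slot.pos_injective {n : ℕ} : Function.Injective (Slot.pos (n := n)) := by
  rintro (⟨i, b⟩ | j) (⟨i', b'⟩ | j') h <;> simp only [Slot.pos, Fin.mk.injEq] at h
  · have h1 : i = i' := by ext; omega
    have h2 : b = b' := by ext; omega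
    rw [h1, h2]
  · have := j'.isLt
    omega
  · have := j.isLt
    omega
  · have h1 : j = j' := by ext; omega
    rw [h1]

lemma Slot.card (n : ℕ) : Fintype.card (Slot n) = n := by
  simp only [Fintype.card_sum, Fintype.card_prod, Fintype.card_fin]
  omega

/-- The enumeration `ρ` sends each pair of slots to an edge of `G`, and the leftover slot, if any,
to a neighbour of `r`. -/
def Compatible {n : ℕ} (r : Fin n) (G : SimpleGraph (Fin n)) (ρ : Slot n ≃ Fin n) : Prop :=
  (∀ i a b, a ≠ b → G.Adj (ρ (.inl (i, a))) (ρ (.inl (i, b)))) ∧ ∀ j, G.Adj (ρ (.inr j)) r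

/-- A Hamiltonian cycle, as a connected 2-regular graph, can be traversed from any root. -/
lemma IsHamCycle.exists_traversal {n : ℕ} {G : SimpleGraph (Fin n)} (hG : IsHamCycle G)
    (r : Fin n) : ∃ p : G.Walk r r, p.length = n ∧
      Function.Injective (fun i : Fin n => p.getVert i) := by
  obtain ⟨hconn, hdeg⟩ := hG
  have hcard : ∀ v, (G.neighborSet v).ncard = 2 := hdeg
  have hcyc : G.IsCycles := fun v _ => hcard v
  have hne : (G.neighborSet r).Nonempty := by
    apply Set.nonempty_of_ncard_ne_zero
    rw [hcard]
    decide
  obtain ⟨p, hp, hverts⟩ := hcyc.exists_cycle_toSubgraph_verts_eq_connectedComponentSupp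
    (c := G.connectedComponentMk r) rfl hne
  have hpos := hp.three_le_length
  have hinj : Function.Injective (fun i : Fin p.length => p.getVert i) := by
    intro i j hij
    ext
    exact hp.getVert_injOn' (by simp only [Set.mem_ofPred_eq]; omega)
      (by simp only [Set.mem_ofPred_eq]; omega) hij
  have hsurj : Function.Surjective (fun i : Fin p.length => p.getVert i) := by
    intro v
    have hv : v ∈ p.toSubgraph.verts := by
      rw [hverts]
      exact ConnectedComponent.sound (hconn.preconnected v r)
    rw [Walk.mem_verts_toSubgraph, Walk.mem_support_iff_exists_getVert] at hv
    obtain ⟨k, hk, hkl⟩ := hv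
    rcases hkl.lt_or_eq with h | h
    · exact ⟨⟨k, h⟩, hk⟩
    -- the end of the walk is also its start
    · refine ⟨⟨0, by omega⟩, ?_⟩
      subst h
      simpa using hk
  have hlen : p.length = n := by
    simpa using Fintype.card_of_bijective ⟨hinj, hsurj⟩
  refine ⟨p, hlen, fun i j hij => ?_⟩
  have := @hinj ⟨i, by omega⟩ ⟨j, by omega⟩ hij
  ext
  simpa using this

lemma IsHamCycle.exists_compatible {n : ℕ} {G : SimpleGraph (Fin n)} (hG : IsHamCycle G)
    (r : Fin n) : ∃ ρ, Compatible r G ρ := by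
  obtain ⟨p, hlen, hinj⟩ := hG.exists_traversal r
  have hbij : Function.Bijective (fun s : Slot n => p.getVert s.pos) :=
    (Fintype.bijective_iff_injective_and_card _).2
      ⟨hinj.comp Slot.pos_injective, by rw [Slot.card, Fintype.card_fin]⟩
  have hedge : ∀ i : Fin (n / 2), G.Adj (p.getVert (2 * i)) (p.getVert (2 * i + 1)) :=
    fun i => p.adj_getVert_succ (by omega)
  refine ⟨Equiv.ofBijective _ hbij, fun i a b hab => ?_, fun j => ?_⟩
  · have h01 : (a = 0 ∧ b = 1) ∨ (a = 1 ∧ b = 0) := by omega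
    rcases h01 with ⟨rfl, rfl⟩ | ⟨rfl, rfl⟩
    · exact hedge i
    · exact (hedge i).symm
  · have hn : 0 < n := r.pos
    have h : G.Adj (p.getVert (n - 1)) (p.getVert (n - 1 + 1)) :=
      p.adj_getVert_succ (by omega)
    rw [show n - 1 + 1 = p.length by omega, p.getVert_length] at h
    exact h

/-- Permuting the pairs by `π` and each pair internally by `f` preserves compatibility. -/
lemma Compatible.shear {n : ℕ} {r : Fin n} {G : SimpleGraph (Fin n)} {ρ : Slot n ≃ Fin n}
    (h : Compatible r G ρ) (π : Equiv.Perm (Fin (n / 2)))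
    (f : Fin (n / 2) → Equiv.Perm (Fin 2)) :
    Compatible r G ((Equiv.sumCongr (Equiv.prodShear π f) (Equiv.refl _)).trans ρ) :=
  ⟨fun i a b hab => h.1 (π i) (f i a) (f i b) ((f i).injective.ne hab), fun j => h.2 j⟩

lemma shear_injective {n : ℕ} {π π' : Equiv.Perm (Fin (n / 2))}
    {f f' : Fin (n / 2) → Equiv.Perm (Fin 2)}
    (h : Equiv.sumCongr (Equiv.prodShear π f) (Equiv.refl (Fin (n % 2))) =
      Equiv.sumCongr (Equiv.prodShear π' f') (Equiv.refl (Fin (n % 2)))) :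
    (π, f) = (π', f') := by
  have key : ∀ i b, π i = π' i ∧ f i b = f' i b := fun i b => by
    simpa using congrArg (fun e => e (Sum.inl (i, b))) h
  have h1 : π = π' := Equiv.ext fun i => (key i 0).1
  have h2 : f = f' := funext fun i => Equiv.ext fun b => (key i b).2
  rw [h1, h2]

lemma deg_sup_ne_four {n : ℕ} {F G : SimpleGraph (Fin n)} {v w : Fin n}
    (hF : deg F v = 2) (hG : deg G v = 2) (hFw : F.Adj v w) (hGw : G.Adj v w) :
    deg (F ⊔ G) v ≠ 4 := by
  have hF' : (F.neighborSet v).ncard = 2 := hF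
  have hG' : (G.neighborSet v).ncard = 2 := hG
  have hU : deg (F ⊔ G) v = (F.neighborSet v ∪ G.neighborSet v).ncard := by
    rw [← neighborSet_sup]
    rfl
  have hI : 0 < (F.neighborSet v ∩ G.neighborSet v).ncard :=
    (Set.ncard_pos (Set.toFinite _)).2 ⟨w, hFw, hGw⟩
  have := Set.ncard_union_add_ncard_inter (F.neighborSet v) (G.neighborSet v)
  omega

lemma eq_of_compatible {n : ℕ} {𝒢 : Finset (SimpleGraph (Fin n))}
    (hham : ∀ G ∈ 𝒢, IsHamCycle G) (hdd : DegreeDoubling 𝒢) {r : Fin n} {ρ : Slot n ≃ Fin n}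
    {F G : SimpleGraph (Fin n)} (hF : F ∈ 𝒢) (hG : G ∈ 𝒢)
    (hFρ : Compatible r F ρ) (hGρ : Compatible r G ρ) : F = G := by
  by_contra hne
  obtain ⟨v, hv⟩ := hdd F hF G hG hne
  have hcommon : ∃ w, F.Adj v w ∧ G.Adj v w := by
    obtain ⟨s, rfl⟩ := ρ.surjective v
    rcases s with ⟨i, b⟩ | j
    · have hb : b ≠ b + 1 := by omega
      exact ⟨ρ (.inl (i, b + 1)), hFρ.1 i b _ hb, hGρ.1 i b _ hb⟩
    · exact ⟨r, hFρ.2 j, hGρ.2 j⟩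
  obtain ⟨w, hFw, hGw⟩ := hcommon
  exact deg_sup_ne_four ((hham F hF).2 v) ((hham G hG).2 v) hFw hGw hv

theorem stmt_0 (n : ℕ) (hn : 3 ≤ n) (𝒢 : Finset (SimpleGraph (Fin n)))
    (hham : ∀ G ∈ 𝒢, IsHamCycle G) (hdd : DegreeDoubling 𝒢) :
    𝒢.card * Nat.factorial (n / 2) * 2 ^ (n / 2) ≤ Nat.factorial n := by
  have hex : ∀ G : 𝒢, ∃ ρ, Compatible (⟨0, by omega⟩ : Fin n) G.1 ρ :=
    fun G => (hham G.1 G.2).exists_compatible _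
  choose σ hσ using hex
  let Φ : 𝒢 × (Equiv.Perm (Fin (n / 2)) × (Fin (n / 2) → Equiv.Perm (Fin 2))) →
      (Slot n ≃ Fin n) := fun x =>
    (Equiv.sumCongr (Equiv.prodShear x.2.1 x.2.2) (Equiv.refl _)).trans (σ x.1)
  have hΦ : Function.Injective Φ := by
    rintro ⟨F, π, f⟩ ⟨G, π', f'⟩ h
    have hFc : Compatible _ F.1 (Φ (F, π, f)) := (hσ F).shear π f
    have hGc : Compatible _ G.1 (Φ (G, π', f')) := (hσ G).shear π' f'
    rw [← h] at hGc
    have hFG : F = G := Subtype.ext (eq_of_compatible hham hdd F.2 G.2 hFc hGc)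
    subst hFG
    have hs : (π, f) = (π', f') := shear_injective <| Equiv.ext fun s =>
      (σ F).injective (congrArg (fun e => e s) h)
    rw [hs]
  have hle := Fintype.card_le_of_injective Φ hΦ
  have e : Slot n ≃ Fin n := Fintype.equivOfCardEq (by rw [Slot.card, Fintype.card_fin])
  rw [Fintype.card_equiv e, Slot.card] at hle
  simpa [Fintype.card_perm, mul_assoc] using hle
end

section
/- For every n ≥ 3 there exists a degree-doubling family 𝒢 of Hamiltonian cycles on Fin n whose cardinality satisfies (as real numbers) |𝒢| ≥ (n-1)! / (2 · ⌊n/2⌋! · (1+√2)^n). -/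
/-!
Hamiltonian cycles are taken in the form `{v, σ v}` for full cycles `σ`, i.e. permutations with
`σ.cycleType = {n}`, of which there are `(n - 1)!`. Say that `σ` and `τ` *clash* if at every vertex
their cycles share an edge; two cycles that do not clash have a union with a vertex of degree 4.
A maximal clash-free set `T` of full cycles has every full cycle clashing with one of its members,
so `(n - 1)! ≤ |T| * B` as soon as each `τ` clashes with at most `B` full cycles
(`exists_clashFree`).

To bound `B`, record for every `v` whether `σ v` is `τ v` (`fwd`), `τ⁻¹ v` (`bwd`) or neither
(`jump`).
* If `σ` clashes with `τ` then `σ⁻¹` sends jumps to non-jumps, so there are at most `n / 2` jumps;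
  since `σ` is prescribed off the jumps, at most `(n / 2)!` permutations have a given word
  (`card_fiber_le`).
* The words, read along `τ`, are accepted by a four-state automaton (`words`) whose transfer matrix
  has dominant eigenvalue `2` with eigenvector `(1, 1, 1, 2)`, so that there are at most
  `5 * 2 ^ (n - 1)` of them (`card_letters_le`).

Finally `5 * 2 ^ (n - 1) ≤ 2 * (1 + √2) ^ n` for `n ≥ 3`.
-/

open SimpleGraph

/-! ### Full cycles and their graphs -/

section FullCycle

variable {n : ℕ} {σ τ : Equiv.Perm (Fin n)}

lemma perm_inv_apply (σ : Equiv.Perm (Fin n)) (v : Fin n) : σ⁻¹ (σ v) = v :=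
  σ.symm_apply_apply v

lemma perm_apply_inv (σ : Equiv.Perm (Fin n)) (v : Fin n) : σ (σ⁻¹ v) = v :=
  σ.apply_symm_apply v

lemma isCycle_of_full (h : σ.cycleType = {n}) : σ.IsCycle := by
  rw [← Equiv.Perm.card_cycleType_eq_one, h]; rfl

lemma card_support_of_full (h : σ.cycleType = {n}) : σ.support.card = n := by
  rw [← Equiv.Perm.sum_cycleType, h]; simp

lemma apply_ne_of_full (h : σ.cycleType = {n}) (v : Fin n) : σ v ≠ v := by
  have h1 : σ.support = Finset.univ := by
    rw [← Finset.card_eq_iff_eq_univ, card_support_of_full h, Fintype.card_fin]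
  have : v ∈ σ.support := by rw [h1]; exact Finset.mem_univ v
  exact Equiv.Perm.mem_support.1 this

lemma sameCycle_of_full (h : σ.cycleType = {n}) (x y : Fin n) : σ.SameCycle x y :=
  (isCycle_of_full h).sameCycle (apply_ne_of_full h x) (apply_ne_of_full h y)

lemma apply_apply_ne_of_full (hn : 3 ≤ n) (h : σ.cycleType = {n}) (v : Fin n) :
    σ (σ v) ≠ v := by
  intro hv
  have hc := isCycle_of_full h
  have h2 : σ ^ 2 = 1 := (hc.pow_eq_one_iff).2 ⟨v, apply_ne_of_full h v, by
    simpa [pow_two] using hv⟩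
  have h3 := orderOf_dvd_of_pow_eq_one h2
  rw [hc.orderOf, card_support_of_full h] at h3
  have := Nat.le_of_dvd (by norm_num) h3
  omega

lemma apply_ne_symm_of_full (hn : 3 ≤ n) (h : σ.cycleType = {n}) (v : Fin n) :
    σ v ≠ σ⁻¹ v := by
  intro hv
  apply apply_apply_ne_of_full hn h v
  rw [hv, perm_apply_inv]

/-- The graph with edges `{v, σ v}`. -/
def cycleGraphOf (σ : Equiv.Perm (Fin n)) : SimpleGraph (Fin n) :=
  SimpleGraph.fromRel (fun a b => σ a = b)

lemma neighborSet_cycleGraphOf (h : σ.cycleType = {n}) (v : Fin n) :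
    (cycleGraphOf σ).neighborSet v = {σ v, σ⁻¹ v} := by
  ext w
  have h1 := apply_ne_of_full h v
  simp only [cycleGraphOf, mem_neighborSet, fromRel_adj, Set.mem_insert_iff,
    Set.mem_singleton_iff, Equiv.Perm.eq_inv_iff_eq]
  constructor
  · rintro ⟨-, h2 | h2⟩
    · exact Or.inl h2.symm
    · exact Or.inr h2
  · rintro (rfl | h2)
    · exact ⟨h1.symm, Or.inl rfl⟩
    · refine ⟨?_, Or.inr h2⟩
      rintro rfl
      exact h1 h2

lemma isHamCycle_cycleGraphOf (hn : 3 ≤ n) (h : σ.cycleType = {n}) :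
    IsHamCycle (cycleGraphOf σ) := by
  constructor
  · have : Nonempty (Fin n) := ⟨⟨0, by omega⟩⟩
    refine ⟨fun x y => ?_⟩
    obtain ⟨i, -, rfl⟩ := (sameCycle_of_full h x y).exists_pow_eq'
    induction i with
    | zero => simp
    | succ i ih =>
      refine ih.trans (Adj.reachable ?_)
      rw [← mem_neighborSet, neighborSet_cycleGraphOf h, pow_succ']
      simp
  · intro v
    rw [deg, neighborSet_cycleGraphOf h, Nat.card_coe_set_eq,
      Set.ncard_pair (apply_ne_symm_of_full hn h v)]

/-- The cycles of `σ` and `τ` share an edge at every vertex. -/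
def Clash (τ σ : Equiv.Perm (Fin n)) : Prop :=
  ∀ v, σ v = τ v ∨ σ v = τ⁻¹ v ∨ σ⁻¹ v = τ v ∨ σ⁻¹ v = τ⁻¹ v

lemma Clash.symm (h : Clash τ σ) : Clash σ τ := fun v => by
  have := h v
  tauto

lemma exists_deg_eq_four (hn : 3 ≤ n) (hσ : σ.cycleType = {n}) (hτ : τ.cycleType = {n})
    (h : ¬ Clash τ σ) : ∃ v, deg (cycleGraphOf σ ⊔ cycleGraphOf τ) v = 4 := by
  simp only [Clash, not_forall, not_or] at h
  obtain ⟨v, h1, h2, h3, h4⟩ := h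
  refine ⟨v, ?_⟩
  have hs : (cycleGraphOf σ ⊔ cycleGraphOf τ).neighborSet v =
      (({σ v, σ⁻¹ v, τ v, τ⁻¹ v} : Finset (Fin n)) : Set (Fin n)) := by
    rw [neighborSet_sup, neighborSet_cycleGraphOf hσ, neighborSet_cycleGraphOf hτ]
    ext w
    simp only [Set.mem_union, Set.mem_insert_iff, Set.mem_singleton_iff, Finset.coe_insert,
      Finset.coe_singleton, or_assoc]
  rw [deg, hs, Nat.card_coe_set_eq, Set.ncard_coe_finset]
  have h5 := apply_ne_symm_of_full hn hσ v
  have h6 := apply_ne_symm_of_full hn hτ v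
  rw [Finset.card_insert_of_notMem (by simp only [Finset.mem_insert, Finset.mem_singleton]; tauto),
    Finset.card_insert_of_notMem (by simp only [Finset.mem_insert, Finset.mem_singleton]; tauto),
    Finset.card_insert_of_notMem (by simp only [Finset.mem_singleton]; tauto),
    Finset.card_singleton]

lemma clash_of_cycleGraphOf_eq (hσ : σ.cycleType = {n}) (hτ : τ.cycleType = {n})
    (h : cycleGraphOf σ = cycleGraphOf τ) : Clash τ σ := by
  intro v
  have h1 : σ v ∈ (cycleGraphOf τ).neighborSet v := by
    rw [← h, neighborSet_cycleGraphOf hσ]; simp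
  rw [neighborSet_cycleGraphOf hτ] at h1
  simp only [Set.mem_insert_iff, Set.mem_singleton_iff] at h1
  tauto

end FullCycle

/-! ### Words of steps and their enumeration -/

/-- How a step of one cycle looks relative to another one: along it, against it, or neither. -/
inductive Letter
  | fwd
  | bwd
  | jump

noncomputable instance : DecidableEq Letter := Classical.decEq _

/-- States of the automaton reading the letters in the order of `τ`: the last letter, where a jump
is `jumpDone` if it came directly after a `fwd`, and otherwise `jumpDue`, as a `bwd` must follow. -/
inductive Status
  | fwd
  | bwd
  | jumpDone
  | jumpDue

/-- The words of length `k` accepted from a given state. -/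
noncomputable def words : Status → ℕ → Finset (List Letter)
  | _, 0 => {[]}
  | .fwd, k + 1 => (words .fwd k).image (List.cons .fwd) ∪
      (words .jumpDone k).image (List.cons .jump)
  | .bwd, k + 1 => (words .fwd k).image (List.cons .fwd) ∪
      ((words .bwd k).image (List.cons .bwd) ∪ (words .jumpDue k).image (List.cons .jump))
  | .jumpDone, k + 1 => (words .fwd k).image (List.cons .fwd) ∪
      (words .jumpDue k).image (List.cons .jump)
  | .jumpDue, k + 1 => (words .bwd k).image (List.cons .bwd)

/-- The vector `(1, 1, 1, 2)` is an eigenvector of the automaton for the eigenvalue `2`. -/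
lemma card_words_le (k : ℕ) : (words .fwd k).card ≤ 2 ^ k ∧ (words .bwd k).card ≤ 2 * 2 ^ k ∧
    (words .jumpDone k).card ≤ 2 ^ k ∧ (words .jumpDue k).card ≤ 2 ^ k := by
  induction k with
  | zero => simp [words]
  | succ k ih =>
    obtain ⟨h1, h2, h3, h4⟩ := ih
    have im : ∀ (a : Letter) (s : Finset (List Letter)), (s.image (List.cons a)).card ≤ s.card :=
      fun a s => Finset.card_image_le
    simp only [words, pow_succ]
    refine ⟨?_, ?_, ?_, ?_⟩
    · refine (Finset.card_union_le _ _).trans ?_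
      have := im .fwd (words .fwd k)
      have := im .jump (words .jumpDone k)
      omega
    · refine (Finset.card_union_le _ _).trans ?_
      have := Finset.card_union_le ((words .bwd k).image (List.cons .bwd))
        ((words .jumpDue k).image (List.cons .jump))
      have := im .fwd (words .fwd k)
      have := im .bwd (words .bwd k)
      have := im .jump (words .jumpDue k)
      omega
    · refine (Finset.card_union_le _ _).trans ?_
      have := im .fwd (words .fwd k)
      have := im .jump (words .jumpDue k)
      omega
    · have := im .bwd (words .bwd k)
      omega

section Count

variable {n : ℕ}

/-- The local constraints on the letters of a full cycle clashing with `τ`. -/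
structure Admissible (τ : Equiv.Perm (Fin n)) (w : Fin n → Letter) : Prop where
  fwd_bwd : ∀ v, w v = .fwd → w (τ v) ≠ .bwd
  fwd_any_bwd : ∀ v, w v = .fwd → w (τ (τ v)) ≠ .bwd
  jump : ∀ v, w v = .jump → w (τ⁻¹ v) = .fwd ∨ w (τ v) = .bwd

/-- The state of the automaton after reading the letter at `v`. -/
def status (τ : Equiv.Perm (Fin n)) (w : Fin n → Letter) (v : Fin n) : Status :=
  match w v, w (τ⁻¹ v) with
  | .fwd, _ => .fwd
  | .bwd, _ => .bwd
  | .jump, .fwd => .jumpDone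
  | .jump, _ => .jumpDue

lemma walk_mem_words {τ : Equiv.Perm (Fin n)} {w : Fin n → Letter} (hw : Admissible τ w) (k : ℕ) :
    ∀ v, (List.iterate τ (τ v) k).map w ∈ words (status τ w v) k := by
  induction k with
  | zero => intro v; cases status τ w v <;> simp [words]
  | succ k ih =>
    intro v
    have h := ih (τ v)
    have h1 := hw.fwd_bwd v
    have h2 := hw.fwd_any_bwd (τ⁻¹ v)
    have h3 := hw.jump v
    rw [perm_apply_inv] at h2
    simp only [List.iterate, List.map_cons]
    simp only [status, perm_inv_apply] at h ⊢
    cases e1 : w v <;> cases e2 : w (τ v) <;> cases e3 : w (τ⁻¹ v) <;>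
      simp_all [words]

lemma mem_iterate_of_full {τ : Equiv.Perm (Fin n)} (h : τ.cycleType = {n}) (v x : Fin n) :
    x ∈ List.iterate τ v n := by
  obtain ⟨i, hi, rfl⟩ := (sameCycle_of_full h v x).exists_pow_eq'
  have : i < n := by
    rwa [(isCycle_of_full h).orderOf, card_support_of_full h] at hi
  rw [List.mem_iterate]
  exact ⟨i, this, by rw [Equiv.Perm.iterate_eq_pow]⟩

lemma card_letters_le {τ : Equiv.Perm (Fin n)} (hn : 1 ≤ n) (h : τ.cycleType = {n})
    (W : Finset (Fin n → Letter)) (hW : ∀ w ∈ W, Admissible τ w) :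
    W.card ≤ 5 * 2 ^ (n - 1) := by
  obtain ⟨m, rfl⟩ : ∃ m, n = m + 1 := ⟨n - 1, by omega⟩
  set A : Finset (List Letter) := (words .fwd m).image (List.cons .fwd) ∪
    ((words .bwd m).image (List.cons .bwd) ∪ ((words .jumpDone m).image (List.cons .jump) ∪
      (words .jumpDue m).image (List.cons .jump))) with hA
  have hcard : A.card ≤ 5 * 2 ^ m := by
    obtain ⟨h1, h2, h3, h4⟩ := card_words_le m
    refine (Finset.card_union_le _ _).trans ?_
    have i1 := Finset.card_union_le ((words .bwd m).image (List.cons .bwd))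
      ((words .jumpDone m).image (List.cons .jump) ∪ (words .jumpDue m).image (List.cons .jump))
    have i2 := Finset.card_union_le ((words .jumpDone m).image (List.cons .jump))
      ((words .jumpDue m).image (List.cons .jump))
    have im : ∀ (a : Letter) (s : Finset (List Letter)), (s.image (List.cons a)).card ≤ s.card :=
      fun a s => Finset.card_image_le
    have j1 := im .fwd (words .fwd m)
    have j2 := im .bwd (words .bwd m)
    have j3 := im .jump (words .jumpDone m)
    have j4 := im .jump (words .jumpDue m)
    omega
  refine le_trans ?_ hcard
  refine Finset.card_le_card_of_injOn (fun w => (List.iterate τ 0 (m + 1)).map w) ?_ ?_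
  · intro w hw
    have := walk_mem_words (hW w hw) m 0
    simp only [status] at this
    simp only [List.iterate, List.map_cons, hA]
    cases e1 : w 0 <;> cases e2 : w (τ⁻¹ 0) <;> simp_all
  · intro w _ w' _ hww
    funext x
    exact List.map_inj_left.1 hww x (mem_iterate_of_full h 0 x)

/-! ### Counting the full cycles clashing with a given one -/

/-- The letter of `σ` at `v` relative to `τ`. -/
def letterOf (τ σ : Equiv.Perm (Fin n)) (v : Fin n) : Letter :=
  if σ v = τ v then .fwd else if σ v = τ⁻¹ v then .bwd else .jump

variable {σ τ : Equiv.Perm (Fin n)}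

lemma letterOf_fwd {v : Fin n} : letterOf τ σ v = .fwd ↔ σ v = τ v := by
  unfold letterOf; split_ifs <;> simp_all

lemma eq_of_letterOf_bwd {v : Fin n} (h : letterOf τ σ v = .bwd) : σ v = τ⁻¹ v := by
  unfold letterOf at h; split_ifs at h; assumption

lemma letterOf_bwd (hn : 3 ≤ n) (hτ : τ.cycleType = {n}) {v : Fin n} (h : σ v = τ⁻¹ v) :
    letterOf τ σ v = .bwd := by
  have := apply_ne_symm_of_full hn hτ v
  unfold letterOf
  rw [if_neg (by rw [h]; exact this.symm), if_pos h]

lemma letterOf_jump {v : Fin n} :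
    letterOf τ σ v = .jump ↔ σ v ≠ τ v ∧ σ v ≠ τ⁻¹ v := by
  unfold letterOf; split_ifs <;> simp_all

lemma admissible_letterOf (hn : 3 ≤ n) (hσ : σ.cycleType = {n}) (hτ : τ.cycleType = {n})
    (h : Clash τ σ) : Admissible τ (letterOf τ σ) where
  fwd_bwd v h1 h2 := by
    have h1 := letterOf_fwd.1 h1
    have h2 := eq_of_letterOf_bwd h2
    rw [perm_inv_apply, ← h1] at h2
    exact apply_apply_ne_of_full hn hσ v h2
  fwd_any_bwd v h1 h2 := by
    have h1 := letterOf_fwd.1 h1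
    have h2 := eq_of_letterOf_bwd h2
    rw [perm_inv_apply] at h2
    exact apply_apply_ne_of_full hn hτ v (σ.injective (h2.trans h1.symm))
  jump v hv := by
    obtain ⟨h1, h2⟩ := letterOf_jump.1 hv
    rcases h v with h3 | h3 | h3 | h3
    · exact absurd h3 h1
    · exact absurd h3 h2
    · refine Or.inr (letterOf_bwd hn hτ ?_)
      rw [← h3, perm_apply_inv, h3, perm_inv_apply]
    · refine Or.inl (letterOf_fwd.2 ?_)
      rw [← h3, perm_apply_inv, h3, perm_apply_inv]

/-- The inverse of `σ` sends jumps to non-jumps, so at most half of the letters are jumps. -/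
lemma card_jump_le (h : Clash τ σ) :
    Fintype.card {v // letterOf τ σ v = .jump} ≤ n / 2 := by
  rw [Fintype.card_subtype]
  set Z := Finset.univ.filter (fun v => letterOf τ σ v = .jump) with hZ
  have h1 : Z.card ≤ Zᶜ.card := by
    refine Finset.card_le_card_of_injOn (fun v => σ⁻¹ v) ?_ (σ⁻¹).injective.injOn
    intro v hv
    simp only [hZ, Finset.coe_filter, Finset.mem_univ, true_and, Set.mem_ofPred_eq,
      letterOf_jump] at hv
    simp only [hZ, Finset.coe_compl, Finset.coe_filter, Finset.mem_univ, true_and,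
      Set.mem_compl_iff, Set.mem_ofPred_eq, letterOf_jump, perm_apply_inv]
    rintro ⟨h1, h2⟩
    rcases h v with h3 | h3 | h3 | h3
    · exact hv.1 h3
    · exact hv.2 h3
    · rw [h3, perm_inv_apply] at h2; exact h2 rfl
    · rw [h3, perm_apply_inv] at h1; exact h1 rfl
  rw [Finset.card_compl, Fintype.card_fin] at h1
  omega

/-- Permutations with the same word agree off its jumps. -/
lemma card_fiber_le (S : Finset (Equiv.Perm (Fin n))) (hS : ∀ σ ∈ S, Clash τ σ)
    (w : Fin n → Letter) (hw : ∀ σ ∈ S, letterOf τ σ = w) :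
    S.card ≤ (n / 2).factorial := by
  obtain rfl | ⟨ρ, hρ⟩ := S.eq_empty_or_nonempty
  · simp
  have hρw := hw ρ hρ
  subst hρw
  refine le_trans ?_ (Nat.factorial_le (card_jump_le (hS ρ hρ)))
  rw [← Fintype.card_perm,
    Fintype.card_congr (Equiv.Perm.subtypeEquivSubtypePerm (fun v => letterOf τ ρ v = .jump)),
    ← Fintype.card_coe S]
  refine Fintype.card_le_of_injective (fun σ => ⟨ρ⁻¹ * σ.1, fun a ha => ?_⟩) ?_
  · have h1 := congrFun (hw σ.1 σ.2) a
    rw [Equiv.Perm.mul_apply, Equiv.Perm.inv_eq_iff_eq]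
    cases e : letterOf τ ρ a with
    | jump => exact absurd e ha
    | fwd => rw [e] at h1; rw [letterOf_fwd.1 h1, letterOf_fwd.1 e]
    | bwd => rw [e] at h1; rw [eq_of_letterOf_bwd h1, eq_of_letterOf_bwd e]
  · intro σ σ' hσ
    exact Subtype.ext (mul_left_cancel (congrArg Subtype.val hσ))

lemma card_clash_le (hn : 3 ≤ n) (hτ : τ.cycleType = {n}) (S : Finset (Equiv.Perm (Fin n)))
    (hS : ∀ σ ∈ S, σ.cycleType = {n} ∧ Clash τ σ) :
    S.card ≤ (n / 2).factorial * (5 * 2 ^ (n - 1)) := by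
  classical
  refine (Finset.card_le_mul_card_image (f := letterOf τ) S (n / 2).factorial ?_).trans
    (Nat.mul_le_mul_left _ (card_letters_le (by omega) hτ _ ?_))
  · intro w _
    refine card_fiber_le (τ := τ) _ (fun σ hσ => (hS σ ?_).2) w (fun σ hσ => ?_)
    · exact (Finset.mem_filter.1 hσ).1
    · exact (Finset.mem_filter.1 hσ).2
  · intro w hw
    obtain ⟨σ, hσ, rfl⟩ := Finset.mem_image.1 hw
    exact admissible_letterOf hn (hS σ hσ).1 hτ (hS σ hσ).2

/-! ### The greedy family -/

/-- A clash-free set of full cycles of maximal size clashes with every full cycle. -/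
lemma exists_clashFree (hn : 3 ≤ n) : ∃ T : Finset (Equiv.Perm (Fin n)),
    (∀ σ ∈ T, σ.cycleType = {n}) ∧ (∀ σ ∈ T, ∀ τ ∈ T, σ ≠ τ → ¬ Clash τ σ) ∧
    (n - 1).factorial ≤ T.card * ((n / 2).factorial * (5 * 2 ^ (n - 1))) := by
  classical
  set X : Finset (Equiv.Perm (Fin n)) := {g | g.cycleType = {n}} with hX
  have hXc : X.card = (n - 1).factorial := by
    rw [hX, Equiv.Perm.card_of_cycleType_singleton (by omega) (by simp)]
    simp
  obtain ⟨T, hT, hmax⟩ := Finset.exists_max_image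
    (X.powerset.filter fun T => ∀ σ ∈ T, ∀ τ ∈ T, σ ≠ τ → ¬ Clash τ σ) Finset.card
    ⟨∅, by simp⟩
  rw [Finset.mem_filter, Finset.mem_powerset] at hT
  obtain ⟨hTX, hTf⟩ := hT
  have hfull : ∀ σ ∈ T, σ.cycleType = {n} := fun σ hσ => by simpa [hX] using hTX hσ
  refine ⟨T, hfull, hTf, ?_⟩
  have hcov : X ⊆ T.biUnion (fun τ => X.filter (fun σ => Clash τ σ)) := by
    intro σ hσ
    simp only [Finset.mem_biUnion, Finset.mem_filter]
    by_contra! hno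
    have hnT : σ ∉ T := fun h => hno σ h hσ (fun v => Or.inl rfl)
    have := hmax (insert σ T) (by
      rw [Finset.mem_filter, Finset.mem_powerset]
      refine ⟨Finset.insert_subset hσ hTX, ?_⟩
      intro a ha b hb hab
      rw [Finset.mem_insert] at ha hb
      rcases ha with rfl | ha <;> rcases hb with rfl | hb
      · exact absurd rfl hab
      · exact hno b hb hσ
      · exact fun h => hno a ha hσ h.symm
      · exact hTf a ha b hb hab)
    rw [Finset.card_insert_of_notMem hnT] at this
    omega
  rw [← hXc]
  refine (Finset.card_le_card hcov).trans (Finset.card_biUnion_le_card_mul _ _ _ ?_)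
  intro τ hτ
  refine card_clash_le hn (hfull τ hτ) _ (fun σ hσ => ?_)
  rw [Finset.mem_filter] at hσ
  exact ⟨by simpa [hX] using hσ.1, hσ.2⟩

end Count

lemma five_mul_two_pow_le {n : ℕ} (hn : 3 ≤ n) :
    (5 * 2 ^ (n - 1) : ℝ) ≤ 2 * (1 + Real.sqrt 2) ^ n := by
  have h2 : (1.4 : ℝ) ≤ Real.sqrt 2 := Real.le_sqrt_of_sq_le (by norm_num)
  induction n, hn using Nat.le_induction with
  | base =>
    have : (2.4 : ℝ) ^ 3 ≤ (1 + Real.sqrt 2) ^ 3 := by gcongr; linarith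
    norm_num at this ⊢
    linarith
  | succ m hm ih =>
    obtain ⟨k, rfl⟩ : ∃ k, m = k + 1 := ⟨m - 1, by omega⟩
    simp only [Nat.add_sub_cancel] at ih ⊢
    rw [pow_succ, pow_succ _ (k + 1)]
    have : (0 : ℝ) < (1 + Real.sqrt 2) ^ (k + 1) := by positivity
    nlinarith

theorem stmt_1 (n : ℕ) (hn : 3 ≤ n) :
    ∃ 𝒢 : Finset (SimpleGraph (Fin n)), (∀ G ∈ 𝒢, IsHamCycle G) ∧ DegreeDoubling 𝒢 ∧
      (Nat.factorial (n - 1) : ℝ) / (2 * (Nat.factorial (n / 2) : ℝ) * (1 + Real.sqrt 2) ^ n)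
        ≤ (𝒢.card : ℝ) := by
  classical
  obtain ⟨T, hfull, hfree, hcard⟩ := exists_clashFree hn
  refine ⟨T.image cycleGraphOf, ?_, ?_, ?_⟩
  · intro G hG
    obtain ⟨σ, hσ, rfl⟩ := Finset.mem_image.1 hG
    exact isHamCycle_cycleGraphOf hn (hfull σ hσ)
  · intro F hF G hG hFG
    obtain ⟨σ, hσ, rfl⟩ := Finset.mem_image.1 hF
    obtain ⟨τ, hτ, rfl⟩ := Finset.mem_image.1 hG
    exact exists_deg_eq_four hn (hfull σ hσ) (hfull τ hτ)
      (hfree σ hσ τ hτ (fun h => hFG (by rw [h])))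
  · rw [Finset.card_image_of_injOn, div_le_iff₀ (by positivity)]
    · have h1 : ((n - 1).factorial : ℝ) ≤
          T.card * ((n / 2).factorial * (5 * 2 ^ (n - 1))) := by exact_mod_cast hcard
      calc ((n - 1).factorial : ℝ) ≤ T.card * ((n / 2).factorial * (5 * 2 ^ (n - 1))) := h1
        _ ≤ T.card * ((n / 2).factorial * (2 * (1 + Real.sqrt 2) ^ n)) := by
          refine mul_le_mul_of_nonneg_left (mul_le_mul_of_nonneg_left ?_ (by positivity))
            (by positivity)
          exact five_mul_two_pow_le hn
        _ = _ := by ring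
    · intro σ hσ τ hτ h
      by_contra hne
      exact hfree σ hσ τ hτ hne (clash_of_cycleGraphOf_eq (hfull σ hσ) (hfull τ hτ) h)
end

section
/- Let n ≥ 3 and let 𝒢 be a degree-doubling family of Hamiltonian cycles on Fin n. Then |𝒢| ≤ ⌈n/2⌉! · 2^⌈n/2⌉. -/
/-!
Every Hamiltonian cycle `G` on `Fin n` determines a fixed-point-free involution of `Fin (2 m)`,
`m = ⌈n / 2⌉`, where for odd `n` the largest element plays the role of a point at infinity: starting
from the vertex `0`, list the vertices as `u 0 = 0, u 1, …, u (n - 1)` along the cycle (followed by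
the point at infinity if `n` is odd) and exchange the points in positions `2 k` and `2 k + 1`.
From the involution alone one can name a neighbour in `G` of every vertex `v`: it is the partner
of `v` or, if the partner is the point at infinity, the vertex `0`, because then `v = u (n - 1)`.
(`IsHamCycle.exists_pairing`)

Two Hamiltonian cycles with the same involution therefore share a neighbour at every vertex, so
their union has maximum degree at most `3`. (`deg_sup_ne_four`) In a degree-doubling family the
involutions are thus pairwise distinct, so the family has at most
`(2 m)! / (2 ^ m * m!) = centralBinom m * m! / 2 ^ m ≤ m! * 2 ^ m` members.
-/


open SimpleGraph

/-! ### Fixed-point-free involutions -/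

/-- The involution of `Fin (2 * m)` exchanging `2 * k` and `2 * k + 1` for every `k < m`. -/
def pairSwap (m : ℕ) : Equiv.Perm (Fin (2 * m)) :=
  Function.Involutive.toPerm
    (fun i => ⟨if i.1 % 2 = 0 then i.1 + 1 else i.1 - 1, by split_ifs <;> omega⟩)
    (fun i => by ext; dsimp only; split_ifs <;> omega)

lemma pairSwap_val (m : ℕ) (i : Fin (2 * m)) :
    (pairSwap m i).1 = if i.1 % 2 = 0 then i.1 + 1 else i.1 - 1 := rfl

lemma cycleType_pairSwap (m : ℕ) : (pairSwap m).cycleType = Multiset.replicate m 2 := by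
  have h1 : (pairSwap m) ^ 2 = 1 := by
    ext i
    simp only [sq, Equiv.Perm.mul_apply, pairSwap_val, Equiv.Perm.one_apply]
    split_ifs <;> omega
  have h2 := Equiv.Perm.cycleType_of_pow_prime_eq_one h1
  have h3 : (pairSwap m).support = Finset.univ := by
    ext i
    simp only [Equiv.Perm.mem_support, ne_eq, Finset.mem_univ, iff_true, Fin.ext_iff, pairSwap_val]
    split_ifs <;> omega
  have h4 := (pairSwap m).sum_cycleType
  rw [h3, h2] at h4
  simp at h4
  rw [h2]
  congr 1
  omega

/-- The fixed-point-free involutions of `2 * m` points form a single conjugacy class, whose size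
`(2 * m)! / (2 ^ m * m!)` is bounded through `(2 * m).choose m ≤ 4 ^ m`. -/
lemma card_pairings_le (m : ℕ) :
    (Finset.univ.filter fun τ : Equiv.Perm (Fin (2 * m)) =>
      τ.cycleType = Multiset.replicate m 2).card ≤ m.factorial * 2 ^ m := by
  rw [Equiv.Perm.card_of_cycleType]
  split_ifs
  swap
  · exact Nat.zero_le _
  have hprod : (∏ k ∈ (Multiset.replicate m 2).toFinset,
      ((Multiset.replicate m 2).count k).factorial) = m.factorial := by
    rcases Nat.eq_zero_or_pos m with rfl | hm
    · simp
    · simp [Multiset.toFinset_replicate, hm.ne']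
  rw [hprod]
  simp only [Multiset.sum_replicate, Multiset.prod_replicate, Fintype.card_fin, smul_eq_mul]
  rw [mul_comm m 2, Nat.sub_self, Nat.factorial_zero, one_mul]
  apply Nat.div_le_of_le_mul
  have h1 : (2 * m).choose m * m.factorial * (2 * m - m).factorial = (2 * m).factorial :=
    Nat.choose_mul_factorial_mul_factorial (by omega)
  rw [show 2 * m - m = m by omega] at h1
  have h2 : (2 * m).choose m ≤ 2 ^ (2 * m) := Nat.choose_le_two_pow _ _
  calc (2 * m).factorial = (2 * m).choose m * (m.factorial * m.factorial) := by rw [← h1]; ring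
    _ ≤ 2 ^ (2 * m) * (m.factorial * m.factorial) := Nat.mul_le_mul_right _ h2
    _ = 2 ^ m * m.factorial * (m.factorial * 2 ^ m) := by ring

/-! ### Hamiltonian cycles -/

/-- A connected 2-regular graph can be traversed cyclically from any vertex `v`. -/
lemma IsHamCycle.exists_enum {n : ℕ} {G : SimpleGraph (Fin n)} (h : IsHamCycle G) (v : Fin n) :
    ∃ u : ℕ → Fin n, u 0 = v ∧ u n = v ∧ Set.InjOn u {i | i < n} ∧
      ∀ i < n, G.Adj (u i) (u (i + 1)) := by
  obtain ⟨hconn, hdeg⟩ := h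
  have hcard : ∀ w, (G.neighborSet w).ncard = 2 := hdeg
  have hcyc : G.IsCycles := fun w _ => hcard w
  obtain ⟨p, hp, hverts⟩ := hcyc.exists_cycle_toSubgraph_verts_eq_connectedComponentSupp
    (c := G.connectedComponentMk v) (v := v) rfl
    (Set.nonempty_of_ncard_ne_zero (by rw [hcard]; norm_num))
  have hmem : ∀ w, w ∈ p.support := by
    intro w
    rw [← p.mem_verts_toSubgraph, hverts, ConnectedComponent.mem_supp_iff,
      ConnectedComponent.eq]
    exact hconn.preconnected w v
  have hpos : 3 ≤ p.length := hp.three_le_length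
  have hinj : Set.InjOn p.getVert {i | i < p.length} := by
    intro i hi j hj hij
    refine hp.getVert_injOn' ?_ ?_ hij <;> simp only [Set.mem_ofPred_eq] at * <;> omega
  have hlen : p.length = n := by
    have himg : (Finset.range p.length).image p.getVert = Finset.univ := by
      ext w
      simp only [Finset.mem_image, Finset.mem_range, Finset.mem_univ, iff_true]
      obtain ⟨i, hi, hle⟩ := Walk.mem_support_iff_exists_getVert.mp (hmem w)
      rcases hle.lt_or_eq with hlt | rfl
      · exact ⟨i, hlt, hi⟩
      · exact ⟨0, by omega, by rw [← hi, p.getVert_zero, p.getVert_length]⟩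
    have := congrArg Finset.card himg
    rwa [Finset.card_image_of_injOn (by intro i hi j hj; simp at hi hj; exact hinj hi hj),
      Finset.card_range, Finset.card_univ, Fintype.card_fin] at this
  refine ⟨p.getVert, p.getVert_zero, ?_, ?_, fun i hi => p.adj_getVert_succ (by omega)⟩
  · exact p.getVert_of_length_le hlen.le
  · exact fun i hi j hj hij => hinj (lt_of_lt_of_eq hi hlen.symm) (lt_of_lt_of_eq hj hlen.symm) hij

/-- The neighbour of `v` named by the involution `τ`, with `z` as the neighbour of the vertex
paired with the point at infinity. -/
def partner {n m : ℕ} (z : Fin n) (hm : n ≤ 2 * m) (τ : Equiv.Perm (Fin (2 * m)))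
    (v : Fin n) : Fin n :=
  if h : (τ (Fin.castLE hm v)).1 < n then ⟨_, h⟩ else z

/-- A Hamiltonian cycle yields a fixed-point-free involution naming a neighbour of every vertex:
it is `pairSwap m` transported along the cyclic order of the vertices starting at `z`. -/
lemma IsHamCycle.exists_pairing {n m : ℕ} {G : SimpleGraph (Fin n)} (h : IsHamCycle G)
    (z : Fin n) (hm : n ≤ 2 * m) (hm' : 2 * m ≤ n + 1) :
    ∃ τ : Equiv.Perm (Fin (2 * m)), τ.cycleType = Multiset.replicate m 2 ∧
      ∀ v, G.Adj v (partner z hm τ v) := by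
  obtain ⟨u, -, hun, hinj, hadj⟩ := h.exists_enum z
  -- The enumeration of the vertices, extended by fixing the point at infinity.
  let f : Fin (2 * m) → Fin (2 * m) := fun i => if i.1 < n then Fin.castLE hm (u i) else i
  have hf : ∀ i : Fin (2 * m), i.1 < n → f i = Fin.castLE hm (u i) := fun i hi => if_pos hi
  have hf' : ∀ i : Fin (2 * m), ¬ i.1 < n → f i = i := fun i hi => if_neg hi
  have hfinj : Function.Injective f := by
    intro i j hij
    by_cases hi : i.1 < n <;> by_cases hj : j.1 < n
    · rw [hf i hi, hf j hj] at hij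
      exact Fin.ext (hinj hi hj (Fin.castLE_injective hm hij))
    · rw [hf i hi, hf' j hj] at hij
      have := congrArg Fin.val hij
      simp only [Fin.val_castLE] at this
      omega
    · rw [hf' i hi, hf j hj] at hij
      have := congrArg Fin.val hij
      simp only [Fin.val_castLE] at this
      omega
    · rwa [hf' i hi, hf' j hj] at hij
  let e : Equiv.Perm (Fin (2 * m)) := Equiv.ofBijective f (Finite.injective_iff_bijective.mp hfinj)
  have he : ∀ i, e i = f i := fun _ => rfl
  refine ⟨e * pairSwap m * e⁻¹, by rw [Equiv.Perm.cycleType_conj, cycleType_pairSwap], fun v => ?_⟩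
  obtain ⟨i, hi⟩ := e.surjective (Fin.castLE hm v)
  have hin : i.1 < n := by
    by_contra hcon
    rw [he, hf' i hcon] at hi
    have := congrArg Fin.val hi
    simp only [Fin.val_castLE] at this
    omega
  have hv : u i = v := by
    rw [he, hf i hin] at hi
    exact Fin.castLE_injective hm hi
  have hτ : (e * pairSwap m * e⁻¹) (Fin.castLE hm v) = f (pairSwap m i) := by
    have hinv : e⁻¹ (Fin.castLE hm v) = i := by rw [Equiv.Perm.inv_eq_iff_eq, hi]
    rw [Equiv.Perm.mul_apply, Equiv.Perm.mul_apply, hinv, he]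
  unfold partner
  by_cases hs : (pairSwap m i).1 < n
  · have hw : ((e * pairSwap m * e⁻¹) (Fin.castLE hm v)).1 = (u (pairSwap m i).1).1 := by
      rw [hτ, hf _ hs, Fin.val_castLE]
    rw [dif_pos (by rw [hw]; exact Fin.is_lt _)]
    simp only [hw, Fin.eta]
    rw [← hv]
    rw [pairSwap_val] at hs ⊢
    split_ifs with hpar
    · exact hadj i hin
    · have := hadj (i.1 - 1) (by omega)
      rw [Nat.sub_add_cancel (by omega)] at this
      exact this.symm
  · rw [dif_neg (by rw [hτ, hf' _ hs]; exact hs)]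
    -- The partner of `i` exceeds `n - 1`, so `i = n - 1` is the last position of the cycle.
    have hlast : i.1 + 1 = n := by
      rw [pairSwap_val] at hs
      split_ifs at hs <;> omega
    have := hadj i hin
    rwa [hlast, hun, hv] at this

theorem stmt_2 (n : ℕ) (hn : 3 ≤ n) (𝒢 : Finset (SimpleGraph (Fin n)))
    (hham : ∀ G ∈ 𝒢, IsHamCycle G) (hdd : DegreeDoubling 𝒢) :
    𝒢.card ≤ Nat.factorial ((n + 1) / 2) * 2 ^ ((n + 1) / 2) := by
  have hm : n ≤ 2 * ((n + 1) / 2) := by omega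
  have hm' : 2 * ((n + 1) / 2) ≤ n + 1 := by omega
  choose! τ hτ hadj using fun G (hG : G ∈ 𝒢) =>
    (hham G hG).exists_pairing ⟨0, by omega⟩ hm hm'
  refine le_trans (Finset.card_le_card_of_injOn τ (fun G hG => ?_) ?_) (card_pairings_le _)
  · simpa using hτ G hG
  · intro F hF G hG hFG
    by_contra hne
    obtain ⟨v, hv⟩ := hdd F hF G hG hne
    refine deg_sup_ne_four ((hham F hF).2 v) ((hham G hG).2 v) (hadj F hF v) ?_ hv
    rw [hFG]
    exact hadj G hG v
end

section
/- Let n ≥ 4 be even and let P be a perfect matching on Fin n. Then the number of Hamiltonian cycles H on Fin n with P ≤ H, multiplied by n, equals (n/2)! · 2^(n/2). -/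
/-! A Hamiltonian cycle through `P`, together with a starting vertex, is the same thing as an
enumeration of the edges of `P` in cyclic order, each edge traversed in a definite direction: leave
the starting vertex along `P` and alternate.  Writing `m = n / 2`, such an enumeration is a
bijection `e : ZMod m × Bool ≃ Fin n` carrying the involution `(i, b) ↦ (i, !b)` to the involution
`p` whose edges are those of `P`; the cycle then closes up `e (i, true)` with `e (i + 1, false)`.
So the theorem is the computation of one cardinality in two ways.

* `card_enum`: the set of such `e` is a torsor under the centralizer of a product of `m` disjoint
  transpositions, hence has `m! * 2 ^ m` elements.
* `enumToPair_bijective`: `e ↦ (cycle of e, e (0, false))` is a bijection.  Injectivity holds since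
  in a `2`-regular graph the next vertex is forced.  For surjectivity, a cycle `H ≥ P` has edges
  `{x, p x}` and `{x, q x}` for a second involution `q`; with `σ = q * p` connectedness says that
  every vertex is `σ ^ i v` or `p (σ ^ i v)`, and `exists_zpow_enum` shows that these two
  families are disjoint, because `p * σ ^ s` is conjugate to `p` or to `q` and so has no fixed
  point. Hence the `σ`-orbit of `v` has exactly `m` elements. -/

open SimpleGraph

/-! ### The model cycle on `ZMod m × Bool` -/

/-- The matching `(i, false) — (i, true)` of the model cycle, as an involution. -/
def flip0 (m : ℕ) : Equiv.Perm (ZMod m × Bool) :=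
  Function.Involutive.toPerm (fun a => (a.1, !a.2)) (fun a => by simp)

/-- The matching `(i, true) — (i + 1, false)` of the model cycle, as an involution. -/
def next0 (m : ℕ) : Equiv.Perm (ZMod m × Bool) :=
  Function.Involutive.toPerm (fun a => if a.2 then (a.1 + 1, false) else (a.1 - 1, true))
    (fun a => by rcases a with ⟨i, _ | _⟩ <;> simp)

@[simp] lemma flip0_apply (m : ℕ) (i : ZMod m) (b : Bool) : flip0 m (i, b) = (i, !b) := rfl

@[simp] lemma next0_true (m : ℕ) (i : ZMod m) : next0 m (i, true) = (i + 1, false) := rfl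

@[simp] lemma next0_false (m : ℕ) (i : ZMod m) : next0 m (i, false) = (i - 1, true) := rfl

lemma next0_next0 (m : ℕ) (a : ZMod m × Bool) : next0 m (next0 m a) = a := by
  rcases a with ⟨i, _ | _⟩ <;> simp

lemma next0_ne (m : ℕ) (a : ZMod m × Bool) : next0 m a ≠ a := by
  rcases a with ⟨i, _ | _⟩ <;> simp

/-- For `m = 1` the two matchings of the model cycle coincide, so `2 ≤ m` is essential. -/
lemma next0_ne_flip0 (m : ℕ) (hm : 2 ≤ m) (a : ZMod m × Bool) : next0 m a ≠ flip0 m a := by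
  have : Fact (1 < m) := ⟨hm⟩
  rcases a with ⟨i, _ | _⟩ <;> simp

/-- The adjacency structure of the model cycle is generated from `(0, false)` by the two
involutions. -/
lemma model_induction (m : ℕ) [NeZero m] (S : ZMod m × Bool → Prop) (h0 : S (0, false))
    (hf : ∀ i, S (i, false) → S (i, true)) (hn : ∀ i, S (i, true) → S (i + 1, false)) (a) :
    S a := by
  have key : ∀ k : ℕ, S ((k : ZMod m), false) := by
    intro k
    induction k with
    | zero => simpa using h0
    | succ k ih => simpa using hn _ (hf _ ih)
  have key' : ∀ i : ZMod m, S (i, false) := by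
    intro i
    simpa using key i.val
  rcases a with ⟨i, _ | _⟩
  · exact key' i
  · exact hf _ (key' i)

/-! ### Counting the enumerations of a matching -/

/-- Enumerations of the edges of a matching given by an involution `p`: the edges are numbered
by `ZMod m`, and each one is directed. -/
def Enum (m : ℕ) {V : Type*} (p : V → V) : Type _ :=
  {e : ZMod m × Bool ≃ V // ∀ a, p (e a) = e (flip0 m a)}

lemma cycleType_of_involution {V : Type*} [Fintype V] [DecidableEq V] (m : ℕ)
    (hV : Fintype.card V = 2 * m) (g : Equiv.Perm V) (hg : ∀ x, g (g x) = x)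
    (hg' : ∀ x, g x ≠ x) : g.cycleType = Multiset.replicate m 2 := by
  have h2 : ∀ b ∈ g.cycleType, b = 2 := by
    intro b hb
    have h1 := Equiv.Perm.two_le_of_mem_cycleType hb
    have h3 := Equiv.Perm.dvd_of_mem_cycleType hb
    have h4 : orderOf g ∣ 2 := orderOf_dvd_of_pow_eq_one (by ext x; simp [pow_two, hg])
    exact le_antisymm (Nat.le_of_dvd (by norm_num) (h3.trans h4)) h1
  have h5 := Multiset.eq_replicate_card.2 h2
  have h6 := Equiv.Perm.sum_cycleType g
  have h7 : g.support = Finset.univ := by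
    ext x; simp [hg']
  rw [h7, Finset.card_univ, hV, h5] at h6
  simp at h6
  rw [h5]
  congr 1
  omega

lemma card_enum {V : Type*} [Fintype V] [DecidableEq V] (m : ℕ) (hm : 2 ≤ m)
    (hV : Fintype.card V = 2 * m) (p : Equiv.Perm V) (hp : ∀ x, p (p x) = x)
    (hp' : ∀ x, p x ≠ x) : Nat.card (Enum m p) = m.factorial * 2 ^ m := by
  have : NeZero m := ⟨by omega⟩
  let f : ZMod m × Bool ≃ V := Fintype.equivOfCardEq (by simp [hV, ZMod.card, mul_comm])
  let p1 : Equiv.Perm V := f.permCongr (flip0 m)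
  have hp1 : ∀ a, p1 (f a) = f (flip0 m a) := by intro a; simp [p1, Equiv.permCongr_apply]
  have ct1 : p1.cycleType = Multiset.replicate m 2 := by
    refine cycleType_of_involution m hV p1 ?_ ?_ <;>
    · intro x
      obtain ⟨⟨i, b⟩, rfl⟩ := f.surjective x
      simp [hp1]
  have ct := cycleType_of_involution m hV p hp hp'
  obtain ⟨c, hc⟩ := isConj_iff.1 (Equiv.Perm.isConj_iff_cycleType_eq.2 (ct1.trans ct.symm))
  have hc' : ∀ x, p (c x) = c (p1 x) := by intro x; rw [← hc]; simp
  -- `f` transports the model matching to `p1`, and `c` conjugates `p1` to `p`; every enumeration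
  -- of `p` is then `c * g` after `f` for a unique `g` commuting with `p1`.
  have e : Enum m p ≃ Subgroup.centralizer {p1} :=
    { toFun := fun e => ⟨c⁻¹ * (f.symm.trans e.1), by
        rw [Subgroup.mem_centralizer_singleton_iff]
        ext x
        obtain ⟨a, rfl⟩ := f.surjective x
        apply c.injective
        simp [hp1, ← e.2, ← hc']⟩
      invFun := fun g => ⟨f.trans (c * g.1), by
        intro a
        have := Subgroup.mem_centralizer_singleton_iff.1 g.2
        have := DFunLike.congr_fun this (f a)
        simp at this
        simp [hc', ← hp1, this]⟩
      left_inv := fun e => by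
        apply Subtype.ext
        ext a
        simp
      right_inv := fun g => by
        apply Subtype.ext
        ext a
        simp }
  rw [Nat.card_congr e, Equiv.Perm.nat_card_centralizer, ct1]
  have : Multiset.toFinset (Multiset.replicate m 2) = {2} := by
    rw [Multiset.toFinset_replicate, if_neg (by omega)]
  rw [this]
  simp [hV, mul_comm]

/-! ### Unions of two matchings -/

/-- The graph whose edges are `{x, p x}` and `{x, q x}`. -/
def altGraph {V : Type*} (p q : V → V) : SimpleGraph V :=
  SimpleGraph.fromRel (fun x y => y = p x ∨ y = q x)

lemma altGraph_adj {V : Type*} {p q : V → V} (hp : ∀ x, p (p x) = x) (hp' : ∀ x, p x ≠ x)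
    (hq : ∀ x, q (q x) = x) (hq' : ∀ x, q x ≠ x) (x y : V) :
    (altGraph p q).Adj x y ↔ y = p x ∨ y = q x := by
  rw [altGraph, SimpleGraph.fromRel_adj]
  constructor
  · rintro ⟨-, h | h⟩
    · exact h
    · rcases h with rfl | rfl
      · exact Or.inl (hp y).symm
      · exact Or.inr (hq y).symm
  · rintro h
    refine ⟨?_, Or.inl h⟩
    rcases h with rfl | rfl
    · exact (hp' x).symm
    · exact (hq' x).symm

/-- In a `2`-regular graph containing the matching `p`, the remaining edges form a second
matching `q`. -/
lemma exists_second_matching {n : ℕ} (p : Fin n → Fin n) (hp : ∀ x, p (p x) = x)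
    (H : SimpleGraph (Fin n)) (hH : ∀ v, deg H v = 2) (hpH : ∀ x, H.Adj x (p x)) :
    ∃ q : Fin n → Fin n, (∀ x, q (q x) = x) ∧ (∀ x, q x ≠ x) ∧ (∀ x, q x ≠ p x) ∧
      ∀ x y, H.Adj x y ↔ y = p x ∨ y = q x := by
  have h : ∀ x, ∃ z, z ≠ p x ∧ ∀ y, H.Adj x y ↔ y = p x ∨ y = z := by
    intro x
    have h1 : (H.neighborSet x).ncard = 2 := hH x
    obtain ⟨a, b, hab, hs⟩ := Set.ncard_eq_two.1 h1
    have hs' : ∀ y, H.Adj x y ↔ y = a ∨ y = b := by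
      intro y
      rw [← SimpleGraph.mem_neighborSet, hs]
      simp
    rcases (hs' _).1 (hpH x) with h | h
    · exact ⟨b, by rw [h]; exact hab.symm, by rw [h]; exact hs'⟩
    · exact ⟨a, by rw [h]; exact hab, by rw [h]; intro y; rw [hs', or_comm]⟩
  choose q hq1 hq2 using h
  have hadj : ∀ x, H.Adj x (q x) := fun x => (hq2 x _).2 (Or.inr rfl)
  refine ⟨q, fun x => ?_, fun x => (hadj x).ne', hq1, hq2⟩
  rcases (hq2 _ _).1 (hadj x).symm with h | h
  · exact absurd (by rw [← hp (q x), ← h]) (hq1 x)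
  · exact h.symm

/-! ### The orbit of a vertex under the product of two involutions -/

section Orbit

variable {V : Type*} {p q : Equiv.Perm V}

/-- `p * (q * p) ^ s` is conjugate to `p` when `s` is even and to `q` when `s` is odd. -/
lemma mul_zpow_apply_ne (hp : p * p = 1) (hq : q * q = 1) (hp' : ∀ x, p x ≠ x)
    (hq' : ∀ x, q x ≠ x) (s : ℤ) (v : V) : p (((q * p) ^ s) v) ≠ v := by
  have hpi : p⁻¹ = p := inv_eq_of_mul_eq_one_left hp
  have hqi : q⁻¹ = q := inv_eq_of_mul_eq_one_left hq
  have hconj : ∀ t : ℤ, p * (q * p) ^ t = (q * p) ^ (-t) * p := by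
    intro t
    have h1 : p * (q * p) * p⁻¹ = (q * p)⁻¹ := by rw [mul_inv_rev, hpi, hqi]; simp [mul_assoc, hp]
    have h2 : p * (q * p) ^ t * p⁻¹ = (q * p) ^ (-t) := by
      rw [← conj_zpow, h1, inv_zpow, zpow_neg]
    rw [← h2]; simp
  intro h
  rcases Int.even_or_odd' s with ⟨t, rfl | rfl⟩
  · apply hp' (((q * p) ^ t) v)
    have h3 : p * (q * p) ^ (2 * t) = (q * p) ^ (-t) * (p * (q * p) ^ t) := by
      rw [two_mul, zpow_add, ← mul_assoc p, hconj t, mul_assoc, hconj t]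
    have h4 := congrArg ((q * p) ^ t) h
    rw [← Equiv.Perm.mul_apply p, h3, ← Equiv.Perm.mul_apply, ← mul_assoc, ← zpow_add] at h4
    simpa using h4
  · apply hq' (((q * p) ^ (t + 1)) v)
    have h3 : p * (q * p) ^ (2 * t + 1) = (q * p) ^ (-(t + 1)) * (q * (q * p) ^ (t + 1)) := by
      have h5 : q = (q * p) * p := by rw [mul_assoc, hp, mul_one]
      have h6 : q * (q * p) ^ (t + 1) = (q * p) * (p * (q * p) ^ (t + 1)) := by
        rw [← mul_assoc (q * p), ← h5]
      rw [h6, hconj, hconj, ← mul_assoc, ← mul_assoc, ← zpow_add_one, ← zpow_add]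
      congr 2
      ring
    have h4 := congrArg ((q * p) ^ (t + 1)) h
    rw [← Equiv.Perm.mul_apply p, h3, ← Equiv.Perm.mul_apply, ← mul_assoc, ← zpow_add] at h4
    simpa using h4

/-- If `p` and `q` together move `v` to every vertex, then the alternating walk from `v` visits
every vertex exactly once before closing up. -/
lemma exists_zpow_enum [Fintype V] (m : ℕ) (hm : 2 ≤ m) (hV : Fintype.card V = 2 * m)
    (hp : p * p = 1) (hq : q * q = 1) (hp' : ∀ x, p x ≠ x) (hq' : ∀ x, q x ≠ x) (v : V)
    (hconn : ∀ S : V → Prop, S v → (∀ x, S x → S (p x)) → (∀ x, S x → S (q x)) → ∀ x, S x) :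
    ∃ e : ZMod m × Bool ≃ V, e (0, false) = v ∧ (∀ a, p (e a) = e (flip0 m a)) ∧
      ∀ a, q (e a) = e (next0 m a) := by
  have hpp : ∀ x, p (p x) = x := fun x => DFunLike.congr_fun hp x
  have hqq : ∀ x, q (q x) = x := fun x => DFunLike.congr_fun hq x
  set σ := q * p with hσ
  have hσs : ∀ (i : ℤ), q (p ((σ ^ i) v)) = (σ ^ (i + 1)) v := by
    intro i
    rw [add_comm, zpow_one_add]; rfl
  -- Keep the period `k` of `v` opaque, so that the identity `k = m` can later be substituted.
  obtain ⟨k, hk⟩ : ∃ k : ℕ, ∀ i : ℤ, (σ ^ i) v = v ↔ (k : ℤ) ∣ i :=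
    ⟨Function.minimalPeriod (σ • ·) v, fun i =>
      MulAction.zpow_smul_eq_iff_minimalPeriod_dvd (a := σ) (b := v)⟩
  have hk' : ∀ i j : ℤ, (σ ^ i) v = (σ ^ j) v ↔ (i : ZMod k) = j := by
    intro i j
    rw [eq_comm (a := (i : ZMod k)), ZMod.intCast_eq_intCast_iff_dvd_sub, ← hk, sub_eq_neg_add,
      zpow_add, Equiv.Perm.mul_apply, zpow_neg, Equiv.Perm.inv_eq_iff_eq]
  have hsurj : ∀ x, ∃ i : ℤ, x = (σ ^ i) v ∨ x = p ((σ ^ i) v) := by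
    apply hconn
    · exact ⟨0, Or.inl rfl⟩
    · rintro x ⟨i, rfl | rfl⟩
      · exact ⟨i, Or.inr rfl⟩
      · exact ⟨i, Or.inl (hpp _)⟩
    · rintro x ⟨i, rfl | rfl⟩
      · refine ⟨i - 1, Or.inr ?_⟩
        have := hσs (i - 1)
        rw [sub_add_cancel] at this
        rw [← this, hqq]
      · exact ⟨i + 1, Or.inl (hσs i)⟩
  have hne : ∀ i j : ℤ, p ((σ ^ i) v) ≠ (σ ^ j) v := by
    intro i j h
    apply mul_zpow_apply_ne hp hq hp' hq' (i - j) ((σ ^ j) v)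
    rw [← hσ, ← Equiv.Perm.mul_apply (σ ^ _), ← zpow_add, sub_add_cancel, h]
  have hk0 : NeZero k := by
    constructor
    rintro rfl
    have h1 := (hk (orderOf σ : ℤ)).1 (by rw [zpow_natCast, pow_orderOf_eq_one]; rfl)
    exact (orderOf_pos σ).ne' (zero_dvd_iff.1 (Int.natCast_dvd_natCast.1 h1))
  let F : ZMod k × Bool → V := fun a => if a.2 then p ((σ ^ (a.1.cast : ℤ)) v)
    else (σ ^ (a.1.cast : ℤ)) v
  have hF1 : ∀ i : ℤ, F ((i : ZMod k), false) = (σ ^ i) v := by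
    intro i
    simp only [F, Bool.false_eq_true, if_false]
    rw [hk']; simp
  have hF2 : ∀ i : ℤ, F ((i : ZMod k), true) = p ((σ ^ i) v) := by
    intro i
    simp only [F, if_true]
    rw [p.injective.eq_iff, hk']; simp
  have hFb : Function.Bijective F := by
    constructor
    · rintro ⟨i, b⟩ ⟨j, c⟩ h
      obtain ⟨i, rfl⟩ := ZMod.intCast_surjective i
      obtain ⟨j, rfl⟩ := ZMod.intCast_surjective j
      cases b <;> cases c <;> simp only [hF1, hF2] at h
      · rw [(hk' i j).1 h]
      · exact absurd h.symm (hne _ _)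
      · exact absurd h (hne _ _)
      · rw [(hk' i j).1 (p.injective h)]
    · intro x
      obtain ⟨i, rfl | rfl⟩ := hsurj x
      · exact ⟨_, hF1 i⟩
      · exact ⟨_, hF2 i⟩
  -- `F` counts the vertices: `2 * k = 2 * m`.
  obtain rfl : k = m := by
    have := Fintype.card_congr (Equiv.ofBijective F hFb)
    simp [hV, ZMod.card] at this
    omega
  refine ⟨Equiv.ofBijective F hFb, ?_, ?_, ?_⟩
  · simpa using hF1 0
  · rintro ⟨i, b⟩
    obtain ⟨i, rfl⟩ := ZMod.intCast_surjective i
    cases b <;> simp [hF1, hF2, hpp]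
  · rintro ⟨i, b⟩
    obtain ⟨i, rfl⟩ := ZMod.intCast_surjective i
    cases b
    · have h1 := hσs (i - 1)
      rw [sub_add_cancel] at h1
      have h2 := hF2 (i - 1)
      push_cast at h2
      simp [hF1, h2, ← h1, hqq]
    · have h2 := hF1 (i + 1)
      push_cast at h2
      simp [hF2, h2, hσs]

end Orbit

/-! ### Pointed Hamiltonian cycles and enumerations -/

section Pairs

variable {n m : ℕ} {p : Fin n → Fin n}

/-- The second matching of the cycle traced out by an enumeration `e` of the matching `p`. -/
def Enum.second (e : Enum m p) (x : Fin n) : Fin n := e.1 (next0 m (e.1.symm x))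

lemma Enum.second_apply (e : Enum m p) (a : ZMod m × Bool) :
    e.second (e.1 a) = e.1 (next0 m a) := by
  simp [Enum.second]

lemma Enum.second_second (e : Enum m p) (x : Fin n) : e.second (e.second x) = x := by
  simp [Enum.second, next0_next0]

lemma Enum.second_ne (e : Enum m p) (x : Fin n) : e.second x ≠ x := by
  obtain ⟨a, rfl⟩ := e.1.surjective x
  rw [e.second_apply]
  exact fun h => next0_ne m a (e.1.injective h)

lemma Enum.second_ne_first (hm : 2 ≤ m) (e : Enum m p) (x : Fin n) : e.second x ≠ p x := by
  obtain ⟨a, rfl⟩ := e.1.surjective x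
  rw [e.second_apply, e.2]
  exact fun h => next0_ne_flip0 m hm a (e.1.injective h)

lemma Enum.isHamCycle (hm : 2 ≤ m) (hp : ∀ x, p (p x) = x) (hp' : ∀ x, p x ≠ x)
    (e : Enum m p) : IsHamCycle (altGraph p e.second) := by
  have : NeZero m := ⟨by omega⟩
  have hadj := altGraph_adj hp hp' e.second_second e.second_ne
  constructor
  · have key : ∀ a, (altGraph p e.second).Reachable (e.1 (0, false)) (e.1 a) := by
      apply model_induction m
      · exact SimpleGraph.Reachable.refl _
      · intro i h
        refine h.trans (SimpleGraph.Adj.reachable ((hadj _ _).2 (Or.inl ?_)))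
        rw [e.2]; rfl
      · intro i h
        refine h.trans (SimpleGraph.Adj.reachable ((hadj _ _).2 (Or.inr ?_)))
        rw [e.second_apply]; rfl
    have : Nonempty (Fin n) := ⟨e.1 (0, false)⟩
    refine SimpleGraph.Connected.mk fun x y => ?_
    obtain ⟨a, rfl⟩ := e.1.surjective x
    obtain ⟨b, rfl⟩ := e.1.surjective y
    exact (key a).symm.trans (key b)
  · intro v
    have h1 : (altGraph p e.second).neighborSet v = {p v, e.second v} := by
      ext y; simp [hadj]
    change ((altGraph p e.second).neighborSet v).ncard = 2
    rw [h1, Set.ncard_pair (e.second_ne_first hm v).symm]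

/-- The Hamiltonian cycle traced out by an enumeration, together with its starting vertex. -/
def enumToPair (hm : 2 ≤ m) {P : SimpleGraph (Fin n)} (hP : ∀ x y, P.Adj x y ↔ y = p x)
    (hp : ∀ x, p (p x) = x) (hp' : ∀ x, p x ≠ x) (e : Enum m p) :
    {H : SimpleGraph (Fin n) // IsHamCycle H ∧ P ≤ H} × Fin n :=
  (⟨altGraph p e.second, e.isHamCycle hm hp hp', fun x y h =>
    (altGraph_adj hp hp' e.second_second e.second_ne x y).2 (Or.inl ((hP x y).1 h))⟩,
    e.1 (0, false))

/-- For injectivity, `e (i, true)` is the `p`-partner of `e (i, false)`, and `e (i + 1, false)` is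
the only neighbour of `e (i, true)` other than its `p`-partner, so the cycle and `e (0, false)`
determine `e`. -/
lemma enumToPair_bijective (hm : 2 ≤ m) (hn : n = 2 * m) {P : SimpleGraph (Fin n)}
    (hP : ∀ x y, P.Adj x y ↔ y = p x) (hp : ∀ x, p (p x) = x) (hp' : ∀ x, p x ≠ x) :
    Function.Bijective (enumToPair (m := m) hm hP hp hp') := by
  have : NeZero m := ⟨by omega⟩
  constructor
  · intro e e' h
    obtain ⟨hG, h0⟩ := Prod.ext_iff.1 h
    replace hG : altGraph p e.second = altGraph p e'.second := congrArg Subtype.val hG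
    replace h0 : e.1 (0, false) = e'.1 (0, false) := h0
    have hs : ∀ x, e.second x = e'.second x := by
      intro x
      have h1 : (altGraph p e.second).Adj x (e.second x) :=
        (altGraph_adj hp hp' e.second_second e.second_ne _ _).2 (Or.inr rfl)
      rw [hG, altGraph_adj hp hp' e'.second_second e'.second_ne] at h1
      exact h1.resolve_left (e.second_ne_first hm x)
    apply Subtype.ext
    apply Equiv.ext
    apply model_induction m
    · exact h0
    · intro i hi
      have h1 := e.2 (i, false)
      rw [hi, e'.2] at h1
      exact h1.symm
    · intro i hi
      have h1 := e.second_apply (i, true)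
      rw [hi, hs, e'.second_apply] at h1
      exact h1.symm
  · rintro ⟨⟨H, ⟨hc, hd⟩, hPH⟩, v⟩
    obtain ⟨q, hq, hq', -, hH⟩ := exists_second_matching p hp H hd
      (fun x => hPH ((hP x _).2 rfl))
    obtain ⟨e, he0, hep, heq⟩ := exists_zpow_enum (p := Function.Involutive.toPerm p hp)
      (q := Function.Involutive.toPerm q hq) m hm (by simp [hn]) (Equiv.ext hp) (Equiv.ext hq)
      hp' hq' v (by
        intro S hv hSp hSq x
        obtain ⟨w⟩ := hc.preconnected v x
        induction w with
        | nil => exact hv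
        | cons h w ih =>
          apply ih
          rcases (hH _ _).1 h with rfl | rfl
          · exact hSp _ hv
          · exact hSq _ hv)
    refine ⟨⟨e, hep⟩, Prod.ext (Subtype.ext ?_) he0⟩
    have hs : Enum.second (⟨e, hep⟩ : Enum m p) = q := by
      funext x
      obtain ⟨a, rfl⟩ := e.surjective x
      exact (Enum.second_apply (⟨e, hep⟩ : Enum m p) a).trans (heq a).symm
    change altGraph p (Enum.second (⟨e, hep⟩ : Enum m p)) = H
    ext x y
    rw [hs, altGraph_adj hp hp' hq hq', hH]

end Pairs

theorem stmt_5 (n : ℕ) (hn : 4 ≤ n) (he : Even n)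
    (P : SimpleGraph (Fin n)) (hP : ∀ v, deg P v = 1) :
    Nat.card {H : SimpleGraph (Fin n) // IsHamCycle H ∧ P ≤ H} * n
      = Nat.factorial (n / 2) * 2 ^ (n / 2) := by
  have hnb : ∀ x, ∃ z, ∀ y, P.Adj x y ↔ y = z := by
    intro x
    have h1 : (P.neighborSet x).ncard = 1 := hP x
    obtain ⟨z, hz⟩ := Set.ncard_eq_one.1 h1
    exact ⟨z, fun y => by rw [← SimpleGraph.mem_neighborSet, hz]; simp⟩
  choose p hp using hnb
  have hadj : ∀ x, P.Adj x (p x) := fun x => (hp x _).2 rfl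
  have hpp : ∀ x, p (p x) = x := fun x => ((hp _ _).1 (hadj x).symm).symm
  have hp' : ∀ x, p x ≠ x := fun x => (hadj x).ne'
  have hm : n = 2 * (n / 2) := (Nat.two_mul_div_two_of_even he).symm
  have hm2 : 2 ≤ n / 2 := by omega
  rw [← card_enum (V := Fin n) (n / 2) hm2 (by simpa using hm)
      (Function.Involutive.toPerm p hpp) hpp hp']
  have h2 := Nat.card_eq_of_bijective _ (enumToPair_bijective hm2 hm hp hpp hp')
  rw [Nat.card_prod, Nat.card_fin] at h2
  exact h2.symm
end

section
/- Let n ≥ 5 be odd and let P* be a simple graph on Fin n with no isolated vertices such that exactly one connected component of P* is a path on 3 vertices (having 2 edges) and every other connected component is a single edge. Then the number of Hamiltonian cycles H on Fin n with P* ≤ H, multiplied by (n-1), equals ((n-1)/2)! · 2^((n-1)/2). -/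
/-!
Write `n = 2 k + 3` and let `a - b - c` be the path component of `P`; the other `k` components are
single edges. A Hamiltonian cycle containing `P` uses both edges at `b`, so it can be read in
exactly one way as a cyclic sequence `b, c, …, a` (`exists_cyc`, `cyc_inj`). In this sequence the
`2 k` vertices strictly between `c` and `a` are grouped into consecutive pairs that are edges of
`P` (`PathAndEdges.paired`). So the cycle amounts to an ordering of the `k` edges together with an
orientation of each of them, and conversely every such choice gives a Hamiltonian cycle containing
`P` (`PathAndEdges.le_cyc`). There are therefore `k! * 2 ^ k` such cycles (`PathAndEdges.count`),
and multiplying by `n - 1 = 2 (k + 1)` gives `(k + 1)! * 2 ^ (k + 1)`.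
-/

open SimpleGraph

/-- The number of edges of `P` lying in the connected component `c`. -/
noncomputable def compEdgeCount {n : ℕ} (P : SimpleGraph (Fin n))
    (c : P.ConnectedComponent) : ℕ :=
  Nat.card {e : Sym2 (Fin n) // e ∈ P.edgeSet ∧ ∀ v ∈ e, P.connectedComponentMk v = c}

/-! ### Hamiltonian cycles as cyclic orders -/

/-- Adjacency in the cycle graph, in terms of the underlying natural numbers. -/
lemma cyc_adj_iff {k : ℕ} (i j : Fin (2 * k + 3)) :
    (cycleGraph (2 * k + 3)).Adj i j ↔ i.val + 1 = j.val ∨ j.val + 1 = i.val ∨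
      (i.val = 0 ∧ j.val = 2 * k + 2) ∨ (j.val = 0 ∧ i.val = 2 * k + 2) := by
  have hi := i.2
  have hj := j.2
  rw [cycleGraph_adj', Fin.sub_def, Fin.sub_def]
  simp only
  have key : ∀ x y : ℕ, x < 2 * k + 3 → y < 2 * k + 3 →
      ((2 * k + 3 - y + x) % (2 * k + 3) = 1 ↔ y + 1 = x ∨ (x = 0 ∧ y = 2 * k + 2)) := by
    intro x y hx hy
    rcases lt_or_ge x y with h | h
    · rw [Nat.mod_eq_of_lt (by omega)]; omega
    · rw [show 2 * k + 3 - y + x = (x - y) + (2 * k + 3) by omega, Nat.add_mod_right,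
        Nat.mod_eq_of_lt (by omega)]
      omega
  rw [key _ _ hi hj, key _ _ hj hi]
  omega

/-- The Hamiltonian cycle visiting the vertices in the cyclic order `f 0, f 1, …, f (n - 1)`. -/
def cyc {n : ℕ} (f : Fin n ≃ Fin n) : SimpleGraph (Fin n) :=
  (cycleGraph n).map f.toEmbedding

lemma cyc_adj {n : ℕ} (f : Fin n ≃ Fin n) (i j : Fin n) :
    (cyc f).Adj (f i) (f j) ↔ (cycleGraph n).Adj i j :=
  SimpleGraph.map_adj_apply (f := f.toEmbedding)

lemma cyc_isHamCycle {k : ℕ} (f : Fin (2 * k + 3) ≃ Fin (2 * k + 3)) : IsHamCycle (cyc f) := by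
  let I : cycleGraph (2 * k + 3) ≃g cyc f := SimpleGraph.Iso.map f _
  refine ⟨I.connected_iff.1 cycleGraph_connected, fun v => ?_⟩
  obtain ⟨i, rfl⟩ := f.surjective v
  have h := Nat.card_congr (I.mapNeighborSet i)
  have h2 : deg (cyc f) (f i) = Nat.card ((cycleGraph (2 * k + 3)).neighborSet i) := h.symm
  rw [h2, Nat.card_eq_fintype_card, SimpleGraph.card_neighborSet_eq_degree]
  exact cycleGraph_degree_three_le

lemma eq_of_le_of_deg {n : ℕ} {G H : SimpleGraph (Fin n)} (hle : G ≤ H)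
    (hG : ∀ v, deg G v = 2) (hH : ∀ v, deg H v = 2) : G = H := by
  ext x y
  have : G.neighborSet x = H.neighborSet x := by
    apply Set.eq_of_subset_of_ncard_le (fun z hz => hle hz)
    have h1 := hG x
    have h2 := hH x
    unfold deg at h1 h2
    rw [Nat.card_coe_set_eq] at h1 h2
    exact (h2.trans h1.symm).le
  exact Set.ext_iff.1 this y

/-- A cyclic order with prescribed first two entries is determined by its Hamiltonian cycle: each
further vertex is the neighbour of the previous one that has not just been left. -/
lemma cyc_inj {k : ℕ} {f g : Fin (2 * k + 3) ≃ Fin (2 * k + 3)} (h : cyc f = cyc g)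
    (h0 : f ⟨0, by omega⟩ = g ⟨0, by omega⟩) (h1 : f ⟨1, by omega⟩ = g ⟨1, by omega⟩) : f = g := by
  have key : ∀ m (hm : m < 2 * k + 3), f ⟨m, hm⟩ = g ⟨m, hm⟩ := by
    intro m
    induction m using Nat.strong_induction_on with
    | _ m ih =>
      intro hm
      match m, ih, hm with
      | 0, _, _ => exact h0
      | 1, _, _ => exact h1
      | i + 2, ih, hm =>
        have ha : (cyc g).Adj (g ⟨i + 1, by omega⟩) (g ⟨i + 2, hm⟩) := by
          rw [cyc_adj, cyc_adj_iff]; left; rfl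
        obtain ⟨j, hj⟩ := f.surjective (g ⟨i + 2, hm⟩)
        rw [← h, ← ih (i + 1) (by omega) (by omega), ← hj, cyc_adj, cyc_adj_iff] at ha
        simp only at ha
        have hcase : j.val = i ∨ j.val = i + 2 := by omega
        rcases hcase with hc | hc
        · have : j = ⟨i, by omega⟩ := Fin.ext hc
          rw [this, ih i (by omega) (by omega)] at hj
          have := congrArg Fin.val (g.injective hj)
          simp at this
        · have : j = ⟨i + 2, hm⟩ := Fin.ext hc
          rw [← hj, this]
  ext1 i
  exact key i.1 i.2

/-- Every Hamiltonian cycle arises from a cyclic order starting at a vertex `b` of choice, with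
direction of travel prescribed by a neighbour `c` of `b`. -/
lemma exists_cyc {k : ℕ} {H : SimpleGraph (Fin (2 * k + 3))} (hH : IsHamCycle H)
    {b c : Fin (2 * k + 3)} (hbc : H.Adj b c) :
    ∃ f : Fin (2 * k + 3) ≃ Fin (2 * k + 3),
      f ⟨0, by omega⟩ = b ∧ f ⟨1, by omega⟩ = c ∧ H = cyc f := by
  have hcyc : H.IsCycles := by
    intro v _
    have := hH.2 v
    unfold deg at this
    rwa [Nat.card_coe_set_eq] at this
  obtain ⟨p, hp, hps⟩ := hcyc.exists_cycle_toSubgraph_verts_eq_connectedComponentSupp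
    (c := H.connectedComponentMk b) (v := b) rfl ⟨c, hbc⟩
  have hsupp : ∀ v, v ∈ p.support := by
    intro v
    rw [← Walk.mem_verts_toSubgraph, hps]
    exact ConnectedComponent.sound (hH.1.preconnected v b)
  have hlen := hp.three_le_length
  -- Reverse the walk if it leaves `b` in the wrong direction.
  obtain ⟨q, hq, hqs, hq1⟩ : ∃ q : H.Walk b b, q.IsCycle ∧ (∀ v, v ∈ q.support) ∧
      q.getVert 1 = c := by
    by_cases h1 : p.getVert 1 = c
    · exact ⟨p, hp, hsupp, h1⟩
    refine ⟨p.reverse, hp.reverse, fun v => by simpa using hsupp v, ?_⟩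
    rw [Walk.getVert_reverse]
    have e1 : H.Adj b (p.getVert 1) := by
      simpa using p.adj_getVert_succ (i := 0) (by omega)
    have e2 : H.Adj b (p.getVert (p.length - 1)) := by
      have := p.adj_getVert_succ (i := p.length - 1) (by omega)
      rw [show p.length - 1 + 1 = p.length by omega, Walk.getVert_length] at this
      exact this.symm
    have hne : p.getVert 1 ≠ p.getVert (p.length - 1) := by
      intro he
      have := hp.getVert_injOn' (by simp; omega) (by simp) he
      omega
    by_contra h2
    have h3 : ({c, p.getVert 1, p.getVert (p.length - 1)} : Set _) ⊆ H.neighborSet b := by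
      intro x hx
      rcases hx with rfl | rfl | rfl
      exacts [hbc, e1, e2]
    have h4 := Set.ncard_le_ncard h3
    rw [hcyc ⟨c, hbc⟩] at h4
    have h5 : ({c, p.getVert 1, p.getVert (p.length - 1)} : Set (Fin (2 * k + 3))).ncard = 3 :=
      Set.ncard_eq_three.2 ⟨_, _, _, Ne.symm h1, Ne.symm h2, hne, rfl⟩
    omega
  have hlen := hq.three_le_length
  have hbij : Function.Bijective (fun i : Fin q.length => q.getVert i.1) := by
    constructor
    · intro i j hij
      have hi := i.2
      have hj := j.2
      exact Fin.ext (hq.getVert_injOn' (by simp; omega) (by simp; omega) hij)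
    · intro v
      obtain ⟨i, hi, hil⟩ := Walk.mem_support_iff_exists_getVert.1 (hqs v)
      rcases hil.lt_or_eq with h | h
      · exact ⟨⟨i, h⟩, hi⟩
      · refine ⟨⟨0, by omega⟩, ?_⟩
        rw [h, Walk.getVert_length] at hi
        simp [← hi]
  have hl : q.length = 2 * k + 3 := by
    simpa using Fintype.card_of_bijective hbij
  let f : Fin (2 * k + 3) ≃ Fin (2 * k + 3) :=
    (finCongr hl.symm).trans (Equiv.ofBijective _ hbij)
  have hf : ∀ i, f i = q.getVert i.1 := fun i => rfl
  refine ⟨f, by simp [hf], by simp [hf, hq1], ?_⟩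
  symm
  refine eq_of_le_of_deg ?_ (cyc_isHamCycle f).2 hH.2
  have step : ∀ i j : Fin (2 * k + 3), i.val + 1 = j.val → H.Adj (f i) (f j) := by
    intro i j hij
    rw [hf, hf, ← hij]
    exact q.adj_getVert_succ (by omega)
  have wrap : ∀ i j : Fin (2 * k + 3), i.val = 0 → j.val = 2 * k + 2 → H.Adj (f j) (f i) := by
    intro i j hi hj
    rw [hf, hf, hi, hj, Walk.getVert_zero]
    have := q.adj_getVert_succ (i := 2 * k + 2) (by omega)
    have hend : q.getVert (2 * k + 2 + 1) = b := Walk.getVert_of_length_le q (by omega)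
    rwa [hend] at this
  intro x y hxy
  obtain ⟨i, rfl⟩ := f.surjective x
  obtain ⟨j, rfl⟩ := f.surjective y
  rw [cyc_adj, cyc_adj_iff] at hxy
  rcases hxy with h | h | ⟨h, hw⟩ | ⟨h, hw⟩
  exacts [step _ _ h, (step _ _ h).symm, (wrap _ _ h hw).symm, wrap _ _ h hw]

/-! ### The structure of `P` -/

/-- `P` is the disjoint union of the path `a - b - c` and the edges `e κ false - e κ true`
for `κ : K`. -/
structure PathAndEdges {n : ℕ} (P : SimpleGraph (Fin n)) (K : Type*) (a b c : Fin n)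
    (e : K → Bool → Fin n) : Prop where
  hba : P.Adj b a
  hbc : P.Adj b c
  hac : a ≠ c
  hb : ∀ x, P.Adj b x → x = a ∨ x = c
  ha : ∀ x, P.Adj a x → x = b
  hc : ∀ x, P.Adj c x → x = b
  he : ∀ κ t x, P.Adj (e κ t) x ↔ x = e κ (!t)
  inj : ∀ κ t κ' t', e κ t = e κ' t' → κ = κ' ∧ t = t'
  cover : ∀ x, x = a ∨ x = b ∨ x = c ∨ ∃ κ t, x = e κ t
  ea : ∀ κ t, e κ t ≠ a
  eb : ∀ κ t, e κ t ≠ b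
  ec : ∀ κ t, e κ t ≠ c

lemma adj_mem {n : ℕ} {P : SimpleGraph (Fin n)} {x y : Fin n} (h : P.Adj x y)
    {C : P.ConnectedComponent} (hx : P.connectedComponentMk x = C) :
    P.connectedComponentMk y = C := by
  rw [← hx]; exact ConnectedComponent.sound h.symm.reachable

lemma exists_adj {n : ℕ} {P : SimpleGraph (Fin n)} (hiso : ∀ v, deg P v ≠ 0) (x : Fin n) :
    ∃ y, P.Adj x y := by
  by_contra! h
  apply hiso x
  unfold deg
  have : IsEmpty (P.neighborSet x) := ⟨fun y => h y.1 y.2⟩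
  simp

/-- A component with three vertices and two edges, in a graph without isolated vertices, is a path. -/
lemma exists_path {n : ℕ} {P : SimpleGraph (Fin n)} (hiso : ∀ v, deg P v ≠ 0)
    {C : P.ConnectedComponent} (h3 : Nat.card C.supp = 3) (h2 : compEdgeCount P C = 2) :
    ∃ a b c, P.Adj b a ∧ P.Adj b c ∧ a ≠ c ∧ ¬ P.Adj a c ∧
      ∀ x, P.connectedComponentMk x = C ↔ x = a ∨ x = b ∨ x = c := by
  rw [Nat.card_coe_set_eq, Set.ncard_eq_three] at h3
  obtain ⟨x, y, z, hxy, hxz, hyz, hs⟩ := h3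
  have hmem : ∀ w, P.connectedComponentMk w = C ↔ w = x ∨ w = y ∨ w = z := by
    intro w
    have := Set.ext_iff.1 hs w
    simpa using this
  have hnot : ¬ (P.Adj x y ∧ P.Adj x z ∧ P.Adj y z) := by
    rintro ⟨h1, h2', h3⟩
    have hsub : ({s(x, y), s(x, z), s(y, z)} : Set (Sym2 (Fin n))) ⊆
        {e | e ∈ P.edgeSet ∧ ∀ v ∈ e, P.connectedComponentMk v = C} := by
      rintro e (rfl | rfl | rfl)
      · exact ⟨h1, by intro v hv; rw [hmem]; rw [Sym2.mem_iff] at hv; tauto⟩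
      · exact ⟨h2', by intro v hv; rw [hmem]; rw [Sym2.mem_iff] at hv; tauto⟩
      · exact ⟨h3, by intro v hv; rw [hmem]; rw [Sym2.mem_iff] at hv; tauto⟩
    have h4 := Set.ncard_le_ncard hsub
    have h5 : ({s(x, y), s(x, z), s(y, z)} : Set (Sym2 (Fin n))).ncard = 3 := by
      refine Set.ncard_eq_three.2 ⟨_, _, _, ?_, ?_, ?_, rfl⟩ <;>
        simp only [ne_eq, Sym2.eq_iff] <;> grind
    have h6 : Set.ncard {e | e ∈ P.edgeSet ∧ ∀ v ∈ e, P.connectedComponentMk v = C} = 2 := by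
      rw [← h2, compEdgeCount, ← Nat.card_coe_set_eq]; rfl
    omega
  have nb : ∀ w, P.connectedComponentMk w = C → ∃ u, P.Adj w u ∧ (u = x ∨ u = y ∨ u = z) := by
    intro w hw
    obtain ⟨u, hu⟩ := exists_adj hiso w
    exact ⟨u, hu, (hmem u).1 (adj_mem hu hw)⟩
  obtain ⟨u, hu, hu'⟩ := nb x (by simp [hmem])
  obtain ⟨v, hv, hv'⟩ := nb y (by simp [hmem])
  obtain ⟨w, hw, hw'⟩ := nb z (by simp [hmem])
  have i1 : ∀ v, ¬ P.Adj v v := fun v => P.loopless.irrefl v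
  have hcase : (P.Adj x y ∧ P.Adj x z ∧ ¬ P.Adj y z) ∨ (P.Adj y x ∧ P.Adj y z ∧ ¬ P.Adj x z) ∨
      (P.Adj z x ∧ P.Adj z y ∧ ¬ P.Adj x y) := by
    have d1 : P.Adj x y ∨ P.Adj x z := by
      rcases hu' with rfl | rfl | rfl
      exacts [absurd hu (i1 _), Or.inl hu, Or.inr hu]
    have d2 : P.Adj y x ∨ P.Adj y z := by
      rcases hv' with rfl | rfl | rfl
      exacts [Or.inl hv, absurd hv (i1 _), Or.inr hv]
    have d3 : P.Adj z x ∨ P.Adj z y := by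
      rcases hw' with rfl | rfl | rfl
      exacts [Or.inl hw, Or.inr hw, absurd hw (i1 _)]
    by_cases p1 : P.Adj y z
    · by_cases p2 : P.Adj x z
      · exact Or.inr (Or.inr ⟨p2.symm, p1.symm, fun h => hnot ⟨h, p2, p1⟩⟩)
      · exact Or.inr (Or.inl ⟨(d1.resolve_right p2).symm, p1, p2⟩)
    · exact Or.inl ⟨(d2.resolve_right p1).symm,
        (d3.resolve_right fun h => p1 h.symm).symm, p1⟩
  rcases hcase with ⟨h, h', h''⟩ | ⟨h, h', h''⟩ | ⟨h, h', h''⟩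
  · exact ⟨y, x, z, h, h', hyz, h'', fun w => (hmem w).trans or_left_comm⟩
  · exact ⟨x, y, z, h, h', hxz, h'', hmem⟩
  · exact ⟨x, z, y, h, h', hxy, h'', fun w => (hmem w).trans (or_congr_right or_comm)⟩

lemma exists_pathAndEdges {n : ℕ} {P : SimpleGraph (Fin n)} (hiso : ∀ v, deg P v ≠ 0)
    {C : P.ConnectedComponent} (h3 : Nat.card C.supp = 3) (h2 : compEdgeCount P C = 2)
    (hC : ∀ D : P.ConnectedComponent, D ≠ C → Nat.card D.supp = 2) :
    ∃ a b c e, PathAndEdges P {D : P.ConnectedComponent // D ≠ C} a b c e := by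
  obtain ⟨a, b, c, hba, hbc, hac, hnac, hmem⟩ := exists_path hiso h3 h2
  have hpair : ∀ D : {D : P.ConnectedComponent // D ≠ C}, ∃ e : Bool → Fin n,
      e true ≠ e false ∧
      ∀ x, P.connectedComponentMk x = D.1 ↔ x = e true ∨ x = e false := by
    intro D
    have := hC D.1 D.2
    rw [Nat.card_coe_set_eq, Set.ncard_eq_two] at this
    obtain ⟨u, v, huv, hs⟩ := this
    refine ⟨fun t => if t then u else v, by simpa using huv, fun x => ?_⟩
    have := Set.ext_iff.1 hs x
    simpa using this
  choose e hne he using hpair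
  have hin : ∀ D t, P.connectedComponentMk (e D t) = D.1 := by
    intro D t; rw [he]; cases t <;> simp
  have hout : ∀ D t x, x = a ∨ x = b ∨ x = c → e D t ≠ x := by
    intro D t x hx h
    rw [← h, ← hmem, hin] at hx
    exact D.2 hx
  have hcomp : ∀ x y, P.Adj x y → (x = a ∨ x = b ∨ x = c) → (y = a ∨ y = b ∨ y = c) :=
    fun x y h hx => (hmem y).1 (adj_mem h ((hmem x).2 hx))
  have edge : ∀ D t x, P.Adj (e D t) x → x = e D (!t) := by
    intro D t x hx
    have h1 := (he D x).1 (adj_mem hx (hin D t))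
    have h2 := hx.ne
    cases t <;> simp <;> grind
  refine ⟨a, b, c, e, hba, hbc, hac, ?_, ?_, ?_, ?_, ?_, ?_, ?_, ?_, ?_⟩
  · intro x hx
    have := hcomp _ _ hx (by simp)
    have := hx.ne
    grind
  · intro x hx
    have := hcomp _ _ hx (by simp)
    have := hx.ne
    grind
  · intro x hx
    have := hcomp _ _ hx (by simp)
    have := hx.ne
    have := hx.symm
    grind
  · intro D t x
    refine ⟨edge D t x, ?_⟩
    rintro rfl
    obtain ⟨y, hy⟩ := exists_adj hiso (e D t)
    rwa [← edge D t y hy]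
  · intro D t D' t' h
    have h1 : D = D' := Subtype.ext (by rw [← hin D t, h, hin])
    subst h1
    refine ⟨rfl, ?_⟩
    have := hne D
    cases t <;> cases t' <;> simp_all
  · intro x
    by_cases h : P.connectedComponentMk x = C
    · have := (hmem x).1 h; tauto
    · have := (he ⟨_, h⟩ x).1 rfl
      right; right; right
      rcases this with h | h
      exacts [⟨_, _, h⟩, ⟨_, _, h⟩]
  · exact fun D t => hout D t a (by simp)
  · exact fun D t => hout D t b (by simp)
  · exact fun D t => hout D t c (by simp)

/-! ### Counting the Hamiltonian cycles containing `P` -/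

section Count

variable {k : ℕ} {P : SimpleGraph (Fin (2 * k + 3))} {K : Type*}
  {a b c : Fin (2 * k + 3)} {e : K → Bool → Fin (2 * k + 3)}

lemma PathAndEdges.card (h : PathAndEdges P K a b c e) : Nat.card K = k := by
  have hbij : Function.Bijective
      (Sum.elim ![a, b, c] (fun q : K × Bool => e q.1 q.2) : Fin 3 ⊕ K × Bool → _) := by
    have h1 := h.hba.ne
    have h2 := h.hbc.ne
    have h3 := h.hac
    have h4 := h.ea
    have h5 := h.eb
    have h6 := h.ec
    constructor
    · rintro (i | ⟨κ, t⟩) (j | ⟨κ', t'⟩) hij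
      · fin_cases i <;> fin_cases j <;> simp_all
      · fin_cases i
        exacts [absurd hij.symm (h4 _ _), absurd hij.symm (h5 _ _), absurd hij.symm (h6 _ _)]
      · fin_cases j
        exacts [absurd hij (h4 _ _), absurd hij (h5 _ _), absurd hij (h6 _ _)]
      · have := h.inj _ _ _ _ hij
        exact congrArg Sum.inr (Prod.ext this.1 this.2)
    · intro x
      rcases h.cover x with rfl | rfl | rfl | ⟨κ, t, rfl⟩
      · exact ⟨Sum.inl 0, rfl⟩
      · exact ⟨Sum.inl 1, rfl⟩
      · exact ⟨Sum.inl 2, rfl⟩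
      · exact ⟨Sum.inr (κ, t), rfl⟩
  have hfin : Finite (Fin 3 ⊕ K × Bool) := Finite.of_injective _ hbij.1
  have hfin2 : Finite (K × Bool) := Finite.of_injective _ (Sum.inr_injective (α := Fin 3))
  have hfin3 : Finite K := Finite.of_injective (fun κ => (κ, true)) (fun x y hxy => by simpa using hxy)
  have := Nat.card_eq_of_bijective _ hbij
  rw [Nat.card_sum, Nat.card_prod] at this
  simp at this
  omega

/-- The vertex sequence `b, c, …, a` that runs through the edges of `P` outside the path in the
order given by `π`, the `i`-th edge being entered at its end `ε i`. -/
def lab (a b c : Fin (2 * k + 3)) (e : K → Bool → Fin (2 * k + 3)) (π : Fin k ≃ K)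
    (ε : Fin k → Bool) (j : Fin (2 * k + 3)) : Fin (2 * k + 3) :=
  if h0 : j.val = 0 then b else if h1 : j.val = 1 then c else if h2 : j.val = 2 * k + 2 then a
  else e (π ⟨(j.val - 2) / 2, by omega⟩)
    (xor (ε ⟨(j.val - 2) / 2, by omega⟩) (decide (j.val % 2 = 1)))

variable (π : Fin k ≃ K) (ε : Fin k → Bool)

lemma lab_zero : lab a b c e π ε ⟨0, by omega⟩ = b := by simp [lab]

lemma lab_one : lab a b c e π ε ⟨1, by omega⟩ = c := by simp [lab]

lemma lab_last : lab a b c e π ε ⟨2 * k + 2, by omega⟩ = a := by simp [lab]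

lemma lab_even (i : Fin k) : lab a b c e π ε ⟨2 * i + 2, by omega⟩ = e (π i) (ε i) := by
  have := i.2
  rw [lab, dif_neg (by simp), dif_neg (by simp), dif_neg (by simp; omega)]
  simp

lemma lab_odd (i : Fin k) : lab a b c e π ε ⟨2 * i + 3, by omega⟩ = e (π i) (!(ε i)) := by
  have := i.2
  rw [lab, dif_neg (by simp), dif_neg (by simp), dif_neg (by simp; omega)]
  have h1 : (2 * i.val + 3 - 2) / 2 = i.val := by omega
  have h2 : (2 * i.val + 3) % 2 = 1 := by omega
  simp only [h1, h2]
  simp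

lemma index_cases (j : Fin (2 * k + 3)) : j = ⟨0, by omega⟩ ∨ j = ⟨1, by omega⟩ ∨
    j = ⟨2 * k + 2, by omega⟩ ∨ ∃ i : Fin k, j = ⟨2 * i + 2, by omega⟩ ∨ j = ⟨2 * i + 3, by omega⟩ := by
  have hj := j.2
  by_cases h0 : j.val = 0
  · left; exact Fin.ext h0
  by_cases h1 : j.val = 1
  · right; left; exact Fin.ext h1
  by_cases h2 : j.val = 2 * k + 2
  · right; right; left; exact Fin.ext h2
  right; right; right
  refine ⟨⟨(j.val - 2) / 2, by omega⟩, ?_⟩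
  simp only [Fin.ext_iff]
  omega

lemma PathAndEdges.lab_surjective (h : PathAndEdges P K a b c e) :
    Function.Surjective (lab a b c e π ε) := by
  intro x
  rcases h.cover x with rfl | rfl | rfl | ⟨κ, t, rfl⟩
  · exact ⟨_, lab_last π ε⟩
  · exact ⟨_, lab_zero π ε⟩
  · exact ⟨_, lab_one π ε⟩
  · obtain ⟨i, rfl⟩ := π.surjective κ
    by_cases ht : t = ε i
    · exact ⟨_, ht ▸ lab_even π ε i⟩
    · refine ⟨_, (lab_odd π ε i).trans ?_⟩
      congr 1
      cases t <;> simp_all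

/-- `lab` as a cyclic order of all vertices. -/
noncomputable def PathAndEdges.labEquiv (h : PathAndEdges P K a b c e) :
    Fin (2 * k + 3) ≃ Fin (2 * k + 3) :=
  Equiv.ofBijective (lab a b c e π ε) (Finite.injective_iff_bijective.1
    (Finite.injective_iff_surjective.2 (h.lab_surjective π ε)))

lemma PathAndEdges.labEquiv_apply (h : PathAndEdges P K a b c e) (j) :
    h.labEquiv π ε j = lab a b c e π ε j := rfl

lemma PathAndEdges.le_cyc (h : PathAndEdges P K a b c e) : P ≤ cyc (h.labEquiv π ε) := by
  have hF := h.labEquiv_apply π ε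
  have e0 := lab_zero (a := a) (b := b) (c := c) (e := e) π ε
  have e1 := lab_one (a := a) (b := b) (c := c) (e := e) π ε
  have el := lab_last (a := a) (b := b) (c := c) (e := e) π ε
  have ee := lab_even (a := a) (b := b) (c := c) (e := e) π ε
  have eo := lab_odd (a := a) (b := b) (c := c) (e := e) π ε
  rw [← hF] at e0 e1 el
  simp only [← hF] at ee eo
  have hba : (cyc (h.labEquiv π ε)).Adj b a := by
    have : (cyc (h.labEquiv π ε)).Adj (h.labEquiv π ε ⟨0, by omega⟩)
      (h.labEquiv π ε ⟨2 * k + 2, by omega⟩) := by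
      rw [cyc_adj, cyc_adj_iff]; simp
    rwa [e0, el] at this
  have hbc : (cyc (h.labEquiv π ε)).Adj b c := by
    have : (cyc (h.labEquiv π ε)).Adj (h.labEquiv π ε ⟨0, by omega⟩)
      (h.labEquiv π ε ⟨1, by omega⟩) := by
      rw [cyc_adj, cyc_adj_iff]; simp
    rwa [e0, e1] at this
  have hee : ∀ i : Fin k, (cyc (h.labEquiv π ε)).Adj (e (π i) (ε i)) (e (π i) (!ε i)) := by
    intro i
    rw [← ee, ← eo, cyc_adj, cyc_adj_iff]; left; rfl
  intro x y hxy
  rcases h.cover x with rfl | rfl | rfl | ⟨κ, t, rfl⟩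
  · rw [h.ha _ hxy]; exact hba.symm
  · rcases h.hb _ hxy with rfl | rfl
    exacts [hba, hbc]
  · rw [h.hc _ hxy]; exact hbc.symm
  · rw [(h.he _ _ _).1 hxy]
    obtain ⟨i, rfl⟩ := π.surjective κ
    have := hee i
    by_cases ht : t = ε i
    · rw [ht]; exact this
    · have ht' : t = !(ε i) := by cases t <;> simp_all
      rw [ht', Bool.not_not]; exact this.symm

/-- Along a Hamiltonian cycle containing `P`, read as `b, c, …`, the entries `2 i + 2` and
`2 i + 3` form an edge of `P`: the `P`-partner of entry `2 i + 2` is one of its two neighbours on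
the cycle, and the preceding entry already has all its `P`-neighbours before it. -/
lemma PathAndEdges.paired (h : PathAndEdges P K a b c e) (f : Fin (2 * k + 3) ≃ Fin (2 * k + 3))
    (h0 : f ⟨0, by omega⟩ = b) (h1 : f ⟨1, by omega⟩ = c) (hl : f ⟨2 * k + 2, by omega⟩ = a)
    (hP : P ≤ cyc f) (i : ℕ) (hi : i < k) :
    ∃ κ t, f ⟨2 * i + 2, by omega⟩ = e κ t ∧ f ⟨2 * i + 3, by omega⟩ = e κ (!t) := by
  have fne : ∀ x y, f x = f y → x.val = y.val := fun x y hxy => congrArg Fin.val (f.injective hxy)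
  induction i using Nat.strong_induction_on with
  | _ i ih =>
    rcases h.cover (f ⟨2 * i + 2, by omega⟩) with hx | hx | hx | ⟨κ, t, hx⟩
    · rw [← hl] at hx; have := fne _ _ hx; simp only at this; omega
    · rw [← h0] at hx; have := fne _ _ hx; simp only at this; omega
    · rw [← h1] at hx; have := fne _ _ hx; simp only at this; omega
    refine ⟨κ, t, hx, ?_⟩
    have hadj : P.Adj (f ⟨2 * i + 2, by omega⟩) (e κ (!t)) := by rw [hx, h.he]
    obtain ⟨j, hj⟩ := f.surjective (e κ (!t))
    have h2 := hP hadj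
    rw [← hj, cyc_adj, cyc_adj_iff] at h2
    simp only at h2
    have hcase : j.val = 2 * i + 3 ∨ j.val = 2 * i + 1 := by omega
    rcases hcase with hc | hc
    · rw [← hj]; congr 1; exact Fin.ext hc.symm
    exfalso
    rcases Nat.eq_zero_or_pos i with rfl | hpos
    · have : j = ⟨1, by omega⟩ := Fin.ext (by simpa using hc)
      rw [this, h1] at hj
      exact h.ec _ _ hj.symm
    · obtain ⟨κ', t', hx', hy'⟩ := ih (i - 1) (by omega) (by omega)
      have : j = ⟨2 * (i - 1) + 3, by omega⟩ := Fin.ext (by simp only; omega)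
      rw [this, hy'] at hj
      obtain ⟨rfl, ht⟩ := h.inj _ _ _ _ hj
      rw [Bool.not_inj ht, ← hx] at hx'
      have := fne _ _ hx'
      simp only at this
      omega

/-- Every Hamiltonian cycle containing `P` comes from an ordering and an orientation of the edges
of `P` outside the path. -/
lemma PathAndEdges.exists_lab (h : PathAndEdges P K a b c e) {H : SimpleGraph (Fin (2 * k + 3))}
    (hH : IsHamCycle H) (hP : P ≤ H) :
    ∃ (π : Fin k ≃ K) (ε : Fin k → Bool), H = cyc (h.labEquiv π ε) := by
  obtain ⟨f, h0, h1, rfl⟩ := exists_cyc hH (hP h.hbc)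
  have hl : f ⟨2 * k + 2, by omega⟩ = a := by
    obtain ⟨j, hj⟩ := f.surjective a
    have hba := hP h.hba
    rw [← h0, ← hj, cyc_adj, cyc_adj_iff] at hba
    simp only at hba
    have hcase : j.val = 1 ∨ j.val = 2 * k + 2 := by omega
    rcases hcase with hc | hc
    · have : j = ⟨1, by omega⟩ := Fin.ext hc
      rw [this, h1] at hj
      exact absurd hj.symm h.hac
    · rw [← hj]; congr 1; exact Fin.ext hc.symm
  choose π ε he ho using fun i : Fin k => h.paired f h0 h1 hl hP i.1 i.2
  have hinj : Function.Injective π := by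
    intro i j hij
    have hei := he i
    by_cases ht : ε i = ε j
    · rw [hij, ht, ← he j] at hei
      have := congrArg Fin.val (f.injective hei)
      simp only at this
      exact Fin.ext (by omega)
    · have ht' : ε i = !(ε j) := by
        cases h1 : ε i <;> cases h2 : ε j <;> simp_all
      rw [hij, ht', ← ho j] at hei
      have := congrArg Fin.val (f.injective hei)
      simp only at this
      omega
  have hbij : Function.Bijective π := by
    rcases Nat.eq_zero_or_pos k with rfl | hk
    · refine ⟨hinj, fun κ => ?_⟩
      exfalso
      -- Three vertices are already used up by the path.
      have h1 := h.hba.ne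
      have h2 := h.hbc.ne
      have h3 := h.hac
      have h4 := h.ea κ true
      have h5 := h.eb κ true
      have h6 := h.ec κ true
      omega
    · have : Finite K := Nat.finite_of_card_ne_zero (by rw [h.card]; omega)
      exact (Nat.bijective_iff_injective_and_card π).2 ⟨hinj, by rw [h.card]; simp⟩
  refine ⟨Equiv.ofBijective π hbij, ε, ?_⟩
  congr 1
  ext1 j
  rw [h.labEquiv_apply]
  rcases index_cases j with rfl | rfl | rfl | ⟨i, rfl | rfl⟩
  · rw [h0, lab_zero]
  · rw [h1, lab_one]
  · rw [hl, lab_last]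
  · rw [he, lab_even]; rfl
  · rw [ho, lab_odd]; rfl

lemma PathAndEdges.count (h : PathAndEdges P K a b c e) :
    Nat.card {H : SimpleGraph (Fin (2 * k + 3)) // IsHamCycle H ∧ P ≤ H}
      = k.factorial * 2 ^ k := by
  let Γ : (Fin k ≃ K) × (Fin k → Bool) →
      {H : SimpleGraph (Fin (2 * k + 3)) // IsHamCycle H ∧ P ≤ H} := fun q =>
    ⟨cyc (h.labEquiv q.1 q.2), cyc_isHamCycle _, h.le_cyc _ _⟩
  have hbij : Function.Bijective Γ := by
    constructor
    · rintro ⟨π, ε⟩ ⟨π', ε'⟩ hq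
      have h1 : cyc (h.labEquiv π ε) = cyc (h.labEquiv π' ε') := congrArg Subtype.val hq
      have h2 := cyc_inj h1 (by rw [h.labEquiv_apply, h.labEquiv_apply, lab_zero, lab_zero])
        (by rw [h.labEquiv_apply, h.labEquiv_apply, lab_one, lab_one])
      have h3 : ∀ i : Fin k, π i = π' i ∧ ε i = ε' i := by
        intro i
        have := congrArg (fun f => f ⟨2 * i + 2, by omega⟩) h2
        simp only [h.labEquiv_apply, lab_even] at this
        exact h.inj _ _ _ _ this
      exact Prod.ext (Equiv.ext fun i => (h3 i).1) (funext fun i => (h3 i).2)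
    · rintro ⟨H, hH, hP⟩
      obtain ⟨π, ε, rfl⟩ := h.exists_lab hH hP
      exact ⟨(π, ε), rfl⟩
  rw [← Nat.card_eq_of_bijective _ hbij, Nat.card_prod]
  have hK : Nonempty (K ≃ Fin k) := by
    rcases Nat.eq_zero_or_pos k with rfl | hk
    · have : IsEmpty K := ⟨fun κ => by
        have h1 := h.hba.ne
        have h2 := h.hbc.ne
        have h3 := h.hac
        have h4 := h.ea κ true
        have h5 := h.eb κ true
        have h6 := h.ec κ true
        omega⟩
      exact ⟨Equiv.equivOfIsEmpty _ _⟩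
    · have : Finite K := Nat.finite_of_card_ne_zero (by rw [h.card]; omega)
      exact ⟨Finite.equivFinOfCardEq h.card⟩
  obtain ⟨E⟩ := hK
  rw [Nat.card_congr (Equiv.equivCongr (Equiv.refl (Fin k)) E), Nat.card_eq_fintype_card,
    Nat.card_eq_fintype_card, Fintype.card_perm]
  simp

end Count

theorem stmt_6 (n : ℕ) (hn : 5 ≤ n) (ho : Odd n) (P : SimpleGraph (Fin n))
    (hiso : ∀ v, deg P v ≠ 0)
    (hstruct : ∃ c₀ : P.ConnectedComponent,
      (Nat.card c₀.supp = 3 ∧ compEdgeCount P c₀ = 2) ∧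
      ∀ c : P.ConnectedComponent, c ≠ c₀ → Nat.card c.supp = 2) :
    Nat.card {H : SimpleGraph (Fin n) // IsHamCycle H ∧ P ≤ H} * (n - 1)
      = Nat.factorial ((n - 1) / 2) * 2 ^ ((n - 1) / 2) := by
  obtain ⟨m, hm⟩ := ho
  obtain ⟨k, rfl⟩ : ∃ k, n = 2 * k + 3 := ⟨m - 1, by omega⟩
  obtain ⟨C, ⟨h3, h2⟩, hC⟩ := hstruct
  obtain ⟨a, b, c, e, h⟩ := exists_pathAndEdges hiso h3 h2 hC
  rw [h.count, show (2 * k + 3 - 1) / 2 = k + 1 by omega,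
    show 2 * k + 3 - 1 = 2 * (k + 1) by omega, Nat.factorial_succ, pow_succ]
  ring
end

section
/- Let n be even, let 𝒢 be a degree-doubling family of Hamiltonian cycles on Fin n, and let P be a perfect matching on Fin n. Then at most one member H of 𝒢 satisfies P ≤ H. -/
/-! Two members containing the same perfect matching `P` share, at every vertex `v`, the `P`-neighbour
of `v`. So the two 2-element neighbourhoods of `v` intersect, and `v` has degree at most 3 in the union;
a degree-doubling family therefore cannot contain two distinct such members. -/

open SimpleGraph

theorem stmt_7 (n : ℕ) (he : Even n) (𝒢 : Finset (SimpleGraph (Fin n)))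
    (hham : ∀ G ∈ 𝒢, IsHamCycle G) (hdd : DegreeDoubling 𝒢)
    (P : SimpleGraph (Fin n)) (hP : ∀ v, deg P v = 1) :
    ∀ H₁ ∈ 𝒢, ∀ H₂ ∈ 𝒢, P ≤ H₁ → P ≤ H₂ → H₁ = H₂ := by
  intro H₁ h₁ H₂ h₂ hP₁ hP₂
  by_contra hne
  obtain ⟨v, hv⟩ := hdd H₁ h₁ H₂ h₂ hne
  have d₁ : (H₁.neighborSet v).ncard = 2 := (hham H₁ h₁).2 v
  have d₂ : (H₂.neighborSet v).ncard = 2 := (hham H₂ h₂).2 v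
  have hPv : (P.neighborSet v).ncard = 1 := hP v
  have hunion : (H₁.neighborSet v ∪ H₂.neighborSet v).ncard = 4 := hv
  have hsub : P.neighborSet v ⊆ H₁.neighborSet v ∩ H₂.neighborSet v :=
    fun _ hw => ⟨hP₁ hw, hP₂ hw⟩
  have hinter := Set.ncard_le_ncard hsub (Set.toFinite _)
  have hcount := Set.ncard_union_add_ncard_inter (H₁.neighborSet v) (H₂.neighborSet v)
    (Set.toFinite _) (Set.toFinite _)
  omega
end

section
/- Let n ≥ 3 and let H be a Hamiltonian cycle on Fin n. Then the number of Hamiltonian cycles C on Fin n such that every vertex of Fin n is incident to at least one common edge of C and H (i.e., C ⊓ H has no isolated vertex) is at most (as real numbers) (1+√2)^n · ⌊n/2⌋!. -/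
/-!
Write `F = C ⊓ H`. Every vertex has degree `2` in both `C` and `H` and degree `1` or `2` in `F`, so
`C \ H` and `H \ C` have equal degrees, all at most `1`: they are matchings `N` and `M` covering the
same set of vertices. Since `M ≤ H` and `C = (H \ M) ⊔ N`, the number of cycles `C` is at most the
number of pairs `(M, N)` with `M` a matching in `H` and `N` a matching covering the same `2k`
vertices as `M`.

For fixed `M` there are `(2k - 1)!! ≤ 2 ^ k * k!` choices of `N`
(`card_involutions_le`), and `k! ≤ ⌊n/2⌋!`. It remains to bound the sum of `2 ^ |M|` over the
matchings `M` of `H`. Let `Z W` be this sum over the matchings inside a set `W` of vertices.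
Deciding how a vertex `v ∈ W` is matched gives `Z W ≤ Z (W \ v) + ∑ 2 * Z (W \ {v, u})`, over the
neighbours `u ∈ W` of `v` (`Z_le`). If `W` is a proper nonempty subset, connectedness of `H` gives
some `v ∈ W` with a neighbour outside `W`, hence with at most one neighbour in `W`, and
`Z W ≤ 2 ^ |W|` follows by induction (`Z_le_two_pow`). On the whole vertex set this yields
`Z ≤ 2 ^ (n - 1) + 4 * 2 ^ (n - 2) = (3 / 2) * 2 ^ n`, which is at most `(1 + √2) ^ n` when `3 ≤ n`.
-/

open SimpleGraph

section

open Equiv Finset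

/-! ### Matchings as involutions -/

open scoped Classical in
/-- The involutions whose set of moved points is exactly `S`; they encode the perfect matchings of
the complete graph on `S`. -/
noncomputable def involutions {n : ℕ} (S : Finset (Fin n)) : Finset (Perm (Fin n)) :=
  univ.filter fun σ => (∀ x, σ (σ x) = x) ∧ σ.support = S

open scoped Classical in
/-- The matchings of `H` with all edges inside `W`, encoded as the involutions that exchange the two
ends of every edge of the matching and fix the uncovered vertices. -/
noncomputable def matchings {n : ℕ} (H : SimpleGraph (Fin n)) (W : Finset (Fin n)) :
    Finset (Perm (Fin n)) :=
  univ.filter fun σ => (∀ x, σ (σ x) = x) ∧ ∀ x, σ x ≠ x → x ∈ W ∧ H.Adj x (σ x)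

/-- The sum of `2 ^ |M|` over the matchings `M` of `H` inside `W`; a matching `M` moves `2 * |M|`
vertices. -/
noncomputable def Z {n : ℕ} (H : SimpleGraph (Fin n)) (W : Finset (Fin n)) : ℕ :=
  ∑ σ ∈ matchings H W, 2 ^ (σ.support.card / 2)

/-- Composing an involution with the transposition of `v` and its partner deletes that pair from the
corresponding matching. -/
lemma mul_swap_apply {n : ℕ} {σ : Perm (Fin n)} (hσ : ∀ x, σ (σ x) = x) (v x : Fin n) :
    (σ * swap v (σ v)) x = if x = v ∨ x = σ v then x else σ x := by
  rw [Perm.mul_apply, swap_apply_def]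
  split_ifs <;> simp_all

lemma mul_swap_invol {n : ℕ} {σ : Perm (Fin n)} (hσ : ∀ x, σ (σ x) = x) (v x : Fin n) :
    (σ * swap v (σ v)) ((σ * swap v (σ v)) x) = x := by
  rw [mul_swap_apply hσ v x]
  split_ifs with h
  · rw [mul_swap_apply hσ, if_pos h]
  · rw [mul_swap_apply hσ, if_neg, hσ]
    rintro (h1 | h1)
    · exact h (Or.inr (by rw [← h1, hσ]))
    · exact h (Or.inl (σ.injective h1))

lemma mul_swap_support {n : ℕ} {σ : Perm (Fin n)} (hσ : ∀ x, σ (σ x) = x) (v : Fin n) :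
    (σ * swap v (σ v)).support = (σ.support.erase v).erase (σ v) := by
  ext x
  rw [Perm.mem_support, mul_swap_apply hσ v x]
  simp only [mem_erase, Perm.mem_support]
  split_ifs with h <;> grind

/-! ### Counting perfect matchings -/

lemma card_involutions_le {n : ℕ} (S : Finset (Fin n)) :
    (involutions S).card ≤ 2 ^ (S.card / 2) * (S.card / 2).factorial := by
  classical
  induction hs : S.card using Nat.strong_induction_on generalizing S with
  | _ s ih =>
  rcases S.eq_empty_or_nonempty with rfl | ⟨v, hv⟩
  · obtain rfl : s = 0 := by simpa using hs.symm
    refine Finset.card_le_one.2 fun a ha b hb => ?_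
    simp only [involutions, mem_filter, Perm.support_eq_empty_iff] at ha hb
    rw [ha.2.2, hb.2.2]
  · have hmaps : ∀ σ ∈ involutions S, σ v ∈ S.erase v := by
      intro σ hσ
      simp only [involutions, mem_filter, mem_univ, true_and] at hσ
      obtain ⟨h1, rfl⟩ := hσ
      simpa [mem_erase] using hv
    rw [Finset.card_eq_sum_card_fiberwise hmaps]
    have hfib : ∀ u ∈ S.erase v, ((involutions S).filter fun σ => σ v = u).card ≤
        2 ^ ((s - 2) / 2) * ((s - 2) / 2).factorial := by
      intro u hu
      have hc : ((S.erase v).erase u).card = s - 2 := by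
        rw [card_erase_of_mem hu, card_erase_of_mem hv, hs]; rfl
      have hpos : 0 < s := hs ▸ card_pos.2 ⟨v, hv⟩
      refine le_trans ?_ (ih (s - 2) (by omega) _ hc)
      refine card_le_card_of_injOn (fun σ => σ * swap v u) ?_ ?_
      · intro σ hσ
        simp only [involutions, coe_filter, mem_filter, mem_univ, true_and, Set.mem_ofPred_eq] at hσ ⊢
        obtain ⟨⟨h1, rfl⟩, rfl⟩ := hσ
        exact ⟨mul_swap_invol h1 v, mul_swap_support h1 v⟩
      · intro a _ b _ h
        exact mul_right_cancel h
    refine (sum_le_card_nsmul _ _ _ hfib).trans ?_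
    rw [card_erase_of_mem hv, hs, smul_eq_mul]
    rcases Nat.lt_or_ge s 2 with h2 | h2
    · have : s - 1 = 0 := by omega
      simp [this]
    · obtain ⟨t, rfl⟩ := Nat.exists_eq_add_of_le' h2
      have e : (t + 2) / 2 = t / 2 + 1 := by omega
      rw [e, Nat.add_sub_cancel, pow_succ, Nat.factorial_succ]
      have : t + 2 - 1 ≤ 2 * (t / 2 + 1) := by omega
      calc (t + 2 - 1) * (2 ^ (t / 2) * (t / 2).factorial)
          ≤ (2 * (t / 2 + 1)) * (2 ^ (t / 2) * (t / 2).factorial) := Nat.mul_le_mul_right _ this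
        _ = _ := by ring

/-! ### The weighted sum over the matchings of a cycle -/

open scoped Classical in
lemma Z_le {n : ℕ} (H : SimpleGraph (Fin n)) (W : Finset (Fin n)) {v : Fin n} (hv : v ∈ W) :
    Z H W ≤ Z H (W.erase v) +
      ∑ u ∈ W.filter (H.Adj v), 2 * Z H ((W.erase v).erase u) := by
  have hnot : v ∉ W.filter (H.Adj v) := by simp
  have hmaps : ∀ σ ∈ matchings H W, σ v ∈ insert v (W.filter (H.Adj v)) := by
    intro σ hσ
    simp only [matchings, mem_filter, mem_univ, true_and] at hσ
    rw [mem_insert, mem_filter]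
    by_cases h : σ v = v
    · exact Or.inl h
    · refine Or.inr ⟨(hσ.2 (σ v) ?_).1, (hσ.2 v h).2⟩
      exact fun h' => h (σ.injective h')
  rw [Z, ← sum_fiberwise_of_maps_to hmaps, sum_insert hnot]
  refine add_le_add ?_ (sum_le_sum fun u hu => ?_)
  · refine sum_le_sum_of_subset fun σ hσ => ?_
    simp only [matchings, mem_filter, mem_univ, true_and] at hσ ⊢
    refine ⟨hσ.1.1, fun x hx => ⟨mem_erase.2 ⟨?_, (hσ.1.2 x hx).1⟩, (hσ.1.2 x hx).2⟩⟩
    rintro rfl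
    exact hx hσ.2
  · have huv : u ≠ v := by rintro rfl; exact hnot hu
    have hinj : Set.InjOn (fun σ : Perm (Fin n) => σ * swap v u)
        ((matchings H W).filter fun σ => σ v = u : Finset _) :=
      fun a _ b _ h => mul_right_cancel h
    rw [Z, mul_sum]
    calc ∑ σ ∈ (matchings H W).filter (fun σ => σ v = u), 2 ^ (σ.support.card / 2)
        = ∑ σ ∈ (matchings H W).filter (fun σ => σ v = u),
            2 * 2 ^ ((σ * swap v u).support.card / 2) := by
          refine sum_congr rfl fun σ hσ => ?_
          simp only [matchings, mem_filter, mem_univ, true_and] at hσ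
          obtain ⟨⟨h1, -⟩, rfl⟩ := hσ
          have hm : v ∈ σ.support := Perm.mem_support.2 huv
          have hm' : σ v ∈ σ.support.erase v :=
            mem_erase.2 ⟨huv, Perm.apply_mem_support.2 hm⟩
          have c1 := card_erase_add_one hm
          have c2 := card_erase_add_one hm'
          rw [mul_swap_support h1, ← pow_succ']
          congr 1
          omega
      _ = ∑ τ ∈ ((matchings H W).filter (fun σ => σ v = u)).image (fun σ => σ * swap v u),
            2 * 2 ^ (τ.support.card / 2) := (sum_image (f := fun τ : Perm (Fin n) => 2 * 2 ^ (τ.support.card / 2)) hinj).symm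
      _ ≤ _ := by
          refine sum_le_sum_of_subset fun τ hτ => ?_
          obtain ⟨σ, hσ, rfl⟩ := mem_image.1 hτ
          simp only [matchings, mem_filter, mem_univ, true_and] at hσ ⊢
          obtain ⟨⟨h1, h2⟩, rfl⟩ := hσ
          refine ⟨mul_swap_invol h1 v, fun x hx => ?_⟩
          rw [mul_swap_apply h1] at hx ⊢
          split_ifs at hx ⊢ with h
          · exact absurd rfl hx
          · obtain ⟨h3, h4⟩ := h2 x hx
            push Not at h
            exact ⟨mem_erase.2 ⟨h.2, mem_erase.2 ⟨h.1, h3⟩⟩, h4⟩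

lemma card_filter_adj {n : ℕ} (H : SimpleGraph (Fin n)) (v : Fin n) [DecidablePred (H.Adj v)] :
    (univ.filter (H.Adj v)).card = deg H v := by
  rw [deg, Nat.card_coe_set_eq, ← Set.ncard_coe_finset]
  congr 1
  ext
  simp

lemma Z_le_two_pow {n : ℕ} {H : SimpleGraph (Fin n)} (hH : IsHamCycle H) (W : Finset (Fin n))
    (hW : W ≠ univ) : Z H W ≤ 2 ^ W.card := by
  classical
  induction hs : W.card using Nat.strong_induction_on generalizing W with
  | _ s ih =>
  rcases W.eq_empty_or_nonempty with rfl | hne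
  · have : matchings H ∅ ⊆ {1} := by
      intro σ hσ
      simp only [matchings, mem_filter, mem_univ, true_and] at hσ
      rw [mem_singleton]
      ext x
      by_contra h
      exact absurd (hσ.2 x fun h' => h (by simp [h'])).1 (notMem_empty _)
    calc Z H ∅ ≤ ∑ σ ∈ ({1} : Finset (Perm (Fin n))), 2 ^ (σ.support.card / 2) :=
          sum_le_sum_of_subset this
      _ ≤ _ := by simp [Nat.one_le_two_pow]
  · -- By connectedness some edge of `H` leaves `W`.
    obtain ⟨v, hv, w, hw, hvw⟩ : ∃ v ∈ W, ∃ w ∉ W, H.Adj v w := by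
      obtain ⟨a, ha⟩ := hne
      obtain ⟨b, hb⟩ : ∃ b, b ∉ W := by
        by_contra! h
        exact hW (eq_univ_iff_forall.2 h)
      obtain ⟨p⟩ := hH.1.preconnected a b
      obtain ⟨d, -, h1, h2⟩ := p.exists_boundary_dart (W : Set (Fin n)) ha hb
      exact ⟨d.fst, h1, d.snd, h2, d.adj⟩
    have hcard : (W.filter (H.Adj v)).card ≤ 1 := by
      have h2 := card_filter_adj H v
      rw [hH.2 v] at h2
      have : (W.filter (H.Adj v)).card < (univ.filter (H.Adj v)).card := by
        refine card_lt_card ⟨filter_subset_filter _ (subset_univ _), fun h => ?_⟩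
        exact hw (mem_filter.1 (h (mem_filter.2 ⟨mem_univ w, hvw⟩))).1
      omega
    have hproper : ∀ U ⊆ W, U ≠ univ := by
      rintro U hU rfl
      exact hW (univ_subset_iff.1 hU)
    have hpos : 0 < s := hs ▸ card_pos.2 ⟨v, hv⟩
    have c1 : (W.erase v).card = s - 1 := by rw [card_erase_of_mem hv, hs]
    have b1 := ih (s - 1) (by omega) (W.erase v) (hproper _ (erase_subset _ _)) c1
    have b2 : ∑ u ∈ W.filter (H.Adj v), 2 * Z H ((W.erase v).erase u) ≤
        (W.filter (H.Adj v)).card • 2 ^ (s - 1) := by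
      refine sum_le_card_nsmul _ _ _ fun u hu => ?_
      rw [mem_filter] at hu
      have hu' : u ∈ W.erase v := mem_erase.2 ⟨hu.2.ne', hu.1⟩
      have c2 := card_erase_add_one hu'
      have := ih (s - 2) (by omega) _
        (hproper _ ((erase_subset u _).trans (erase_subset v W))) (by omega)
      have e : s - 1 = (s - 2) + 1 := by omega
      rw [e, pow_succ']
      omega
    have b3 := Z_le H W hv
    have e : s = (s - 1) + 1 := by omega
    rw [e, pow_succ']
    have b4 : (W.filter (H.Adj v)).card • 2 ^ (s - 1) ≤ 1 * 2 ^ (s - 1) :=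
      Nat.mul_le_mul_right _ hcard
    omega

lemma two_mul_Z_univ_le {n : ℕ} (hn : 3 ≤ n) {H : SimpleGraph (Fin n)} (hH : IsHamCycle H) :
    2 * Z H univ ≤ 3 * 2 ^ n := by
  classical
  have v : Fin n := ⟨0, by omega⟩
  have hproper : ∀ U ⊆ univ.erase v, U ≠ univ := by
    rintro U hU rfl
    exact notMem_erase v univ (hU (mem_univ v))
  have c1 : (univ.erase v).card = n - 1 := by simp
  have b1 := Z_le_two_pow hH _ (hproper _ subset_rfl)
  have b2 : ∑ u ∈ univ.filter (H.Adj v), 2 * Z H ((univ.erase v).erase u) ≤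
      (univ.filter (H.Adj v)).card • 2 ^ (n - 1) := by
    refine sum_le_card_nsmul _ _ _ fun u hu => ?_
    rw [mem_filter] at hu
    have hu' : u ∈ univ.erase v := mem_erase.2 ⟨hu.2.ne', hu.1⟩
    have c2 : ((univ.erase v).erase u).card = n - 2 := by
      rw [card_erase_of_mem hu', c1]; omega
    have := Z_le_two_pow hH _ (hproper _ (erase_subset u _))
    rw [c2] at this
    have e : n - 1 = (n - 2) + 1 := by omega
    rw [e, pow_succ']
    omega
  have b3 := Z_le H univ (mem_univ v)
  rw [card_filter_adj, hH.2 v, smul_eq_mul] at b2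
  rw [c1] at b1
  have e : n = (n - 1) + 1 := by omega
  have e2 : 2 ^ n = 2 * 2 ^ (n - 1) := by conv_lhs => rw [e, pow_succ']
  omega

/-! ### Encoding cycles by pairs of matchings -/

/-- A graph in which every vertex has at most one neighbour is given by an involution. -/
lemma exists_perm {n : ℕ} (G : SimpleGraph (Fin n))
    (hG : ∀ x a b, G.Adj x a → G.Adj x b → a = b) :
    ∃ σ : Perm (Fin n), (∀ x, σ (σ x) = x) ∧ ∀ x y, G.Adj x y ↔ x ≠ y ∧ σ x = y := by
  classical
  let f : Fin n → Fin n := fun x => if h : ∃ y, G.Adj x y then h.choose else x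
  have f1 : ∀ x y, G.Adj x y → f x = y := by
    intro x y h
    have h' : ∃ y, G.Adj x y := ⟨y, h⟩
    simp only [f, dif_pos h']
    exact hG x _ _ h'.choose_spec h
  have f2 : ∀ x, (¬ ∃ y, G.Adj x y) → f x = x := fun x h => by simp only [f, dif_neg h]
  have hf : Function.Involutive f := by
    intro x
    by_cases h : ∃ y, G.Adj x y
    · obtain ⟨y, h⟩ := h
      rw [f1 x y h, f1 y x h.symm]
    · rw [f2 x h, f2 x h]
  refine ⟨hf.toPerm, hf, fun x y => ⟨fun h => ⟨h.ne, f1 x y h⟩, ?_⟩⟩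
  rintro ⟨hne, h⟩
  change f x = y at h
  by_cases h' : ∃ y, G.Adj x y
  · obtain ⟨z, hz⟩ := h'
    rwa [← h, f1 x z hz]
  · exact absurd ((f2 x h').symm.trans h) hne

lemma deg_inf_add_deg_sdiff {n : ℕ} (C H : SimpleGraph (Fin n)) (v : Fin n) :
    deg (C ⊓ H) v + deg (C \ H) v = deg C v := by
  have h := Set.ncard_inter_add_ncard_sdiff_eq_ncard (C.neighborSet v) (H.neighborSet v)
    (Set.toFinite _)
  simp only [deg, Nat.card_coe_set_eq]
  rw [← h]
  congr 2

lemma deg_eq_zero_iff {n : ℕ} (G : SimpleGraph (Fin n)) (v : Fin n) :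
    deg G v = 0 ↔ ∀ w, ¬ G.Adj v w := by
  rw [deg, Nat.card_coe_set_eq, Set.ncard_eq_zero, Set.eq_empty_iff_forall_notMem]
  rfl

lemma eq_of_deg_le_one {n : ℕ} {G : SimpleGraph (Fin n)} {v : Fin n} (h : deg G v ≤ 1)
    (a b : Fin n) (ha : G.Adj v a) (hb : G.Adj v b) : a = b := by
  rw [deg, Nat.card_coe_set_eq, Set.ncard_le_one_iff] at h
  exact h ha hb

/-- A cycle `C` sharing an edge with `H` at each vertex is encoded by the matchings `H \ C` and
`C \ H`, which cover the same vertices. -/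
lemma exists_encoding {n : ℕ} {H C : SimpleGraph (Fin n)} (hH : IsHamCycle H) (hC : IsHamCycle C)
    (h : ∀ v, deg (C ⊓ H) v ≠ 0) :
    ∃ p : (_ : Perm (Fin n)) × Perm (Fin n),
      p ∈ (matchings H univ).sigma (fun σ => involutions σ.support) ∧
      (∀ x y, (H \ C).Adj x y ↔ x ≠ y ∧ p.1 x = y) ∧
      ∀ x y, (C \ H).Adj x y ↔ x ≠ y ∧ p.2 x = y := by
  have d1 := fun v => deg_inf_add_deg_sdiff C H v
  have d2 := fun v => deg_inf_add_deg_sdiff H C v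
  simp only [inf_comm H C, hH.2, hC.2] at d1 d2
  obtain ⟨M, hM, hM'⟩ := exists_perm (H \ C) fun x => eq_of_deg_le_one (by grind)
  obtain ⟨N, hN, hN'⟩ := exists_perm (C \ H) fun x => eq_of_deg_le_one (by grind)
  refine ⟨⟨M, N⟩, mem_sigma.2 ⟨?_, ?_⟩, hM', hN'⟩
  · simp only [matchings, mem_filter, mem_univ, true_and]
    exact ⟨hM, fun x hx => ((hM' x (M x)).2 ⟨hx.symm, rfl⟩).1⟩
  · simp only [involutions, mem_filter, mem_univ, true_and]
    refine ⟨hN, ?_⟩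
    -- In either matching a vertex is uncovered exactly when its degree there is zero.
    have key : ∀ (G : SimpleGraph (Fin n)) (σ : Perm (Fin n)),
        (∀ x y, G.Adj x y ↔ x ≠ y ∧ σ x = y) → ∀ x, x ∈ σ.support ↔ deg G x ≠ 0 := by
      intro G σ hσ x
      rw [Perm.mem_support, Ne, Ne, not_iff_not, deg_eq_zero_iff]
      constructor
      · intro h w hw
        obtain ⟨h1, h2⟩ := (hσ x w).1 hw
        exact h1 (h.symm.trans h2)
      · intro h
        by_contra h'
        exact h (σ x) ((hσ _ _).2 ⟨fun e => h' e.symm, rfl⟩)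
    ext x
    rw [key _ _ hM', key _ _ hN']
    have := d1 x
    have := d2 x
    omega

lemma card_le {n : ℕ} {H : SimpleGraph (Fin n)} (hH : IsHamCycle H) :
    Nat.card {C : SimpleGraph (Fin n) // IsHamCycle C ∧ ∀ v, deg (C ⊓ H) v ≠ 0} ≤
      Z H univ * (n / 2).factorial := by
  classical
  choose f hf1 hf2 hf3 using fun C : {C : SimpleGraph (Fin n) //
    IsHamCycle C ∧ ∀ v, deg (C ⊓ H) v ≠ 0} => exists_encoding hH C.2.1 C.2.2
  have hinj : Function.Injective f := by
    intro C D hCD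
    have e1 : H \ C.1 = H \ D.1 := by ext x y; rw [hf2, hf2, hCD]
    have e2 : C.1 \ H = D.1 \ H := by ext x y; rw [hf3, hf3, hCD]
    have e3 : H ⊓ C.1 = H ⊓ D.1 := by rw [← sdiff_sdiff_right_self, e1, sdiff_sdiff_right_self]
    apply Subtype.ext
    rw [← sup_inf_sdiff C.1 H, ← sup_inf_sdiff D.1 H, e2, inf_comm, e3, inf_comm]
  calc _ = (univ : Finset {C : SimpleGraph (Fin n) //
        IsHamCycle C ∧ ∀ v, deg (C ⊓ H) v ≠ 0}).card := by
        rw [Nat.card_eq_fintype_card, card_univ]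
    _ ≤ ((matchings H univ).sigma fun σ => involutions σ.support).card :=
        card_le_card_of_injOn f (fun C _ => hf1 C) hinj.injOn
    _ = ∑ σ ∈ matchings H univ, (involutions σ.support).card := card_sigma _ _
    _ ≤ ∑ σ ∈ matchings H univ, 2 ^ (σ.support.card / 2) * (n / 2).factorial := by
        refine sum_le_sum fun σ _ => (card_involutions_le _).trans ?_
        refine Nat.mul_le_mul_left _ (Nat.factorial_le (Nat.div_le_div_right ?_))
        simpa using card_le_univ σ.support
    _ = _ := by rw [Z, sum_mul]

/-! ### The numerical bound -/

/-- `1 + √2 ≥ 12 / 5`, and `(3 / 2) * 2 ^ n ≤ (12 / 5) ^ n` from `n = 3` on. -/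
lemma three_mul_two_pow_le {n : ℕ} (hn : 3 ≤ n) :
    3 * (2 : ℝ) ^ n ≤ 2 * (1 + Real.sqrt 2) ^ n := by
  have hs : (12 / 5 : ℝ) ≤ 1 + Real.sqrt 2 := by
    have : (7 / 5 : ℝ) ≤ Real.sqrt 2 := Real.le_sqrt_of_sq_le (by norm_num)
    linarith
  have h1 : 3 * (2 : ℝ) ^ n ≤ 2 * (12 / 5) ^ n := by
    induction n, hn using Nat.le_induction with
    | base => norm_num
    | succ k _ ih =>
      rw [pow_succ, pow_succ]
      nlinarith [pow_pos (show (0 : ℝ) < 2 by norm_num) k]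
  have h2 := pow_le_pow_left₀ (by norm_num) hs n
  linarith

end

theorem stmt_8 (n : ℕ) (hn : 3 ≤ n) (H : SimpleGraph (Fin n)) (hH : IsHamCycle H) :
    (Nat.card {C : SimpleGraph (Fin n) // IsHamCycle C ∧ ∀ v, deg (C ⊓ H) v ≠ 0} : ℝ)
      ≤ (1 + Real.sqrt 2) ^ n * (Nat.factorial (n / 2) : ℝ) := by
  have h1 : (Nat.card {C : SimpleGraph (Fin n) // IsHamCycle C ∧ ∀ v, deg (C ⊓ H) v ≠ 0} : ℝ) ≤
      (Z H Finset.univ : ℝ) * ((n / 2).factorial : ℝ) := by exact_mod_cast card_le hH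
  have h2 : 2 * (Z H Finset.univ : ℝ) ≤ 3 * 2 ^ n := by exact_mod_cast two_mul_Z_univ_le hn hH
  have h3 := three_mul_two_pow_le hn
  exact h1.trans (mul_le_mul_of_nonneg_right (by linarith) (by positivity))
end

section
/- Let n = 3m be a positive multiple of 3. Then there exists a degree-doubling family 𝒢 of 2-regular simple graphs on Fin n with |𝒢| · m! · 6^m ≥ n!, i.e., of cardinality at least n!/((n/3)! · 6^(n/3)). -/
/-!
The family is the set of all triangle factors, i.e. partitions of the vertices into triples, each
triple made into a triangle.

*Degree doubling.* Let `ab` be an edge of the triangle factor `F` but not of `G`, and let `c` be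
the third vertex of its triangle in `F`. If neither `a` nor `b` had degree 4 in the union, `a` and
`b` would each share a neighbour between `F` and `G`; that neighbour can only be `c`, so `ac` and
`bc` are edges of `G`, and hence so is `ab`, a contradiction (`exists_deg_sup_eq_four`).

*Counting.* Each of the `n!` bijections `Fin n ≃ Fin m × Fin 3` defines a triangle factor. Two
bijections giving the same factor differ by a permutation of `Fin m × Fin 3` that maps blocks to
blocks, and such a permutation is determined by a permutation of the blocks together with a
permutation of `Fin 3` for each block; so each factor arises at most `m! * 6 ^ m` times
(`card_blockPerms_le`).
-/

open SimpleGraph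

/-- The triangle factor whose triangles are the preimages under `σ` of the blocks
`{i} × Fin 3`. -/
def triangleFactor {n m : ℕ} (σ : Fin n ≃ Fin m × Fin 3) : SimpleGraph (Fin n) where
  Adj i j := i ≠ j ∧ (σ i).1 = (σ j).1
  symm := ⟨fun _ _ h => ⟨h.1.symm, h.2.symm⟩⟩
  loopless := ⟨fun _ h => h.1 rfl⟩

lemma triangleFactor_trans {n m : ℕ} (σ : Fin n ≃ Fin m × Fin 3) {a b c : Fin n}
    (hab : (triangleFactor σ).Adj a b) (hbc : (triangleFactor σ).Adj b c) (hac : a ≠ c) :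
    (triangleFactor σ).Adj a c :=
  ⟨hac, hab.2.trans hbc.2⟩

lemma deg_triangleFactor {n m : ℕ} (σ : Fin n ≃ Fin m × Fin 3) (v : Fin n) :
    deg (triangleFactor σ) v = 2 := by
  have key : (triangleFactor σ).neighborSet v =
      {σ.symm ((σ v).1, (σ v).2 + 1), σ.symm ((σ v).1, (σ v).2 + 2)} := by
    ext w
    obtain ⟨⟨i, k⟩, rfl⟩ := σ.symm.surjective v
    obtain ⟨⟨j, l⟩, rfl⟩ := σ.symm.surjective w
    have hkl : ∀ k l : Fin 3, k ≠ l ↔ l = k + 1 ∨ l = k + 2 := by decide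
    have := hkl k l
    simp only [SimpleGraph.mem_neighborSet, triangleFactor, Set.mem_insert_iff,
      Set.mem_singleton_iff, Equiv.apply_symm_apply, ne_eq, EmbeddingLike.apply_eq_iff_eq,
      Prod.mk.injEq]
    grind
  have hne : ∀ k : Fin 3, k + 1 ≠ k + 2 := by decide
  rw [deg, Nat.card_coe_set_eq, key, Set.ncard_pair]
  simp [hne]

lemma exists_deg_sup_eq_four {n m : ℕ} (σ τ : Fin n ≃ Fin m × Fin 3) {a b : Fin n}
    (hF : (triangleFactor σ).Adj a b) (hG : ¬ (triangleFactor τ).Adj a b) :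
    ∃ v, deg (triangleFactor σ ⊔ triangleFactor τ) v = 4 := by
  have four : ∀ v, Disjoint ((triangleFactor σ).neighborSet v)
      ((triangleFactor τ).neighborSet v) →
      deg (triangleFactor σ ⊔ triangleFactor τ) v = 4 := by
    intro v hv
    have h1 := deg_triangleFactor σ v
    have h2 := deg_triangleFactor τ v
    rw [deg, Nat.card_coe_set_eq] at h1 h2 ⊢
    rw [SimpleGraph.neighborSet_sup, Set.ncard_union_eq hv, h1, h2]
  by_contra hcon
  push Not at hcon
  have ha := mt (four a) (hcon a)
  have hb := mt (four b) (hcon b)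
  obtain ⟨c, hc, hc'⟩ := Set.not_disjoint_iff.1 ha
  obtain ⟨d, hd, hd'⟩ := Set.not_disjoint_iff.1 hb
  rw [SimpleGraph.mem_neighborSet] at hc hc' hd hd'
  have hcb : c ≠ b := by rintro rfl; exact hG hc'
  have hda : a ≠ d := by rintro rfl; exact hG hd'.symm
  -- `b`, `c`, `d` are neighbours of `a` in a 2-regular graph, and `b` is neither `c` nor `d`
  have hcd : c = d := by
    have h2 := deg_triangleFactor σ a
    rw [deg, Nat.card_coe_set_eq] at h2
    obtain ⟨x, y, -, hxy⟩ := Set.ncard_eq_two.1 h2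
    have mem : ∀ w, (triangleFactor σ).Adj a w → w = x ∨ w = y := by
      intro w hw
      have hw' : w ∈ (triangleFactor σ).neighborSet a := hw
      rw [hxy] at hw'
      simpa using hw'
    have e1 := mem b hF
    have e2 := mem c hc
    have e3 := mem d (triangleFactor_trans σ hF hd hda)
    have e4 := hd.ne
    grind
  subst hcd
  exact hG (triangleFactor_trans τ hc' hd'.symm hF.ne)

/-- A permutation of `Fin m × Fin 3` sending each block into a single block, and distinct blocks
into distinct ones, is recorded by where the points `(i, 0)` go and by its second coordinates. -/
lemma card_blockPerms_le (m : ℕ) (s : Finset (Equiv.Perm (Fin m × Fin 3)))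
    (hs : ∀ τ ∈ s, ∀ p q, (τ p).1 = (τ q).1 ↔ p.1 = q.1) :
    s.card ≤ m.factorial * 6 ^ m := by
  have hcard : Fintype.card ((Fin m ↪ Fin m) × (Fin m → (Fin 3 ↪ Fin 3))) =
      m.factorial * 6 ^ m := by
    simp [Fintype.card_embedding_eq, Nat.descFactorial_self]
  rw [← hcard, ← Fintype.card_coe]
  refine Fintype.card_le_of_injective
    (fun τ : s => (⟨fun i => (τ.1 (i, 0)).1, fun i j h => (hs _ τ.2 _ _).1 h⟩,
      fun i => ⟨fun k => (τ.1 (i, k)).2, fun k l h => ?_⟩)) ?_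
  · have h1 := (hs _ τ.2 (i, k) (i, l)).2 rfl
    simpa using τ.1.injective (Prod.ext h1 h)
  · rintro ⟨τ, hτ⟩ ⟨ρ, hρ⟩ h
    simp only [Prod.mk.injEq] at h
    ext1
    refine Equiv.ext fun ⟨i, k⟩ => Prod.ext ?_ ?_
    · rw [(hs τ hτ (i, k) (i, 0)).2 rfl, (hs ρ hρ (i, k) (i, 0)).2 rfl]
      exact DFunLike.congr_fun h.1 i
    · exact DFunLike.congr_fun (congrFun h.2 i) k

lemma fst_eq_iff_of_triangleFactor_eq {n m : ℕ} {σ τ : Fin n ≃ Fin m × Fin 3}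
    (h : triangleFactor σ = triangleFactor τ) (i j : Fin n) :
    (σ i).1 = (σ j).1 ↔ (τ i).1 = (τ j).1 := by
  by_cases hij : i = j
  · simp [hij]
  · have h' : (triangleFactor σ).Adj i j ↔ (triangleFactor τ).Adj i j := by rw [h]
    simpa [triangleFactor, hij] using h'

theorem stmt_10 (n m : ℕ) (hm : 0 < m) (hn : n = 3 * m) :
    ∃ 𝒢 : Finset (SimpleGraph (Fin n)), (∀ G ∈ 𝒢, ∀ v, deg G v = 2) ∧ DegreeDoubling 𝒢 ∧
      Nat.factorial n ≤ 𝒢.card * Nat.factorial m * 6 ^ m := by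
  classical
  have e : Fin n ≃ Fin m × Fin 3 :=
    Fintype.equivOfCardEq (by simp [hn, mul_comm])
  refine ⟨Finset.univ.image (triangleFactor (n := n) (m := m)), ?_, ?_, ?_⟩
  · intro G hG v
    obtain ⟨σ, -, rfl⟩ := Finset.mem_image.1 hG
    exact deg_triangleFactor σ v
  · intro F hF G hG hne
    obtain ⟨σ, -, rfl⟩ := Finset.mem_image.1 hF
    obtain ⟨τ, -, rfl⟩ := Finset.mem_image.1 hG
    by_contra hcon
    apply hne
    ext a b
    constructor
    · intro h
      by_contra h'
      exact hcon (exists_deg_sup_eq_four σ τ h h')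
    · intro h
      by_contra h'
      rw [sup_comm] at hcon
      exact hcon (exists_deg_sup_eq_four τ σ h h')
  · have hfib : ∀ G ∈ Finset.univ.image (triangleFactor (n := n) (m := m)),
        (Finset.univ.filter fun σ : Fin n ≃ Fin m × Fin 3 => triangleFactor σ = G).card ≤
          m.factorial * 6 ^ m := by
      intro G hG
      obtain ⟨σ₀, -, rfl⟩ := Finset.mem_image.1 hG
      -- translate the fibre to permutations of `Fin m × Fin 3` via `σ ↦ σ ∘ σ₀⁻¹`
      rw [← Finset.card_image_of_injective _
        (f := fun σ : Fin n ≃ Fin m × Fin 3 => σ₀.symm.trans σ)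
        (fun σ τ h => Equiv.ext fun i => by simpa using DFunLike.congr_fun h (σ₀ i))]
      refine card_blockPerms_le m _ fun ρ hρ p q => ?_
      obtain ⟨σ, hσ, rfl⟩ := Finset.mem_image.1 hρ
      simpa using fst_eq_iff_of_triangleFactor_eq (Finset.mem_filter.1 hσ).2
        (σ₀.symm p) (σ₀.symm q)
    have h := Finset.card_le_mul_card_image (f := triangleFactor (n := n) (m := m))
      Finset.univ _ hfib
    rw [Finset.card_univ, Fintype.card_equiv e, Fintype.card_fin] at h
    calc n.factorial ≤ _ := h
      _ = _ := by ring
end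

section
/- Let n ≥ 3 and let 𝒢 be a degree-doubling family of 2-regular simple graphs on Fin n. Then (as real numbers) |𝒢| · ⌊n/3⌋! ≤ e^(√n) · n!. -/
/-!
The vertex set of a graph `F` without isolated vertices and with all degrees at most two splits into
the vertex sets of copies of `K₂` and `K_{1,2}` contained in `F`: an inclusion-minimal spanning
subgraph without isolated vertices is a disjoint union of stars (`exists_star_forest`). If there are
`s` copies of `K₂` and `t` copies of `K_{1,2}`, then `2s + 3t = n`.

Fix `s` and `t`, and let `Model (Fin s) (Fin t)` be the vertex set of the disjoint union of `s` copies of `K₂`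
and `t` copies of `K_{1,2}`. Call a bijection `e` from it to `Fin n` good for `F` if it sends
the edges of the model to edges of `F`. Two facts bound the number of members of type `(s, t)`.
* A bijection is good for at most one member of a degree-doubling family: if it is good for both
  `F` and `G`, every vertex has a common neighbour in `F` and `G`, hence degree at most `3` in
  `F ⊔ G` (`not_good_of_deg_four`).
* If one bijection is good for `F`, composing it with the automorphisms of the model gives
  `2 ^ (s + t) * s! * t!` good ones, and this number is at least `(s + t)!` because
  `(s + t).choose s ≤ 2 ^ (s + t)` (`factorial_le_card_good`).

As there are `n!` bijections in all, at most `n! / (s + t)!` members have type `(s, t)`. The number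
`s + t` of stars determines `(s, t)` and is at least `n / 3`, so with `M = ⌊n / 3⌋` and
`s + t = M + k` summation gives `|𝒢| * M! ≤ n! * ∑ k, M! / (M + k)! ≤ n! * ∑ k, 1 / k! ≤ e * n!`.
This is stronger than the bound with `exp (√n)`.
-/


open SimpleGraph

/-- The vertex set of the disjoint union of copies of `K₂` indexed by `S` and copies of `K_{1,2}`
indexed by `T`. The copy `i` of `K₂` has the vertices `(i, false)` and `(i, true)`; the copy `i` of `K_{1,2}` has
the centre `(i, none)` and the leaves `(i, some b)`. -/
abbrev Model (S T : Type*) : Type _ := (S × Bool) ⊕ (T × Option Bool)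

/-- `e` sends every edge of the model (`K₂`s indexed by `S`, `K_{1,2}`s indexed by `T`) to an edge
of `F`. -/
def Good {S T V : Type*} (F : SimpleGraph V) (e : Model S T → V) : Prop :=
  (∀ i, F.Adj (e (.inl (i, false))) (e (.inl (i, true)))) ∧
    ∀ i b, F.Adj (e (.inr (i, none))) (e (.inr (i, some b)))

/-- A spanning subgraph without isolated vertices that is minimal for inclusion: every edge has an
endpoint of degree one, so its components are stars. -/
lemma exists_star_forest {V : Type*} [Finite V] (F : SimpleGraph V) (hF : ∀ v, ∃ w, F.Adj v w) :
    ∃ H ≤ F, (∀ v, ∃ w, H.Adj v w) ∧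
      ∀ u v, H.Adj u v → (∀ w, H.Adj u w → w = v) ∨ (∀ w, H.Adj v w → w = u) := by
  obtain ⟨H, hHF, hH⟩ := (Set.toFinite {H : SimpleGraph V | ∀ v, ∃ w, H.Adj v w}).exists_le_minimal
    (a := F) hF
  refine ⟨H, hHF, hH.prop, fun u v huv => ?_⟩
  -- By minimality, deleting the edge `uv` isolates a vertex, which is then `u` or `v`.
  have hnot : ¬ ∀ x, ∃ w, (H.deleteEdges {s(u, v)}).Adj x w := by
    intro h
    have := hH.le_of_le h (H.deleteEdges_le _) huv
    simp at this
  push Not at hnot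
  obtain ⟨x, hx⟩ := hnot
  obtain ⟨y, hy⟩ := hH.prop x
  have key : ∀ w, H.Adj x w → s(x, w) = s(u, v) := by
    intro w hw
    have := hx w
    simp only [SimpleGraph.deleteEdges_adj, Set.mem_singleton_iff] at this
    tauto
  simp only [Sym2.eq_iff] at key
  rcases key y hy with ⟨rfl, rfl⟩ | ⟨rfl, rfl⟩
  · left; intro w hw; grind
  · right; intro w hw; grind

/-- A 2-regular graph admits a good bijection for some numbers `s` and `t` of stars. -/
lemma exists_good {n : ℕ} (F : SimpleGraph (Fin n)) (hF : ∀ v, deg F v = 2) :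
    ∃ s t : ℕ, ∃ e : Model (Fin s) (Fin t) ≃ Fin n, Good F e := by
  classical
  have hnb : ∀ v, ∃ a b, a ≠ b ∧ F.neighborSet v = {a, b} := fun v =>
    Set.ncard_eq_two.1 (hF v)
  obtain ⟨H, hHF, hH, hstar⟩ := exists_star_forest F (fun v => by
    obtain ⟨a, b, -, h⟩ := hnb v
    exact ⟨a, by rw [← SimpleGraph.mem_neighborSet, h]; simp⟩)
  choose p hp using hH
  have htwo : ∀ v, ∃ q, (∀ w, H.Adj v w → w = p v ∨ w = q) ∧ (q ≠ p v → H.Adj v q) := by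
    intro v
    by_cases h : ∃ q, H.Adj v q ∧ q ≠ p v
    · obtain ⟨q, hq, hqp⟩ := h
      refine ⟨q, fun w hw => ?_, fun _ => hq⟩
      obtain ⟨a, b, -, hab⟩ := hnb v
      have hmem : ∀ x, H.Adj v x → x = a ∨ x = b := fun x hx => by
        have : x ∈ F.neighborSet v := hHF hx
        simpa [hab] using this
      have h1 := hmem _ hq
      have h2 := hmem _ (hp v)
      have h3 := hmem _ hw
      grind
    · push Not at h
      exact ⟨p v, fun w hw => .inl (h w hw), fun h => absurd rfl h⟩
  choose q hq hq' using htwo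
  -- `q v = p v` says that `v` is a leaf of `H`, with sole neighbour `p v`.
  let T := {v // q v ≠ p v}
  let S := {v // q v = p v ∧ q (p v) = p (p v) ∧ v < p v}
  let φ : Model S T → Fin n := fun x => match x with
    | .inl (v, false) => v.1
    | .inl (v, true) => p v.1
    | .inr (v, none) => v.1
    | .inr (v, some false) => p v.1
    | .inr (v, some true) => q v.1
  -- Neighbours of a centre are leaves.
  have hTleaf : ∀ v w, q v ≠ p v → H.Adj v w → q w = p w ∧ p w = v := by
    intro v w hv hw
    rcases hstar v w hw with h | h
    · exact absurd ((h _ (hq' v hv)).trans (h _ (hp v)).symm) hv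
    · have h1 := h _ (hp w)
      refine ⟨?_, h1⟩
      by_contra h2
      exact h2 ((h _ (hq' w h2)).trans h1.symm)
  have hleaf : ∀ v, q v = p v → q (p v) = p (p v) → p (p v) = v := by
    intro v h1 h2
    rcases hq _ _ (hp v).symm with h | h <;> grind
  have hinj : Function.Injective φ := by
    have hp1 := fun v hv => hTleaf v (p v) hv (hp v)
    have hq1 := fun v hv => hTleaf v (q v) hv (hq' v hv)
    rintro (⟨⟨v, hv⟩, _ | _⟩ | ⟨⟨v, hv⟩, _ | _ | _⟩) (⟨⟨w, hw⟩, _ | _⟩ | ⟨⟨w, hw⟩, _ | _ | _⟩) h <;>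
      simp only [φ] at h <;> grind
  have hsurj : Function.Surjective φ := by
    intro v
    by_cases hv : q v = p v
    · by_cases hw : q (p v) = p (p v)
      · have := hleaf v hv hw
        rcases lt_trichotomy v (p v) with h | h | h
        · exact ⟨.inl (⟨v, hv, hw, h⟩, false), rfl⟩
        · exact absurd h (hp v).ne
        · exact ⟨.inl (⟨p v, hw, by simpa [this] using hv, by simpa [this] using h⟩, true), this⟩
      · rcases hq _ _ (hp v).symm with h | h
        · exact ⟨.inr (⟨p v, hw⟩, some false), h.symm⟩
        · exact ⟨.inr (⟨p v, hw⟩, some true), h.symm⟩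
    · exact ⟨.inr (⟨v, hv⟩, none), rfl⟩
  refine ⟨Fintype.card S, Fintype.card T,
    (Equiv.sumCongr ((Fintype.equivFin S).symm.prodCongr (Equiv.refl _))
      ((Fintype.equivFin T).symm.prodCongr (Equiv.refl _))).trans (.ofBijective φ ⟨hinj, hsurj⟩),
    fun i => hHF (hp _), fun i b => ?_⟩
  cases b
  · exact hHF (hp _)
  · exact hHF (hq' _ ((Fintype.equivFin T).symm i).2)

/-- The automorphism of the model that permutes the two kinds of stars by `σ` and `τ`, and
exchanges the two vertices, respectively the two leaves, of star `i` when `x i`, respectively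
`y i`, is `true`. -/
def symmetry {S T : Type*} (g : (Equiv.Perm S × (S → Bool)) × (Equiv.Perm T × (T → Bool))) :
    Model S T ≃ Model S T :=
  Equiv.sumCongr
    (Equiv.prodShear g.1.1 fun i => if g.1.2 i then Equiv.boolNot else Equiv.refl _)
    (Equiv.prodShear g.2.1 fun i =>
      Equiv.optionCongr (if g.2.2 i then Equiv.boolNot else Equiv.refl _))

lemma symmetry_injective {S T : Type*} : Function.Injective (symmetry (S := S) (T := T)) := by
  rintro ⟨⟨σ, x⟩, τ, y⟩ ⟨⟨σ', x'⟩, τ', y'⟩ h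
  have h1 : ∀ i, σ i = σ' i ∧ x i = x' i := fun i => by
    have := DFunLike.congr_fun h (.inl (i, false))
    simp only [symmetry, Equiv.sumCongr_apply, Sum.map_inl, Equiv.prodShear_apply, Sum.inl.injEq,
      Prod.mk.injEq] at this
    refine ⟨this.1, ?_⟩
    have h2 := this.2
    cases hx : x i <;> cases hx' : x' i <;> simp_all
  have h2 : ∀ i, τ i = τ' i ∧ y i = y' i := fun i => by
    have := DFunLike.congr_fun h (.inr (i, some false))
    simp only [symmetry, Equiv.sumCongr_apply, Sum.map_inr, Equiv.prodShear_apply, Sum.inr.injEq,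
      Prod.mk.injEq] at this
    refine ⟨this.1, ?_⟩
    have h2 := this.2
    cases hx : y i <;> cases hx' : y' i <;> simp_all
  simp only [Prod.mk.injEq]
  exact ⟨⟨Equiv.ext fun i => (h1 i).1, funext fun i => (h1 i).2⟩,
    Equiv.ext fun i => (h2 i).1, funext fun i => (h2 i).2⟩

lemma Good.symmetry {S T V : Type*} {F : SimpleGraph V} {e : Model S T → V} (he : Good F e)
    (g : (Equiv.Perm S × (S → Bool)) × (Equiv.Perm T × (T → Bool))) :
    Good F (e ∘ _root_.symmetry g) := by
  obtain ⟨⟨σ, x⟩, τ, y⟩ := g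
  constructor
  · intro i
    have := he.1 (σ i)
    cases hx : x i
    · simpa [_root_.symmetry, hx] using this
    · simpa [_root_.symmetry, hx] using this.symm
  · intro i b
    have := he.2 (τ i)
    cases hy : y i <;> simpa [_root_.symmetry, hy] using this _

open Classical in
lemma factorial_le_card_good {n s t : ℕ} {F : SimpleGraph (Fin n)}
    (e : Model (Fin s) (Fin t) ≃ Fin n) (he : Good F e) :
    (s + t).factorial ≤
      (Finset.univ.filter fun e : Model (Fin s) (Fin t) ≃ Fin n => Good F e).card := by
  have h1 : (s + t).factorial ≤ (s.factorial * 2 ^ s) * (t.factorial * 2 ^ t) := by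
    rw [← Nat.add_choose_mul_factorial_mul_factorial]
    calc _ ≤ 2 ^ (s + t) * s.factorial * t.factorial := by
            gcongr; exact Nat.choose_le_two_pow _ _
      _ = _ := by ring
  refine h1.trans ?_
  have h2 : Fintype.card ((Equiv.Perm (Fin s) × (Fin s → Bool)) ×
      (Equiv.Perm (Fin t) × (Fin t → Bool))) = (s.factorial * 2 ^ s) * (t.factorial * 2 ^ t) := by
    simp [Fintype.card_perm]
  rw [← h2, ← Finset.card_univ]
  refine Finset.card_le_card_of_injOn (fun g => (symmetry g).trans e) ?_ ?_
  · intro g _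
    simpa using he.symmetry g
  · intro g _ g' _ h
    apply symmetry_injective
    ext1 x
    exact e.injective (DFunLike.congr_fun h x)

/-- A bijection that is good for two 2-regular graphs gives every vertex a common neighbour, so the
union has no vertex of degree four. -/
lemma not_good_of_deg_four {n : ℕ} {S T : Type*} {F G : SimpleGraph (Fin n)}
    (hF : ∀ v, deg F v = 2) (hG : ∀ v, deg G v = 2) (e : Model S T ≃ Fin n)
    (heF : Good F e) (heG : Good G e) (v : Fin n) : deg (F ⊔ G) v ≠ 4 := by
  have hcommon : ∃ w, F.Adj v w ∧ G.Adj v w := by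
    obtain ⟨x, rfl⟩ := e.surjective v
    rcases x with ⟨i, _ | _⟩ | ⟨i, _ | b⟩
    · exact ⟨_, heF.1 i, heG.1 i⟩
    · exact ⟨_, (heF.1 i).symm, (heG.1 i).symm⟩
    · exact ⟨_, heF.2 i true, heG.2 i true⟩
    · exact ⟨_, (heF.2 i b).symm, (heG.2 i b).symm⟩
  obtain ⟨w, hw⟩ := hcommon
  have h1 : (F.neighborSet v).ncard = 2 := hF v
  have h2 : (G.neighborSet v).ncard = 2 := hG v
  have h3 : 0 < (F.neighborSet v ∩ G.neighborSet v).ncard := (Set.ncard_pos).2 ⟨w, hw⟩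
  have h4 := Set.ncard_union_add_ncard_inter (F.neighborSet v) (G.neighborSet v)
  have h5 : deg (F ⊔ G) v = (F.neighborSet v ∪ G.neighborSet v).ncard := by
    rw [← SimpleGraph.neighborSet_sup]; rfl
  omega

/-- Double counting of pairs of a graph and a bijection good for it. -/
lemma card_mul_factorial_le {n s t : ℕ} (𝒢 : Finset (SimpleGraph (Fin n)))
    (hreg : ∀ G ∈ 𝒢, ∀ v, deg G v = 2) (hdd : DegreeDoubling 𝒢)
    (hgood : ∀ F ∈ 𝒢, ∃ e : Model (Fin s) (Fin t) ≃ Fin n, Good F e) :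
    𝒢.card * (s + t).factorial ≤ n.factorial := by
  classical
  rcases 𝒢.eq_empty_or_nonempty with rfl | ⟨F₀, hF₀⟩
  · simp
  obtain ⟨e₀, -⟩ := hgood F₀ hF₀
  have hcard : Fintype.card (Model (Fin s) (Fin t) ≃ Fin n) = n.factorial := by
    rw [Fintype.card_equiv e₀, Fintype.card_congr e₀, Fintype.card_fin]
  rw [← hcard, ← smul_eq_mul]
  refine (Finset.card_nsmul_le_sum 𝒢 _ _ fun F hF => ?_).trans
    ((Finset.card_biUnion (t := fun F =>
      Finset.univ.filter fun e : Model (Fin s) (Fin t) ≃ Fin n => Good F e) ?_).symm.le.trans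
      (Finset.card_le_univ _))
  · obtain ⟨e, he⟩ := hgood F hF
    exact factorial_le_card_good e he
  · intro F hF G hG hne
    refine Finset.disjoint_left.2 fun e heF heG => ?_
    obtain ⟨v, hv⟩ := hdd F hF G hG hne
    exact not_good_of_deg_four (hreg F hF) (hreg G hG) e (by simpa using heF) (by simpa using heG)
      v hv

theorem stmt_11 (n : ℕ) (hn : 3 ≤ n) (𝒢 : Finset (SimpleGraph (Fin n)))
    (hreg : ∀ G ∈ 𝒢, ∀ v, deg G v = 2) (hdd : DegreeDoubling 𝒢) :
    (𝒢.card : ℝ) * (Nat.factorial (n / 3) : ℝ)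
      ≤ Real.exp (Real.sqrt n) * (Nat.factorial n : ℝ) := by
  classical
  -- `k` is the excess of the number of stars over `n / 3`; it determines the type `(s, t)`.
  have htype : ∀ F : SimpleGraph (Fin n), ∃ k, F ∈ 𝒢 → k < n + 1 ∧ ∃ s t,
      2 * s + 3 * t = n ∧ s + t = n / 3 + k ∧
        ∃ e : Model (Fin s) (Fin t) ≃ Fin n, Good F e := by
    intro F
    by_cases hF : F ∈ 𝒢
    · obtain ⟨s, t, e, he⟩ := exists_good F (hreg F hF)
      have hst : 2 * s + 3 * t = n := by
        have := Fintype.card_congr e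
        simp at this
        omega
      exact ⟨s + t - n / 3, fun _ => ⟨by omega, s, t, hst, by omega, e, he⟩⟩
    · exact ⟨0, fun h => absurd h hF⟩
  choose κ hκ using htype
  have hfiber : ∀ k, (𝒢.filter fun F => κ F = k).card * (n / 3 + k).factorial ≤ n.factorial := by
    intro k
    rcases (𝒢.filter fun F => κ F = k).eq_empty_or_nonempty with h | ⟨F₀, hF₀⟩
    · simp [h]
    obtain ⟨hF₀, hk₀⟩ := Finset.mem_filter.1 hF₀
    obtain ⟨-, s, t, hst, hsum, -⟩ := hκ F₀ hF₀
    rw [hk₀] at hsum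
    rw [← hsum]
    refine card_mul_factorial_le _ (fun G hG => hreg G (Finset.mem_filter.1 hG).1)
      (fun F hF G hG => hdd F (Finset.mem_filter.1 hF).1 G (Finset.mem_filter.1 hG).1) ?_
    intro F hF
    obtain ⟨hF, hk⟩ := Finset.mem_filter.1 hF
    obtain ⟨-, s', t', hst', hsum', he⟩ := hκ F hF
    obtain rfl : s' = s := by omega
    obtain rfl : t' = t := by omega
    exact he
  have hreal : ∀ k, ((𝒢.filter fun F => κ F = k).card : ℝ) * ((n / 3).factorial : ℝ) ≤
      (n.factorial : ℝ) * (1 ^ k / (k.factorial : ℝ)) := by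
    intro k
    rw [one_pow, mul_one_div, le_div_iff₀ (by positivity)]
    have h := Nat.le_of_dvd (Nat.factorial_pos _)
      (Nat.factorial_mul_factorial_dvd_factorial_add (n / 3) k)
    have := (Nat.mul_le_mul_left _ h).trans (hfiber k)
    rw [mul_assoc]
    exact_mod_cast this
  have hsum : 𝒢.card = ∑ k ∈ Finset.range (n + 1), (𝒢.filter fun F => κ F = k).card :=
    Finset.card_eq_sum_card_fiberwise fun F hF => by
      simpa using (hκ F hF).1
  calc (𝒢.card : ℝ) * ((n / 3).factorial : ℝ)
      = ∑ k ∈ Finset.range (n + 1),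
          ((𝒢.filter fun F => κ F = k).card : ℝ) * ((n / 3).factorial : ℝ) := by
        rw [hsum, Nat.cast_sum, Finset.sum_mul]
    _ ≤ ∑ k ∈ Finset.range (n + 1), (n.factorial : ℝ) * (1 ^ k / (k.factorial : ℝ)) :=
        Finset.sum_le_sum fun k _ => hreal k
    _ = (∑ k ∈ Finset.range (n + 1), 1 ^ k / (k.factorial : ℝ)) * n.factorial := by
        rw [← Finset.mul_sum, mul_comm]
    _ ≤ Real.exp 1 * n.factorial := by
        gcongr
        exact Real.sum_le_exp_of_nonneg zero_le_one _
    _ ≤ Real.exp (Real.sqrt n) * n.factorial := by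
        gcongr
        rw [Real.one_le_sqrt]
        exact_mod_cast (by omega : 1 ≤ n)
end

section
/- Let n be a multiple of 3 and let F and G be distinct simple graphs on Fin n each of whose connected components is a triangle (a complete graph on 3 vertices). Then the union F ⊔ G has a vertex of degree 4. -/
/-!
In a graph whose components are triangles, two distinct vertices are adjacent as soon as they
are reachable from each other (`AllTriangles.adj_of_reachable`). A vertex `v` has degree `4` in
`F ⊔ G` exactly when its two `F`-neighbours are disjoint from its two `G`-neighbours.

Suppose no vertex has degree `4`, so that every vertex has a common `F`- and `G`-neighbour. Let
`a b` be an edge of `F` but not of `G`, and let `c` be the third vertex of its `F`-triangle. The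
common neighbour of `a` is not `b`, so it is `c`; likewise the common neighbour of `b` is `c`.
Thus `a c` and `c b` are edges of `G`, hence `a b` is too, a contradiction. So `F ≤ G`
(`le_of_common_neighbor`), and by symmetry `F = G`.
-/

open SimpleGraph

/-- Every connected component of `G` is a triangle: `G` is 2-regular and every
connected component has exactly 3 vertices. -/
def AllTriangles {n : ℕ} (G : SimpleGraph (Fin n)) : Prop :=
  (∀ v, deg G v = 2) ∧ ∀ c : G.ConnectedComponent, Nat.card c.supp = 3

/-- The closed neighbourhood of `a` has three elements, hence fills its component. -/
lemma AllTriangles.adj_of_reachable {n : ℕ} {G : SimpleGraph (Fin n)} (hG : AllTriangles G)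
    {a b : Fin n} (hab : G.Reachable a b) (hne : a ≠ b) : G.Adj a b := by
  have hdeg : (G.neighborSet a).ncard = 2 := hG.1 a
  have hcomp : (G.connectedComponentMk a).supp.ncard = 3 := hG.2 _
  have hsub : insert a (G.neighborSet a) ⊆ (G.connectedComponentMk a).supp := by
    rintro x (rfl | hx)
    · simp
    · exact ConnectedComponent.sound (Adj.reachable hx).symm
  have hcard : (insert a (G.neighborSet a)).ncard = 3 := by
    rw [Set.ncard_insert_of_notMem (by simp), hdeg]
  have heq := Set.eq_of_subset_of_ncard_le hsub (by omega)
  have hb : b ∈ insert a (G.neighborSet a) := by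
    rw [heq]
    exact ConnectedComponent.sound hab.symm
  exact hb.resolve_left hne.symm

lemma exists_common_neighbor {n : ℕ} {F G : SimpleGraph (Fin n)}
    (hF : AllTriangles F) (hG : AllTriangles G) {v : Fin n} (h : deg (F ⊔ G) v ≠ 4) :
    ∃ w, F.Adj v w ∧ G.Adj v w := by
  by_contra! hno
  apply h
  have h1 : (F.neighborSet v).ncard = 2 := hF.1 v
  have h2 : (G.neighborSet v).ncard = 2 := hG.1 v
  have hd : Disjoint (F.neighborSet v) (G.neighborSet v) :=
    Set.disjoint_left.2 fun w hw => hno w hw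
  have hu : (F ⊔ G).neighborSet v = F.neighborSet v ∪ G.neighborSet v := by
    ext w
    simp
  change ((F ⊔ G).neighborSet v).ncard = 4
  rw [hu, Set.ncard_union_eq hd, h1, h2]

lemma le_of_common_neighbor {n : ℕ} {F G : SimpleGraph (Fin n)}
    (hF : AllTriangles F) (hG : AllTriangles G)
    (h : ∀ v, ∃ w, F.Adj v w ∧ G.Adj v w) : F ≤ G := by
  intro a b hab
  by_contra hn
  obtain ⟨c, hFac, hGac⟩ := h a
  obtain ⟨d, hFbd, hGbd⟩ := h b
  have hbc : b ≠ c := by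
    rintro rfl
    exact hn hGac
  have had : a ≠ d := by
    rintro rfl
    exact hn hGbd.symm
  have hFbc : F.Adj b c := hF.adj_of_reachable (hab.symm.reachable.trans hFac.reachable) hbc
  -- Otherwise `a`, `c`, `d` would be three distinct `F`-neighbours of `b`.
  have hcd : c = d := by
    by_contra hcd
    have h3 : ({a, c, d} : Set (Fin n)).ncard = 3 :=
      Set.ncard_eq_three.2 ⟨a, c, d, hFac.ne, had, hcd, rfl⟩
    have hsub : ({a, c, d} : Set (Fin n)) ⊆ F.neighborSet b := by
      rintro x (rfl | rfl | rfl)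
      exacts [hab.symm, hFbc, hFbd]
    have hle := Set.ncard_le_ncard hsub
    have h2 : (F.neighborSet b).ncard = 2 := hF.1 b
    omega
  subst hcd
  exact hn (hG.adj_of_reachable (hGac.reachable.trans hGbd.symm.reachable) hab.ne)

theorem stmt_12 (n : ℕ) (hn : 3 ∣ n) (F G : SimpleGraph (Fin n)) (hFG : F ≠ G)
    (hF : AllTriangles F) (hG : AllTriangles G) :
    ∃ v, deg (F ⊔ G) v = 4 := by
  by_contra! hno
  have h : ∀ v, ∃ w, F.Adj v w ∧ G.Adj v w := fun v => exists_common_neighbor hF hG (hno v)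
  exact hFG (le_antisymm (le_of_common_neighbor hF hG h)
    (le_of_common_neighbor hG hF fun v => (h v).imp fun _ => And.symm))
end

section
/- Let n = 3m be a positive multiple of 3. Then the number of simple graphs on Fin n each of whose connected components is a triangle (a complete graph on 3 vertices), multiplied by m! · 6^m, equals n!; that is, there are exactly n!/((n/3)! · 6^(n/3)) such graphs. -/
/-!
An ordered version of the objects is counted in two ways. Call a map `f : Fin n → Fin m`
balanced if all its fibres have three elements, and let `F` be the number of balanced maps.

* A bijection `Fin n ≃ Fin m × Fin 3` is the same as a balanced map (its first coordinate) together
  with a bijection of each fibre with `Fin 3`; hence `n! = F * 6 ^ m` (`card_balanced_mul`).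
* A balanced map is the same as a graph whose components are triangles together with a bijection
  of its set of components with `Fin m`, i.e. a numbering of the triangles; since there are `m`
  components, `F = N * m!`, where `N` is the number of graphs (`card_balanced`). The point is that
  in such a graph adjacency is recovered from the components: distinct vertices are adjacent as
  soon as they lie in the same component (`AllTriangles.adj_iff`).
-/

open SimpleGraph

/-- The maps `Fin n → Fin m` all of whose fibres have exactly three elements. -/
def BalancedMap (n m : ℕ) : Type :=
  {f : Fin n → Fin m // ∀ i, Nat.card {x // f x = i} = 3}

instance (n m : ℕ) : Finite (BalancedMap n m) := by
  unfold BalancedMap; infer_instance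

lemma card_equiv_fin {α : Type*} [Finite α] {k : ℕ} (h : Nat.card α = k) :
    Nat.card (α ≃ Fin k) = k.factorial := by
  classical
  have := Fintype.ofFinite α
  rw [Nat.card_eq_fintype_card] at h ⊢
  rw [Fintype.card_equiv (Fintype.equivFinOfCardEq h), h]

/-- A balanced map with a labelling of each fibre by `Fin 3`, read as a map to `Fin m × Fin 3`. -/
def labelMap {n m : ℕ} (p : Σ f : BalancedMap n m, ∀ i, {x // f.1 x = i} ≃ Fin 3) :
    Fin n → Fin m × Fin 3 :=
  fun x => (p.1.1 x, p.2 (p.1.1 x) ⟨x, rfl⟩)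

lemma labelMap_bijective {n m : ℕ} (p : Σ f : BalancedMap n m, ∀ i, {x // f.1 x = i} ≃ Fin 3) :
    Function.Bijective (labelMap p) := by
  obtain ⟨⟨f, hf⟩, t⟩ := p
  constructor
  · intro x y h
    simp only [labelMap, Prod.mk.injEq] at h
    obtain ⟨h1, h2⟩ := h
    have key : ∀ i (hx : f x = i) (hy : f y = i), t i ⟨x, hx⟩ = t i ⟨y, hy⟩ → x = y := by
      intro i hx hy h
      simpa using (t i).injective h
    refine key (f y) h1 rfl ?_
    rw [← h2]
    have tr : ∀ i (hx : f x = i), t i ⟨x, hx⟩ = t (f x) ⟨x, rfl⟩ := by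
      rintro _ rfl; rfl
    exact tr _ h1
  · rintro ⟨i, j⟩
    obtain ⟨⟨x, rfl⟩, hx⟩ := (t i).surjective j
    exact ⟨x, Prod.ext rfl hx⟩

lemma card_balanced_mul (n m : ℕ) (hn : n = 3 * m) :
    Nat.card (BalancedMap n m) * 6 ^ m = n.factorial := by
  have hb : Function.Bijective
      (fun p : (Σ f : BalancedMap n m, ∀ i, {x // f.1 x = i} ≃ Fin 3) =>
        Equiv.ofBijective (labelMap p) (labelMap_bijective p)) := by
    constructor
    · rintro ⟨⟨f, hf⟩, t⟩ ⟨⟨g, hg⟩, s⟩ h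
      have h' : ∀ x, labelMap ⟨⟨f, hf⟩, t⟩ x = labelMap ⟨⟨g, hg⟩, s⟩ x :=
        fun x => congrArg (fun e : Fin n ≃ Fin m × Fin 3 => e x) h
      obtain rfl : f = g := funext fun x => congrArg Prod.fst (h' x)
      obtain rfl : t = s := by
        funext i
        ext ⟨x, rfl⟩
        exact congrArg (fun z => (z.2 : ℕ)) (h' x)
      rfl
    · intro e
      have toFiber : ∀ i, Function.Bijective
          (fun x : {x // (e x).1 = i} => (e x.1).2) := by
        intro i
        constructor
        · rintro ⟨x, hx⟩ ⟨y, hy⟩ h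
          exact Subtype.ext (e.injective (Prod.ext (hx.trans hy.symm) h))
        · intro j
          exact ⟨⟨e.symm (i, j), by simp⟩, by simp⟩
      refine ⟨⟨⟨fun x => (e x).1, fun i => ?_⟩, fun i => Equiv.ofBijective _ (toFiber i)⟩, ?_⟩
      · simpa using Nat.card_congr (Equiv.ofBijective _ (toFiber i))
      · ext x <;> rfl
  have hc := Nat.card_congr (Equiv.ofBijective _ hb)
  have e0 : Fin m × Fin 3 ≃ Fin n := finProdFinEquiv.trans (finCongr (by omega))
  rw [Nat.card_congr (Equiv.equivCongr (Equiv.refl (Fin n)) e0),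
    card_equiv_fin (Nat.card_fin n)] at hc
  rw [← hc]
  have := Fintype.ofFinite (BalancedMap n m)
  rw [Nat.card_sigma]
  have h6 : ∀ f : BalancedMap n m, Nat.card (∀ i, {x // f.1 x = i} ≃ Fin 3) = 6 ^ m := by
    intro f
    rw [Nat.card_pi]
    rw [Finset.prod_congr rfl fun i _ => card_equiv_fin (f.2 i)]
    simp [Nat.factorial]
  simp only [h6, Finset.sum_const, Finset.card_univ, smul_eq_mul]
  rw [Nat.card_eq_fintype_card]

/-- In a disjoint union of triangles, a vertex and its two neighbours fill its component. -/
lemma AllTriangles.adj_iff {n : ℕ} {G : SimpleGraph (Fin n)} (hG : AllTriangles G)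
    (x y : Fin n) :
    G.Adj x y ↔ x ≠ y ∧ G.connectedComponentMk x = G.connectedComponentMk y := by
  constructor
  · intro h
    exact ⟨h.ne, ConnectedComponent.sound h.reachable⟩
  · rintro ⟨hne, hxy⟩
    have hsub : insert x (G.neighborSet x) ⊆ (G.connectedComponentMk x).supp := by
      rintro z (rfl | hz)
      · exact rfl
      · exact ConnectedComponent.sound (G.adj_symm hz).reachable
    have hd : (G.neighborSet x).ncard = 2 := by
      rw [← Nat.card_coe_set_eq]; exact hG.1 x
    have h3 : (G.connectedComponentMk x).supp.ncard = 3 := by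
      rw [← Nat.card_coe_set_eq]; exact hG.2 _
    have heq := Set.eq_of_subset_of_ncard_le hsub (by
      rw [Set.ncard_insert_of_notMem (by simp), hd, h3])
    have hy : y ∈ insert x (G.neighborSet x) := by
      rw [heq]; exact hxy.symm
    rcases hy with rfl | hy
    · exact absurd rfl hne
    · exact hy

lemma AllTriangles.card_component {n m : ℕ} (hn : n = 3 * m) {G : SimpleGraph (Fin n)}
    (hG : AllTriangles G) : Nat.card G.ConnectedComponent = m := by
  have h := Nat.card_congr (Equiv.sigmaFiberEquiv G.connectedComponentMk)
  have := Fintype.ofFinite G.ConnectedComponent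
  have h3 : ∀ c : G.ConnectedComponent,
      Nat.card {x // G.connectedComponentMk x = c} = 3 := hG.2
  rw [Nat.card_sigma] at h
  simp only [h3, Finset.sum_const, Finset.card_univ, smul_eq_mul, Nat.card_fin] at h
  rw [Nat.card_eq_fintype_card]
  omega

/-- The graph joining distinct vertices with the same value under `f`: a disjoint union of
complete graphs on the fibres. -/
def fibreGraph {n m : ℕ} (f : Fin n → Fin m) : SimpleGraph (Fin n) where
  Adj x y := x ≠ y ∧ f x = f y
  symm := ⟨fun _ _ h => ⟨h.1.symm, h.2.symm⟩⟩
  loopless := ⟨fun _ h => h.1 rfl⟩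

lemma fibreGraph_mk_eq_iff {n m : ℕ} (f : Fin n → Fin m) (x y : Fin n) :
    (fibreGraph f).connectedComponentMk x = (fibreGraph f).connectedComponentMk y ↔
      f x = f y := by
  constructor
  · intro h
    obtain ⟨w⟩ := ConnectedComponent.exact h
    induction w with
    | nil => rfl
    | cons hadj w ih => exact hadj.2.trans (ih (ConnectedComponent.sound w.reachable))
  · intro h
    by_cases hxy : x = y
    · rw [hxy]
    · have hadj : (fibreGraph f).Adj x y := ⟨hxy, h⟩
      exact ConnectedComponent.sound hadj.reachable

lemma fibreGraph_allTriangles {n m : ℕ} (f : BalancedMap n m) :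
    AllTriangles (fibreGraph f.1) := by
  have hf : ∀ i, {x | f.1 x = i}.ncard = 3 := fun i => by
    rw [← Nat.card_coe_set_eq]; exact f.2 i
  constructor
  · intro v
    have : (fibreGraph f.1).neighborSet v = {x | f.1 x = f.1 v} \ {v} := by
      ext x
      simp only [mem_neighborSet, fibreGraph, Set.mem_sdiff, Set.mem_ofPred_eq,
        Set.mem_singleton_iff]
      exact ⟨fun h => ⟨h.2.symm, h.1.symm⟩, fun h => ⟨Ne.symm h.2, h.1.symm⟩⟩
    rw [deg, Nat.card_coe_set_eq, this, Set.ncard_sdiff_singleton_of_mem (by simp), hf]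
  · intro c
    induction c using ConnectedComponent.ind with
    | h v =>
      have : ((fibreGraph f.1).connectedComponentMk v).supp = {x | f.1 x = f.1 v} := by
        ext x
        exact fibreGraph_mk_eq_iff f.1 x v
      rw [Nat.card_coe_set_eq, this, hf]

lemma card_balanced (n m : ℕ) (hn : n = 3 * m) :
    Nat.card (BalancedMap n m) =
      Nat.card {G : SimpleGraph (Fin n) // AllTriangles G} * m.factorial := by
  have hfib : ∀ p : (Σ G : {G : SimpleGraph (Fin n) // AllTriangles G},
      G.1.ConnectedComponent ≃ Fin m), ∀ i,
      Nat.card {x // p.2 (p.1.1.connectedComponentMk x) = i} = 3 := by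
    rintro ⟨⟨G, hG⟩, e⟩ i
    rw [← hG.2 (e.symm i)]
    exact Nat.card_congr (Equiv.subtypeEquivRight fun x => (Equiv.eq_symm_apply e).symm)
  have hb : Function.Bijective
      (fun p : (Σ G : {G : SimpleGraph (Fin n) // AllTriangles G},
        G.1.ConnectedComponent ≃ Fin m) =>
        (⟨fun x => p.2 (p.1.1.connectedComponentMk x), hfib p⟩ : BalancedMap n m)) := by
    constructor
    · rintro ⟨⟨G, hG⟩, e⟩ ⟨⟨H, hH⟩, d⟩ h
      have h' : ∀ x, e (G.connectedComponentMk x) = d (H.connectedComponentMk x) :=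
        fun x => congrFun (congrArg Subtype.val h) x
      obtain rfl : G = H := by
        ext x y
        rw [hG.adj_iff, hH.adj_iff, ← e.injective.eq_iff, ← d.injective.eq_iff, h', h']
      obtain rfl : e = d := by
        ext c
        induction c using ConnectedComponent.ind with
        | h v => rw [h']
      rfl
    · intro f
      have hbij : Function.Bijective
          (fun c : (fibreGraph f.1).ConnectedComponent =>
            Quot.lift f.1 (fun x y hxy =>
              (fibreGraph_mk_eq_iff f.1 x y).1 (ConnectedComponent.sound hxy)) c) := by
        constructor
        · intro c d
          induction c using ConnectedComponent.ind with
          | h v =>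
            induction d using ConnectedComponent.ind with
            | h w => exact (fibreGraph_mk_eq_iff f.1 v w).2
        · intro i
          have : Nonempty {x // f.1 x = i} := by
            by_contra hne
            rw [not_nonempty_iff] at hne
            simpa using f.2 i
          obtain ⟨x, hx⟩ := this
          exact ⟨(fibreGraph f.1).connectedComponentMk x, hx⟩
      exact ⟨⟨⟨fibreGraph f.1, fibreGraph_allTriangles f⟩, Equiv.ofBijective _ hbij⟩, rfl⟩
  have hc := Nat.card_congr (Equiv.ofBijective _ hb)
  have := Fintype.ofFinite {G : SimpleGraph (Fin n) // AllTriangles G}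
  rw [Nat.card_sigma] at hc
  have hm : ∀ G : {G : SimpleGraph (Fin n) // AllTriangles G},
      Nat.card (G.1.ConnectedComponent ≃ Fin m) = m.factorial :=
    fun G => card_equiv_fin (G.2.card_component hn)
  simp only [hm, Finset.sum_const, Finset.card_univ, smul_eq_mul] at hc
  rw [Nat.card_eq_fintype_card (α := {G : SimpleGraph (Fin n) // AllTriangles G})]
  exact hc.symm

theorem stmt_13 (n m : ℕ) (hm : 0 < m) (hn : n = 3 * m) :
    Nat.card {G : SimpleGraph (Fin n) // AllTriangles G} * (Nat.factorial m * 6 ^ m)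
      = Nat.factorial n := by
  rw [← mul_assoc, ← card_balanced n m hn, card_balanced_mul n m hn]
end

section
/- For n ≥ 3, the maximum cardinality of a degree-doubling family of Hamiltonian cycles on Fin n is greater than or equal to the maximum cardinality of a degree-doubling family of Hamiltonian paths on Fin n. -/
/-!
Every Hamiltonian path `P` on at least three vertices extends to a Hamiltonian cycle, by joining its
two endpoints; these are not already adjacent, since two adjacent vertices of degree 1 form a whole
component. If `P, Q` are Hamiltonian paths, extended to cycles `C, D`, and `v` has degree 4 in
`P ⊔ Q`, then `v` has degree at least 4 in `C ⊔ D` because `P ⊔ Q ≤ C ⊔ D`, and at most `2 + 2`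
because `C` and `D` are 2-regular. In particular `C ≠ D`, so closing up the members of a
degree-doubling family of paths gives a degree-doubling family of cycles of the same cardinality.
-/

open SimpleGraph

/-- A Hamiltonian path on `Fin n`: a connected simple graph with exactly two
vertices of degree 1 and all other vertices of degree 2. -/
def IsHamPath {n : ℕ} (G : SimpleGraph (Fin n)) : Prop :=
  G.Connected ∧ ∃ a b : Fin n, a ≠ b ∧ deg G a = 1 ∧ deg G b = 1 ∧
    ∀ v : Fin n, v ≠ a → v ≠ b → deg G v = 2

/-- The maximum cardinality of a degree-doubling family of graphs on `Fin n`
all of whose members satisfy `pred`. -/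
noncomputable def maxDD (n : ℕ) (pred : SimpleGraph (Fin n) → Prop) : ℕ :=
  sSup {k | ∃ 𝒢 : Finset (SimpleGraph (Fin n)),
    (∀ G ∈ 𝒢, pred G) ∧ DegreeDoubling 𝒢 ∧ 𝒢.card = k}

lemma deg_mono {n : ℕ} {F G : SimpleGraph (Fin n)} (h : F ≤ G) (v : Fin n) :
    deg F v ≤ deg G v :=
  Nat.card_mono (Set.toFinite _) fun _ hw => h hw

lemma deg_sup_le {n : ℕ} (F G : SimpleGraph (Fin n)) (v : Fin n) :
    deg (F ⊔ G) v ≤ deg F v + deg G v := by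
  have h : (F ⊔ G).neighborSet v = F.neighborSet v ∪ G.neighborSet v := by
    ext w; simp
  unfold deg
  rw [h]
  exact Set.ncard_union_le _ _

/-- A vertex of degree 1 has only one neighbour. -/
lemma eq_of_adj_of_deg_eq_one {n : ℕ} {G : SimpleGraph (Fin n)} {a b c : Fin n}
    (h : deg G a = 1) (hb : G.Adj a b) (hc : G.Adj a c) : c = b := by
  obtain ⟨x, hx⟩ := Set.ncard_eq_one.mp (show (G.neighborSet a).ncard = 1 from h)
  have h1 : b ∈ G.neighborSet a := hb
  have h2 : c ∈ G.neighborSet a := hc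
  rw [hx] at h1 h2
  exact (Set.mem_singleton_iff.mp h2).trans (Set.mem_singleton_iff.mp h1).symm

/-- In a connected graph on at least three vertices, two vertices of degree 1 are not adjacent:
otherwise they would form a component. -/
lemma not_adj_of_deg_eq_one {n : ℕ} (hn : 3 ≤ n) {G : SimpleGraph (Fin n)} (hG : G.Connected)
    {a b : Fin n} (ha : deg G a = 1) (hb : deg G b = 1) : ¬ G.Adj a b := by
  intro hab
  have key : ∀ v, v = a ∨ v = b := by
    intro v
    have hr := (SimpleGraph.reachable_iff_reflTransGen a v).mp (hG.preconnected a v)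
    induction hr with
    | refl => exact Or.inl rfl
    | tail _ hxy ih =>
      rcases ih with rfl | rfl
      · exact Or.inr (eq_of_adj_of_deg_eq_one ha hab hxy)
      · exact Or.inl (eq_of_adj_of_deg_eq_one hb hab.symm hxy)
  have hcard : Fintype.card (Fin n) ≤ ({a, b} : Finset (Fin n)).card :=
    Finset.card_le_card fun v _ => by simpa using key v
  have := Finset.card_le_two (a := a) (b := b)
  simp only [Fintype.card_fin] at hcard
  omega

/-- Adding the edge `ab` raises the degree of `a` by one. -/
lemma deg_sup_edge {n : ℕ} {G : SimpleGraph (Fin n)} {a b : Fin n} (hab : a ≠ b)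
    (h : ¬ G.Adj a b) : deg (G ⊔ SimpleGraph.edge a b) a = deg G a + 1 := by
  have hN : (G ⊔ SimpleGraph.edge a b).neighborSet a = insert b (G.neighborSet a) := by
    ext w
    simp only [SimpleGraph.mem_neighborSet, SimpleGraph.sup_adj, SimpleGraph.edge_adj,
      Set.mem_insert_iff]
    grind
  unfold deg
  rw [hN]
  exact Set.ncard_insert_of_notMem h (Set.toFinite _)

/-- Joining the endpoints of a Hamiltonian path gives a Hamiltonian cycle. -/
lemma exists_hamCycle_ge {n : ℕ} (hn : 3 ≤ n) {P : SimpleGraph (Fin n)} (hP : IsHamPath P) :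
    ∃ C, P ≤ C ∧ IsHamCycle C := by
  obtain ⟨hc, a, b, hab, ha, hb, h2⟩ := hP
  have hnadj := not_adj_of_deg_eq_one hn hc ha hb
  refine ⟨P ⊔ SimpleGraph.edge a b, le_sup_left, hc.mono le_sup_left, fun v => ?_⟩
  by_cases hva : v = a
  · subst hva
    rw [deg_sup_edge hab hnadj, ha]
  by_cases hvb : v = b
  · subst hvb
    rw [SimpleGraph.edge_comm, deg_sup_edge hab.symm fun h => hnadj h.symm, hb]
  · have hN : (P ⊔ SimpleGraph.edge a b).neighborSet v = P.neighborSet v := by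
      ext w
      simp only [SimpleGraph.mem_neighborSet, SimpleGraph.sup_adj, SimpleGraph.edge_adj]
      grind
    rw [← h2 v hva hvb]
    unfold deg
    rw [hN]

theorem stmt_14 (n : ℕ) (hn : 3 ≤ n) :
    maxDD n IsHamPath ≤ maxDD n IsHamCycle := by
  classical
  refine csSup_le ⟨0, ∅, by simp, by simp [DegreeDoubling], rfl⟩ ?_
  rintro k ⟨𝒢, hpath, hdd, rfl⟩
  have hex : ∀ P : SimpleGraph (Fin n), ∃ C, IsHamPath P → P ≤ C ∧ IsHamCycle C := fun P => by
    by_cases hP : IsHamPath P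
    · obtain ⟨C, hC⟩ := exists_hamCycle_ge hn hP
      exact ⟨C, fun _ => hC⟩
    · exact ⟨P, fun h => absurd h hP⟩
  choose f hf using hex
  have h4 : ∀ F ∈ 𝒢, ∀ G ∈ 𝒢, F ≠ G → ∃ v, deg (f F ⊔ f G) v = 4 := by
    intro F hF G hG hne
    obtain ⟨v, hv⟩ := hdd F hF G hG hne
    obtain ⟨hF1, hF2⟩ := hf F (hpath F hF)
    obtain ⟨hG1, hG2⟩ := hf G (hpath G hG)
    have hlow := deg_mono (sup_le_sup hF1 hG1) v
    have hup := deg_sup_le (f F) (f G) v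
    have hdF := hF2.2 v
    have hdG := hG2.2 v
    exact ⟨v, by omega⟩
  have hinj : Set.InjOn f 𝒢 := by
    intro F hF G hG hFG
    by_contra hne
    obtain ⟨v, hv⟩ := h4 F hF G hG hne
    rw [← hFG, sup_idem, (hf F (hpath F hF)).2.2 v] at hv
    omega
  refine le_csSup ⟨Fintype.card (SimpleGraph (Fin n)), ?_⟩
    ⟨𝒢.image f, ?_, ?_, Finset.card_image_of_injOn hinj⟩
  · rintro _ ⟨ℋ, -, -, rfl⟩
    exact Finset.card_le_univ ℋ
  · intro C hC
    obtain ⟨F, hF, rfl⟩ := Finset.mem_image.mp hC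
    exact (hf F (hpath F hF)).2
  · intro C hC D hD hne
    obtain ⟨F, hF, rfl⟩ := Finset.mem_image.mp hC
    obtain ⟨G, hG, rfl⟩ := Finset.mem_image.mp hD
    exact h4 F hF G hG fun h => hne (congrArg f h)
end
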